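/- Let 𝒫 = (P_θ)_{θ∈Θ} be a d-dimensional exponential family dP_θ(x) = exp(θᵀT(x) − A(θ)) dμ(x) with Θ = {θ : A(θ) < ∞} having nonempty interior, such that for each θ the law of T(X) is absolutely continuous with respect to Lebesgue measure on ℝ^d, and the components of T are linearly independent (aᵀT(x) = 0 for μ-almost every x implies a = 0). Then there exists an absolute constant c > 0 (independent of n, m, d and the family) and a constant C > 0 depending only on the exponential family such that for all integers n ≥ 2 and m ≥ 0, the minimax sample-amplification error satisfies ε*(𝒫,n,m) ≥ c·min(m√d/n, 1) − C·(log n / n)^{1/3}. -/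

import Mathlib

open MeasureTheory ProbabilityTheory
open scoped ENNReal NNReal BigOperators

/-- Total variation distance between two measures: `sup_A |P(A) - Q(A)|`. -/
noncomputable def tvDist {X : Type*} [MeasurableSpace X] (μ ν : Measure X) : ℝ :=
  ⨆ A : {s : Set X // MeasurableSet s}, |(μ A).toReal - (ν A).toReal|

/-- Minimax sample amplification error `ε*(𝒫, n, m)` for the family `(P θ)_θ`. -/
noncomputable def ampErr {X Θ : Type*} [MeasurableSpace X] (P : Θ → Measure X)
    (n m : ℕ) : ℝ :=
  ⨅ T : {T : Kernel (Fin n → X) (Fin (n + m) → X) // IsMarkovKernel T},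
    ⨆ θ : Θ, tvDist (Measure.pi fun _ : Fin (n + m) => P θ)
      ((Measure.pi fun _ : Fin n => P θ).bind T.1)

/-- Partition function `∫ exp(θᵀ T(x)) dμ(x)` of an exponential family, in `ℝ≥0∞`. -/
noncomputable def expFamZ {X : Type*} [MeasurableSpace X] {d : ℕ} (μ : Measure X)
    (T : X → Fin d → ℝ) (θ : Fin d → ℝ) : ℝ≥0∞ :=
  ∫⁻ x, ENNReal.ofReal (Real.exp (∑ i, θ i * T x i)) ∂μ

/-- The natural parameter domain `Θ = {θ : A(θ) < ∞}` of the exponential family. -/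
noncomputable def expFamDom {X : Type*} [MeasurableSpace X] {d : ℕ} (μ : Measure X)
    (T : X → Fin d → ℝ) : Set (Fin d → ℝ) :=
  {θ | expFamZ μ T θ ≠ ⊤}

/-- Log-partition function `A(θ)` of the exponential family. -/
noncomputable def expFamA {X : Type*} [MeasurableSpace X] {d : ℕ} (μ : Measure X)
    (T : X → Fin d → ℝ) (θ : Fin d → ℝ) : ℝ :=
  Real.log (expFamZ μ T θ).toReal

/-- Member `P_θ` of the exponential family: `dP_θ(x) = exp(θᵀT(x) − A(θ)) dμ(x)`. -/
noncomputable def expFam {X : Type*} [MeasurableSpace X] {d : ℕ} (μ : Measure X)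
    (T : X → Fin d → ℝ) (θ : Fin d → ℝ) : Measure X :=
  μ.withDensity fun x => ENNReal.ofReal (Real.exp (∑ i, θ i * T x i - expFamA μ T θ))

/-!
An amplifier of error `ε` is a channel, so by data processing it can increase the hockey-stick
divergence `∫ (dP - τ dQ)₊` between the joint law of a random parameter and its sample and a
product reference measure by at most `2 ε`. We use a uniform prior on a small ball
`θ₀ + {‖η‖ ≤ ρ}` inside the domain. Disintegrating along the sample turns the divergence into one
between the posterior and a multiple of Lebesgue measure, and by Laplace's method and
concentration of the sufficient statistic the posterior of `N` observations is Gaussian with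
covariance `(N · Cov T)⁻¹`, up to an error `O(N^{-1/3})`.

For a Gaussian the divergence is a one-dimensional quantity: at the threshold
`τ = n^{d/2} e^{-d/2}`, in units of the normalising mass of the Gaussian, it measures how often
and by how much the `χ²` variable in the exponent falls below `d + d log (N / n)`. As `χ²_d - d`
fluctuates on the scale `√d`, passing from `N = n` to `N = n + m` increases it by at least a
constant times `min (m √d / n) 1`, which must therefore be at most `2 ε + O(n^{-1/3})`.
-/

section TotalVariation

variable {X : Type*} [MeasurableSpace X]

lemma tvDist_nonneg (μ ν : Measure X) : 0 ≤ tvDist μ ν :=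
  Real.iSup_nonneg fun _ => abs_nonneg _

lemma tvDist_comm (μ ν : Measure X) : tvDist μ ν = tvDist ν μ := by
  simp only [tvDist, abs_sub_comm]

lemma abs_measureReal_sub_le_one (μ ν : Measure X) [IsProbabilityMeasure μ]
    [IsProbabilityMeasure ν] (A : Set X) : |μ.real A - ν.real A| ≤ 1 :=
  abs_sub_le_of_nonneg_of_le measureReal_nonneg measureReal_le_one measureReal_nonneg
    measureReal_le_one

lemma tvDist_le_one (μ ν : Measure X) [IsProbabilityMeasure μ] [IsProbabilityMeasure ν] :
    tvDist μ ν ≤ 1 :=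
  Real.iSup_le (fun A => abs_measureReal_sub_le_one μ ν A) zero_le_one

lemma abs_measureReal_sub_le_tvDist (μ ν : Measure X) [IsProbabilityMeasure μ]
    [IsProbabilityMeasure ν] {A : Set X} (hA : MeasurableSet A) :
    |μ.real A - ν.real A| ≤ tvDist μ ν :=
  le_ciSup (f := fun A : {s : Set X // MeasurableSet s} => |μ.real A - ν.real A|)
    ⟨1, Set.forall_mem_range.2 fun A => abs_measureReal_sub_le_one μ ν A⟩ ⟨A, hA⟩

lemma measure_le_add_of_tvDist_le {μ ν : Measure X} [IsProbabilityMeasure μ]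
    [IsProbabilityMeasure ν] {ε : ℝ} (hε : tvDist μ ν ≤ ε) {A : Set X} (hA : MeasurableSet A) :
    μ A ≤ ν A + ENNReal.ofReal ε := by
  rw [← ofReal_measureReal (μ := μ), ← ofReal_measureReal (μ := ν),
    ← ENNReal.ofReal_add measureReal_nonneg ((tvDist_nonneg μ ν).trans hε)]
  exact ENNReal.ofReal_le_ofReal (sub_le_iff_le_add'.1
    ((le_of_abs_le (abs_measureReal_sub_le_tvDist μ ν hA)).trans hε))

lemma lintegral_le_add_of_measure_le_add {μ ν : Measure X} {ε : ℝ≥0∞}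
    (h : ∀ A, MeasurableSet A → μ A ≤ ν A + ε) {f : X → ℝ≥0∞} (hf : Measurable f)
    (hf_le : ∀ x, f x ≤ 1) : ∫⁻ x, f x ∂μ ≤ ∫⁻ x, f x ∂ν + ε := by
  have layer_cake (κ : Measure X) :
      ∫⁻ x, f x ∂κ = ∫⁻ t in Set.Ioi (0 : ℝ), κ {x | t < (f x).toReal} := by
    rw [← lintegral_eq_lintegral_meas_lt κ (.of_forall fun _ => ENNReal.toReal_nonneg)
      hf.ennreal_toReal.aemeasurable]
    exact lintegral_congr fun x =>
      (ENNReal.ofReal_toReal ((hf_le x).trans_lt ENNReal.one_lt_top).ne).symm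
  have superlevel_le (t : ℝ) : μ {x | t < (f x).toReal} ≤
      ν {x | t < (f x).toReal} + (Set.Iio (1 : ℝ)).indicator (fun _ => ε) t := by
    rcases lt_or_ge t 1 with ht | ht
    · rw [Set.indicator_of_mem (Set.mem_Iio.2 ht)]
      exact h _ (measurableSet_lt measurable_const hf.ennreal_toReal)
    · have empty : {x | t < (f x).toReal} = ∅ := Set.eq_empty_of_forall_notMem fun x hx =>
        (ht.trans_lt hx).not_ge (ENNReal.toReal_mono ENNReal.one_ne_top (hf_le x))
      simp [empty]
  calc ∫⁻ x, f x ∂μ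
      ≤ ∫⁻ t in Set.Ioi (0 : ℝ), (ν {x | t < (f x).toReal} +
          (Set.Iio (1 : ℝ)).indicator (fun _ => ε) t) := by
        rw [layer_cake μ]; exact lintegral_mono superlevel_le
    _ = ∫⁻ x, f x ∂ν + ε := by
        rw [lintegral_add_right _ (measurable_const.indicator measurableSet_Iio), ← layer_cake ν,
          lintegral_indicator_const measurableSet_Iio,
          Measure.restrict_apply measurableSet_Iio, Set.Iio_inter_Ioi, Real.volume_Ioo]
        simp

end TotalVariation

section HockeyStick

variable {Ω Y Y₁ Y₂ : Type*} [MeasurableSpace Ω] [MeasurableSpace Y] [MeasurableSpace Y₁]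
  [MeasurableSpace Y₂]

lemma setLIntegral_le_lintegral_tsub_add (π : Measure Ω) (f : Ω → ℝ≥0∞) {g : Ω → ℝ≥0∞}
    (hg : Measurable g) (s : Set Ω) :
    ∫⁻ θ in s, f θ ∂π ≤ ∫⁻ θ, (f θ - g θ) ∂π + ∫⁻ θ in s, g θ ∂π :=
  calc ∫⁻ θ in s, f θ ∂π
      ≤ ∫⁻ θ in s, ((f θ - g θ) + g θ) ∂π := lintegral_mono fun _ => le_tsub_add
    _ = ∫⁻ θ in s, (f θ - g θ) ∂π + ∫⁻ θ in s, g θ ∂π := lintegral_add_right _ hg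
    _ ≤ _ := add_le_add_left (setLIntegral_le_lintegral _ _) _

lemma setLIntegral_lt_eq_lintegral_tsub_add (π : Measure Ω) {f g : Ω → ℝ≥0∞}
    (hf : Measurable f) (hg : Measurable g) :
    ∫⁻ θ in {θ | g θ < f θ}, f θ ∂π =
      ∫⁻ θ, (f θ - g θ) ∂π + ∫⁻ θ in {θ | g θ < f θ}, g θ ∂π := by
  have tsub_outside : ∫⁻ θ in {θ | g θ < f θ}ᶜ, (f θ - g θ) ∂π = 0 := by
    rw [setLIntegral_congr_fun (g := fun _ => 0) (measurableSet_lt hg hf).compl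
      fun θ hθ => tsub_eq_zero_of_le (not_lt.1 hθ), lintegral_zero]
  calc ∫⁻ θ in {θ | g θ < f θ}, f θ ∂π
      = ∫⁻ θ in {θ | g θ < f θ}, ((f θ - g θ) + g θ) ∂π :=
        setLIntegral_congr_fun (measurableSet_lt hg hf)
          fun θ hθ => (tsub_add_cancel_of_le (le_of_lt hθ)).symm
    _ = _ := by
        rw [lintegral_add_right _ hg, ← lintegral_add_compl (μ := π) (fun θ => f θ - g θ)
          (measurableSet_lt hg hf), tsub_outside, add_zero]

lemma measurableSet_section_left {S : Set (Ω × Y)} (hS : MeasurableSet S) (y : Y) :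
    MeasurableSet {θ | (θ, y) ∈ S} :=
  measurable_prodMk_right hS

lemma measurableSet_section_right {S : Set (Ω × Y)} (hS : MeasurableSet S) (θ : Ω) :
    MeasurableSet {y | (θ, y) ∈ S} :=
  measurable_prodMk_left hS

lemma measurable_setLIntegral_section (π : Measure Ω) [SFinite π] {f : Ω → ℝ≥0∞}
    (hf : Measurable f) {S : Set (Ω × Y)} (hS : MeasurableSet S) :
    Measurable fun y => ∫⁻ θ in {θ | (θ, y) ∈ S}, f θ ∂π := by
  simp_rw [← lintegral_indicator (measurableSet_section_left hS _)]
  exact ((hf.comp measurable_fst).indicator hS).lintegral_prod_left'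

lemma lintegral_mul_measure_section (π : Measure Ω) [SFinite π] (κ : Measure Y) [SFinite κ]
    {f : Ω → ℝ≥0∞} (hf : Measurable f) {S : Set (Ω × Y)} (hS : MeasurableSet S) :
    ∫⁻ θ, f θ * κ {y | (θ, y) ∈ S} ∂π = ∫⁻ y, ∫⁻ θ in {θ | (θ, y) ∈ S}, f θ ∂π ∂κ := by
  calc ∫⁻ θ, f θ * κ {y | (θ, y) ∈ S} ∂π
      = ∫⁻ θ, ∫⁻ y, S.indicator (fun p => f p.1) (θ, y) ∂κ ∂π := by
        refine lintegral_congr fun θ => ?_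
        rw [← setLIntegral_const, ← lintegral_indicator (measurableSet_section_right hS θ)]
        rfl
    _ = ∫⁻ y, ∫⁻ θ, S.indicator (fun p => f p.1) (θ, y) ∂π ∂κ :=
        lintegral_lintegral_swap ((hf.comp measurable_fst).indicator hS).aemeasurable
    _ = _ := by
        refine lintegral_congr fun y => ?_
        rw [← lintegral_indicator (measurableSet_section_left hS y)]
        rfl

variable (π : Measure Ω)

lemma lintegral_lintegral_withDensity [SFinite π] (B : Measure Y) [SFinite B]
    {L F : Ω → Y → ℝ≥0∞} (hL : Measurable (Function.uncurry L))
    (hF : Measurable (Function.uncurry F)) :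
    ∫⁻ θ, ∫⁻ y, F θ y ∂(B.withDensity (L θ)) ∂π = ∫⁻ y, ∫⁻ θ, L θ y * F θ y ∂π ∂B := by
  rw [← lintegral_lintegral_swap (hL.mul hF).aemeasurable]
  exact lintegral_congr fun θ => lintegral_withDensity_eq_lintegral_mul _
    (hL.comp measurable_prodMk_left) (hF.comp measurable_prodMk_left)

lemma lintegral_lintegral_withDensity_const [SFinite π] (B : Measure Y) [SFinite B]
    {L : Ω → Y → ℝ≥0∞} (hL : Measurable (Function.uncurry L)) {f : Y → ℝ≥0∞}
    (hf : Measurable f) :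
    ∫⁻ θ, ∫⁻ y, f y ∂(B.withDensity (L θ)) ∂π = ∫⁻ y, f y * ∫⁻ θ, L θ y ∂π ∂B := by
  rw [lintegral_lintegral_withDensity π B hL (F := fun _ => f) (hf.comp measurable_snd)]
  refine lintegral_congr fun y => ?_
  rw [lintegral_mul_const _ (show Measurable fun θ => L θ y from hL.comp measurable_prodMk_right),
    mul_comm]

lemma lintegral_withDensity_section [SFinite π] (B : Measure Y) [SFinite B]
    {L : Ω → Y → ℝ≥0∞} (hL : Measurable (Function.uncurry L)) {S : Set (Ω × Y)}
    (hS : MeasurableSet S) :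
    ∫⁻ θ, B.withDensity (L θ) {y | (θ, y) ∈ S} ∂π =
      ∫⁻ y, ∫⁻ θ in {θ | (θ, y) ∈ S}, L θ y ∂π ∂B := by
  calc ∫⁻ θ, B.withDensity (L θ) {y | (θ, y) ∈ S} ∂π
      = ∫⁻ θ, ∫⁻ y, S.indicator 1 (θ, y) ∂(B.withDensity (L θ)) ∂π :=
        lintegral_congr fun θ => (lintegral_indicator_one (measurableSet_section_right hS θ)).symm
    _ = ∫⁻ y, ∫⁻ θ, L θ y * S.indicator 1 (θ, y) ∂π ∂B :=
        lintegral_lintegral_withDensity π B hL (F := fun θ y => S.indicator 1 (θ, y))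
          (measurable_one.indicator hS)
    _ = _ := by
        refine lintegral_congr fun y => ?_
        rw [← lintegral_indicator (measurableSet_section_left hS y)]
        refine lintegral_congr fun θ => ?_
        by_cases hθ : (θ, y) ∈ S <;> simp [hθ]

lemma lintegral_bind_withDensity_section [SFinite π] (B : Measure Y₁) [SFinite B]
    {L : Ω → Y₁ → ℝ≥0∞} (hL : Measurable (Function.uncurry L)) (T : Kernel Y₁ Y₂)
    [IsSFiniteKernel T] {S : Set (Ω × Y₂)} (hS : MeasurableSet S) :
    ∫⁻ θ, (B.withDensity (L θ)).bind T {y | (θ, y) ∈ S} ∂π =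
      ∫⁻ x, ∫⁻ y, ∫⁻ θ in {θ | (θ, y) ∈ S}, L θ x ∂π ∂(T x) ∂B := by
  have measurable_section : Measurable fun p : Ω × Y₁ => T p.2 {y | (p.1, y) ∈ S} :=
    Kernel.measurable_kernel_prodMk_left (κ := Kernel.prodMkLeft Ω T)
      (t := {q : (Ω × Y₁) × Y₂ | (q.1.1, q.2) ∈ S})
      (((measurable_fst.comp measurable_fst).prodMk measurable_snd) hS)
  calc ∫⁻ θ, (B.withDensity (L θ)).bind T {y | (θ, y) ∈ S} ∂π
      = ∫⁻ θ, ∫⁻ x, T x {y | (θ, y) ∈ S} ∂(B.withDensity (L θ)) ∂π :=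
        lintegral_congr fun θ =>
          Measure.bind_apply (measurableSet_section_right hS θ) T.aemeasurable
    _ = ∫⁻ x, ∫⁻ θ, L θ x * T x {y | (θ, y) ∈ S} ∂π ∂B :=
        lintegral_lintegral_withDensity π B hL measurable_section
    _ = _ := lintegral_congr fun x =>
        lintegral_mul_measure_section π (T x) (hL.comp measurable_prodMk_right) hS

lemma setLIntegral_superlevel_le_one {f ρ : Ω → ℝ≥0∞} (hf : Measurable f) (hρ : Measurable ρ)
    (hpos : ∫⁻ θ, f θ ∂π ≠ 0) (hfin : ∫⁻ θ, f θ ∂π ≠ ⊤) :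
    ∫⁻ θ in {θ | ρ θ * ∫⁻ φ, f φ ∂π < f θ}, ρ θ ∂π ≤ 1 := by
  rw [← ENNReal.mul_le_mul_iff_left hpos hfin, ← lintegral_mul_const _ hρ, one_mul]
  exact (setLIntegral_mono hf fun θ hθ => hθ.le).trans (setLIntegral_le_lintegral _ _)

/-- The hockey-stick divergence between the joint law of a parameter `θ ∼ π` and an observation
`y` with density `L θ` relative to `B`, and the product of `ρ • π` with the marginal law of `y`.
The subtraction is the truncated one of `ℝ≥0∞`, hence computes the positive part. -/
noncomputable def jointHockey (B : Measure Y) (L : Ω → Y → ℝ≥0∞) (ρ : Ω → ℝ≥0∞) : ℝ≥0∞ :=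
  ∫⁻ y, ∫⁻ θ, (L θ y - ρ θ * ∫⁻ φ, L φ y ∂π) ∂π ∂B

variable [IsFiniteMeasure π] {B₁ : Measure Y₁} {B₂ : Measure Y₂} [SFinite B₁] [SFinite B₂]
  {L₁ : Ω → Y₁ → ℝ≥0∞} {L₂ : Ω → Y₂ → ℝ≥0∞} {ρ : Ω → ℝ≥0∞}

lemma lintegral_bind_withDensity_section_le (hL₁ : Measurable (Function.uncurry L₁))
    (hρ : Measurable ρ) (T : Kernel Y₁ Y₂) [IsMarkovKernel T] {S : Set (Ω × Y₂)}
    (hS : MeasurableSet S) :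
    ∫⁻ θ, (B₁.withDensity (L₁ θ)).bind T {y | (θ, y) ∈ S} ∂π ≤ jointHockey π B₁ L₁ ρ +
      ∫⁻ θ, ∫⁻ y, ∫⁻ φ in {φ | (φ, y) ∈ S}, ρ φ ∂π ∂((B₁.withDensity (L₁ θ)).bind T) ∂π := by
  set marginal : Y₁ → ℝ≥0∞ := fun x => ∫⁻ φ, L₁ φ x ∂π
  set mass : Y₂ → ℝ≥0∞ := fun y => ∫⁻ θ in {θ | (θ, y) ∈ S}, ρ θ ∂π
  have measurable_mass : Measurable mass := measurable_setLIntegral_section π hρ hS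
  have reference_eq : ∫⁻ θ, ∫⁻ y, mass y ∂((B₁.withDensity (L₁ θ)).bind T) ∂π =
      ∫⁻ x, (∫⁻ y, mass y ∂(T x)) * marginal x ∂B₁ := by
    simp_rw [Measure.lintegral_bind T.aemeasurable measurable_mass.aemeasurable]
    exact lintegral_lintegral_withDensity_const π B₁ hL₁ measurable_mass.lintegral_kernel
  have measurable_reference : Measurable fun x => (∫⁻ y, mass y ∂(T x)) * marginal x :=
    measurable_mass.lintegral_kernel.mul hL₁.lintegral_prod_left'
  rw [reference_eq, lintegral_bind_withDensity_section π B₁ hL₁ T hS, jointHockey,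
    ← lintegral_add_right _ measurable_reference]
  refine lintegral_mono fun x => ?_
  calc ∫⁻ y, ∫⁻ θ in {θ | (θ, y) ∈ S}, L₁ θ x ∂π ∂(T x)
      ≤ ∫⁻ y, (∫⁻ θ, (L₁ θ x - ρ θ * marginal x) ∂π + mass y * marginal x) ∂(T x) := by
        refine lintegral_mono fun y => ?_
        rw [← lintegral_mul_const _ hρ]
        exact setLIntegral_le_lintegral_tsub_add π _ (hρ.mul_const _) _
    _ = _ := by
        rw [lintegral_add_right _ (measurable_mass.mul_const _),
          lintegral_mul_const _ measurable_mass, lintegral_const, measure_univ, mul_one]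

lemma lintegral_withDensity_superlevel_eq (hL₂ : Measurable (Function.uncurry L₂))
    (hρ : Measurable ρ) {S : Set (Ω × Y₂)}
    (hS : S = {p | ρ p.1 * ∫⁻ φ, L₂ φ p.2 ∂π < L₂ p.1 p.2}) :
    ∫⁻ θ, B₂.withDensity (L₂ θ) {y | (θ, y) ∈ S} ∂π = jointHockey π B₂ L₂ ρ +
      ∫⁻ θ, ∫⁻ y, ∫⁻ φ in {φ | (φ, y) ∈ S}, ρ φ ∂π ∂(B₂.withDensity (L₂ θ)) ∂π := by
  have measurable_marginal : Measurable fun y => ∫⁻ φ, L₂ φ y ∂π := hL₂.lintegral_prod_left'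
  have measurableSet_S : MeasurableSet S := hS ▸
    measurableSet_lt ((hρ.comp measurable_fst).mul (measurable_marginal.comp measurable_snd)) hL₂
  have measurable_mass := measurable_setLIntegral_section π hρ measurableSet_S
  have measurable_reference : Measurable fun y =>
      (∫⁻ θ in {θ | (θ, y) ∈ S}, ρ θ ∂π) * ∫⁻ φ, L₂ φ y ∂π :=
    measurable_mass.mul measurable_marginal
  rw [lintegral_withDensity_section π B₂ hL₂ measurableSet_S, jointHockey,
    lintegral_lintegral_withDensity_const π B₂ hL₂ measurable_mass,
    ← lintegral_add_right _ measurable_reference]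
  refine lintegral_congr fun y => ?_
  rw [← lintegral_mul_const _ hρ]
  subst hS
  exact setLIntegral_lt_eq_lintegral_tsub_add π (g := fun θ => ρ θ * ∫⁻ φ, L₂ φ y ∂π)
    (hL₂.comp measurable_prodMk_right) (hρ.mul_const _)

/- The optimal test for the divergence at `B₂` is a set `S`. Pulling `S` back along `T` tests the
divergence at `B₁`; the joint laws and the reference measures of `S` each change by at most
`ε * π Set.univ`, the latter because the sections of `S` have `ρ • π`-mass at most one. -/
lemma jointHockey_le_of_bind_close (hL₁ : Measurable (Function.uncurry L₁))
    (hL₂ : Measurable (Function.uncurry L₂)) (hρ : Measurable ρ)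
    (hpos : ∀ y, ∫⁻ θ, L₂ θ y ∂π ≠ 0) (hfin : ∀ y, ∫⁻ θ, L₂ θ y ∂π ≠ ⊤)
    (hprob : ∀ᵐ θ ∂π, IsProbabilityMeasure (B₂.withDensity (L₂ θ)))
    (T : Kernel Y₁ Y₂) [IsMarkovKernel T] {ε : ℝ≥0∞}
    (hle : ∀ᵐ θ ∂π, ∀ A, MeasurableSet A →
      B₂.withDensity (L₂ θ) A ≤ (B₁.withDensity (L₁ θ)).bind T A + ε)
    (hge : ∀ᵐ θ ∂π, ∀ A, MeasurableSet A →
      (B₁.withDensity (L₁ θ)).bind T A ≤ B₂.withDensity (L₂ θ) A + ε) :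
    jointHockey π B₂ L₂ ρ ≤ jointHockey π B₁ L₁ ρ + 2 * (ε * π Set.univ) := by
  set S : Set (Ω × Y₂) := {p | ρ p.1 * ∫⁻ φ, L₂ φ p.2 ∂π < L₂ p.1 p.2} with S_def
  have measurableSet_S : MeasurableSet S := measurableSet_lt ((hρ.comp measurable_fst).mul
    ((show Measurable fun y => ∫⁻ φ, L₂ φ y ∂π from hL₂.lintegral_prod_left').comp
      measurable_snd)) hL₂
  set mass : Y₂ → ℝ≥0∞ := fun y => ∫⁻ φ in {φ | (φ, y) ∈ S}, ρ φ ∂π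
  have measurable_mass : Measurable mass := measurable_setLIntegral_section π hρ measurableSet_S
  have mass_le_one (y : Y₂) : mass y ≤ 1 := setLIntegral_superlevel_le_one π
    (hL₂.comp measurable_prodMk_right) hρ (hpos y) (hfin y)
  set reference₂ : ℝ≥0∞ := ∫⁻ θ, ∫⁻ y, mass y ∂(B₂.withDensity (L₂ θ)) ∂π
  have reference₂_ne_top : reference₂ ≠ ⊤ := by
    refine ((lintegral_mono_ae (g := fun _ => 1) ?_).trans_lt (by simp)).ne
    filter_upwards [hprob] with θ hθ
    exact (lintegral_mono mass_le_one).trans_eq (by simp)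
  refine (ENNReal.add_le_add_iff_right reference₂_ne_top).1 ?_
  calc jointHockey π B₂ L₂ ρ + reference₂
      = ∫⁻ θ, B₂.withDensity (L₂ θ) {y | (θ, y) ∈ S} ∂π :=
        (lintegral_withDensity_superlevel_eq π hL₂ hρ S_def).symm
    _ ≤ ∫⁻ θ, (B₁.withDensity (L₁ θ)).bind T {y | (θ, y) ∈ S} ∂π + ε * π Set.univ := by
        rw [← lintegral_const, ← lintegral_add_right _ measurable_const]
        exact lintegral_mono_ae (hle.mono fun θ hθ => hθ _ (measurableSet_section_right
          measurableSet_S θ))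
    _ ≤ jointHockey π B₁ L₁ ρ +
          ∫⁻ θ, ∫⁻ y, mass y ∂((B₁.withDensity (L₁ θ)).bind T) ∂π + ε * π Set.univ := by
        gcongr
        exact lintegral_bind_withDensity_section_le π hL₁ hρ T measurableSet_S
    _ ≤ jointHockey π B₁ L₁ ρ + (reference₂ + ε * π Set.univ) + ε * π Set.univ := by
        gcongr
        rw [← lintegral_const, ← lintegral_add_right _ measurable_const]
        exact lintegral_mono_ae (hge.mono fun θ hθ =>
          lintegral_le_add_of_measure_le_add hθ measurable_mass mass_le_one)
    _ = jointHockey π B₁ L₁ ρ + 2 * (ε * π Set.univ) + reference₂ := by ring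

end HockeyStick

section ChiSquare

lemma cosh_sub_cosh_two_mul_le_abs (x : ℝ) :
    3 / 2 * (Real.cosh x - 1) - 1 / 8 * (Real.cosh (2 * x) - 1) ≤ |x| := by
  have factored : 3 / 2 * (Real.cosh x - 1) - 1 / 8 * (Real.cosh (2 * x) - 1) =
      (Real.cosh x - 1) - (Real.cosh x - 1) ^ 2 / 4 := by
    rw [Real.cosh_two_mul, Real.sinh_sq]; ring
  rw [factored]
  rcases le_total |x| 1 with hx | hx
  · have sq_le : x ^ 2 ≤ |x| := by rw [← sq_abs]; nlinarith [abs_nonneg x]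
    have abs_half_sq_le : |x ^ 2 / 2| ≤ 1 := by rw [abs_of_nonneg (by positivity)]; linarith
    nlinarith [Real.cosh_le_exp_half_sq x, sq_nonneg (Real.cosh x - 1), sq_nonneg x,
      (abs_le.1 (Real.abs_exp_sub_one_sub_id_le abs_half_sq_le)).2]
  · nlinarith [sq_nonneg (Real.cosh x - 3)]

/-- The moment generating function of `(d - Z) / 2` for a chi-squared variable `Z` with `d` degrees
of freedom. -/
noncomputable def chiSqMgf (d t : ℝ) : ℝ := Real.exp (t * d / 2) * (1 + t) ^ (-d / 2)

lemma chiSqMgf_eq_exp (d : ℝ) {t : ℝ} (ht : -1 < t) :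
    chiSqMgf d t = Real.exp (d / 2 * (t - Real.log (1 + t))) := by
  rw [chiSqMgf, Real.rpow_def_of_pos (by linarith), ← Real.exp_add]
  congr 1; ring

lemma chiSqMgf_le {d t : ℝ} (hd : 0 ≤ d) (ht : -(1 / 5) ≤ t) :
    chiSqMgf d t ≤ Real.exp (5 / 8 * (d * t ^ 2)) := by
  have one_add_pos : 0 < 1 + t := by linarith
  have inv_le : (1 + t)⁻¹ ≤ 5 / 4 := by
    rw [inv_le_comm₀ one_add_pos (by norm_num)]; norm_num; linarith
  have sub_log_le : t - Real.log (1 + t) ≤ 5 / 4 * t ^ 2 :=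
    calc t - Real.log (1 + t) ≤ t - (1 - (1 + t)⁻¹) := by
          gcongr; exact Real.one_sub_inv_le_log_of_pos one_add_pos
      _ = (1 + t)⁻¹ * t ^ 2 := by field_simp; ring
      _ ≤ 5 / 4 * t ^ 2 := by gcongr
  rw [chiSqMgf_eq_exp d (by linarith), Real.exp_le_exp]
  nlinarith

lemma add_le_chiSqMgf_add_neg {d t : ℝ} (hd : 0 ≤ d) (ht : |t| < 1) :
    2 + d * t ^ 2 / 2 ≤ chiSqMgf d t + chiSqMgf d (-t) := by
  obtain ⟨neg_lt, lt_one⟩ := abs_lt.1 ht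
  have log_add_log_le : Real.log (1 + t) + Real.log (1 + -t) ≤ -t ^ 2 := by
    rw [← Real.log_mul (by linarith) (by linarith)]
    have := Real.log_le_sub_one_of_pos (mul_pos (by linarith : 0 < 1 + t)
      (by linarith : 0 < 1 + -t))
    nlinarith
  rw [chiSqMgf_eq_exp d neg_lt, chiSqMgf_eq_exp d (by linarith)]
  nlinarith [Real.add_one_le_exp (d / 2 * (t - Real.log (1 + t))),
    Real.add_one_le_exp (d / 2 * (-t - Real.log (1 + -t)))]

lemma hasDerivAt_chiSqMgf_zero (d : ℝ) : HasDerivAt (chiSqMgf d) 0 0 := by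
  have exp_part : HasDerivAt (fun t : ℝ => Real.exp (t * d / 2)) (d / 2) 0 := by
    simpa using (((hasDerivAt_id (0 : ℝ)).mul_const d).div_const 2).exp
  have rpow_part : HasDerivAt (fun t : ℝ => (1 + t) ^ (-d / 2)) (-d / 2) 0 := by
    simpa using ((hasDerivAt_id (0 : ℝ)).const_add 1).rpow_const (p := -d / 2) (by simp)
  exact (exp_part.mul rpow_part).congr_deriv (by norm_num; ring)

variable {Ω : Type*} [MeasurableSpace Ω] {ν : Measure Ω} {V : Ω → ℝ}

lemma integral_cosh_mul {t : ℝ} (hpos : t ∈ integrableExpSet V ν)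
    (hneg : -t ∈ integrableExpSet V ν) :
    Integrable (fun ω => Real.cosh (t * V ω)) ν ∧
      ∫ ω, Real.cosh (t * V ω) ∂ν = (mgf V ν t + mgf V ν (-t)) / 2 := by
  have hpos' : Integrable (fun ω => Real.exp (t * V ω)) ν := hpos
  have hneg' : Integrable (fun ω => Real.exp (-t * V ω)) ν := hneg
  simp only [Real.cosh_eq, ← neg_mul]
  exact ⟨(hpos'.add hneg').div_const 2,
    by rw [integral_div, integral_add hpos' hneg', mgf, mgf]⟩

lemma le_mul_integral_abs_of_mgf [IsProbabilityMeasure ν] {t : ℝ} (ht : 0 < t)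
    (hV : Set.Icc (-(2 * t)) (2 * t) ⊆ integrableExpSet V ν) (hint : Integrable V ν) :
    3 / 2 * ((mgf V ν t + mgf V ν (-t)) / 2 - 1) -
      1 / 8 * ((mgf V ν (2 * t) + mgf V ν (-(2 * t))) / 2 - 1) ≤ t * ∫ ω, |V ω| ∂ν := by
  obtain ⟨integrable₁, integral₁⟩ := integral_cosh_mul (t := t)
    (hV ⟨by linarith, by linarith⟩) (hV ⟨by linarith, by linarith⟩)
  obtain ⟨integrable₂, integral₂⟩ := integral_cosh_mul (t := 2 * t)
    (hV ⟨by linarith, by linarith⟩) (hV ⟨by linarith, by linarith⟩)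
  have sub_one₁ : Integrable (fun ω => Real.cosh (t * V ω) - 1) ν :=
    integrable₁.sub (integrable_const 1)
  have sub_one₂ : Integrable (fun ω => Real.cosh (2 * t * V ω) - 1) ν :=
    integrable₂.sub (integrable_const 1)
  calc 3 / 2 * ((mgf V ν t + mgf V ν (-t)) / 2 - 1) -
        1 / 8 * ((mgf V ν (2 * t) + mgf V ν (-(2 * t))) / 2 - 1)
      = ∫ ω, (3 / 2 * (Real.cosh (t * V ω) - 1) - 1 / 8 * (Real.cosh (2 * t * V ω) - 1)) ∂ν := by
        rw [integral_sub (sub_one₁.const_mul _) (sub_one₂.const_mul _), integral_const_mul,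
          integral_const_mul, integral_sub integrable₁ (integrable_const 1),
          integral_sub integrable₂ (integrable_const 1), integral₁, integral₂]
        simp
    _ ≤ ∫ ω, t * |V ω| ∂ν := by
        refine integral_mono ((sub_one₁.const_mul _).sub (sub_one₂.const_mul _))
          (hint.abs.const_mul t) fun ω => ?_
        rw [← abs_of_pos ht, ← abs_mul, abs_of_pos ht, mul_assoc]
        exact cosh_sub_cosh_two_mul_le_abs _
    _ = t * ∫ ω, |V ω| ∂ν := integral_const_mul _ _

variable {d : ℝ}

lemma Ioi_subset_integrableExpSet_of_mgf (hV : ∀ t, -1 < t → mgf V ν t = chiSqMgf d t) :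
    Set.Ioi (-1) ⊆ integrableExpSet V ν := by
  intro t ht
  by_contra not_integrable
  have mgf_pos : 0 < mgf V ν t := by rw [hV t ht, chiSqMgf_eq_exp d ht]; exact Real.exp_pos _
  exact mgf_pos.ne' (mgf_undef not_integrable)

lemma integrable_of_mgf (hV : ∀ t, -1 < t → mgf V ν t = chiSqMgf d t) :
    Integrable V ν :=
  integrable_of_mem_interior_integrableExpSet <|
    mem_interior_iff_mem_nhds.2 <| Filter.mem_of_superset (Ioi_mem_nhds (by norm_num))
      (Ioi_subset_integrableExpSet_of_mgf hV)

lemma integral_eq_zero_of_mgf (hV : ∀ t, -1 < t → mgf V ν t = chiSqMgf d t) :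
    ∫ ω, V ω ∂ν = 0 := by
  have nhds_zero : Set.Ioi (-1 : ℝ) ∈ nhds 0 := Ioi_mem_nhds (by norm_num)
  rw [← deriv_mgf_zero (mem_interior_iff_mem_nhds.2
    (Filter.mem_of_superset nhds_zero (Ioi_subset_integrableExpSet_of_mgf hV)))]
  exact ((hasDerivAt_chiSqMgf_zero d).congr_of_eventuallyEq
    (Filter.mem_of_superset nhds_zero fun t ht => hV t ht)).deriv

lemma sqrt_le_integral_abs_of_mgf [IsProbabilityMeasure ν] (hd : 1 ≤ d)
    (hV : ∀ t, -1 < t → mgf V ν t = chiSqMgf d t) :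
    √d / 200 ≤ ∫ ω, |V ω| ∂ν := by
  have one_le_sqrt : 1 ≤ √d := Real.one_le_sqrt.2 hd
  set t : ℝ := 1 / (10 * √d)
  have t_pos : 0 < t := by positivity
  have t_le : t ≤ 1 / 10 := one_div_le_one_div_of_le (by norm_num) (by linarith)
  have d_mul_sq : d * t ^ 2 = 1 / 100 := by
    rw [div_pow, mul_pow, Real.sq_sqrt (by linarith)]; field_simp; norm_num
  have abs_lower := le_mul_integral_abs_of_mgf t_pos (fun s hs =>
    Ioi_subset_integrableExpSet_of_mgf hV (Set.mem_Ioi.2 (by linarith [hs.1])))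
    (integrable_of_mgf hV)
  rw [hV _ (by linarith), hV _ (by linarith), hV _ (by linarith), hV _ (by linarith)] at abs_lower
  have mgf_lower := add_le_chiSqMgf_add_neg (d := d) (t := t) (by linarith)
    (by rw [abs_of_pos t_pos]; linarith)
  have mgf_upper_pos := chiSqMgf_le (d := d) (t := 2 * t) (by linarith) (by linarith)
  have mgf_upper_neg := chiSqMgf_le (d := d) (t := -(2 * t)) (by linarith) (by linarith)
  have exponent_eq : 5 / 8 * (d * (2 * t) ^ 2) = 1 / 40 := by rw [mul_pow]; linarith
  have exp_le : Real.exp (1 / 40) ≤ 1 + 1 / 40 + (1 / 40) ^ 2 := by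
    have := (abs_le.1 (Real.abs_exp_sub_one_sub_id_le (x := 1 / 40)
      (by rw [abs_of_pos] <;> norm_num))).2
    linarith
  rw [neg_sq, exponent_eq] at mgf_upper_neg
  rw [exponent_eq] at mgf_upper_pos
  have integral_lower : 1 / 2000 ≤ t * ∫ ω, |V ω| ∂ν := by linarith
  calc √d / 200 = 1 / 2000 * (10 * √d) := by ring
    _ ≤ t * (∫ ω, |V ω| ∂ν) * (10 * √d) := by gcongr
    _ = ∫ ω, |V ω| ∂ν := by simp only [t]; field_simp

lemma sqrt_le_lintegral_of_mgf [IsProbabilityMeasure ν] (hd : 1 ≤ d)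
    (hV : ∀ t, -1 < t → mgf V ν t = chiSqMgf d t) :
    ENNReal.ofReal (√d / 400) ≤ ∫⁻ ω, ENNReal.ofReal (V ω) ∂ν := by
  have integrable_V := integrable_of_mgf hV
  have posPart_eq (ω : Ω) : max (V ω) 0 = (|V ω| + V ω) / 2 := by
    rw [max_def]; split_ifs with h
    · rw [abs_of_nonpos h]; ring
    · rw [abs_of_nonneg (le_of_not_ge h)]; ring
  calc ENNReal.ofReal (√d / 400) ≤ ENNReal.ofReal (∫ ω, max (V ω) 0 ∂ν) := by
        refine ENNReal.ofReal_le_ofReal ?_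
        simp_rw [posPart_eq]
        rw [integral_div, integral_add integrable_V.abs integrable_V,
          integral_eq_zero_of_mgf hV]
        linarith [sqrt_le_integral_abs_of_mgf hd hV]
    _ = ∫⁻ ω, ENNReal.ofReal (V ω) ∂ν := by
        rw [ofReal_integral_eq_lintegral_ofReal integrable_V.pos_part
          (.of_forall fun ω => le_max_right _ _)]
        simp [ENNReal.ofReal_max]

lemma posPart_add_le_posPart_exp {δ : ℝ} (hd : 0 ≤ d) (hδ : 0 ≤ δ) (v : ℝ) :
    ENNReal.ofReal (1 - Real.exp (-v)) + ENNReal.ofReal δ * ENNReal.ofReal v ≤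
      ENNReal.ofReal (Real.exp (δ * v - d / 2 * (δ - Real.log (1 + δ))) - Real.exp (-v)) +
        ENNReal.ofReal (d * δ ^ 2 / 4) := by
  rcases le_total v 0 with hv | hv
  · simp [ENNReal.ofReal_of_nonpos hv, ENNReal.ofReal_of_nonpos (sub_nonpos.2
      (Real.one_le_exp (neg_nonneg.2 hv)))]
  · have sub_sq_le_log : δ - δ ^ 2 / 2 ≤ Real.log (1 + δ) := by
      refine le_trans ?_ (Real.le_log_one_add_of_nonneg hδ)
      rw [le_div_iff₀ (by linarith)]
      nlinarith [pow_nonneg hδ 3]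
    rw [← ENNReal.ofReal_mul hδ, ← ENNReal.ofReal_add
      (sub_nonneg.2 (Real.exp_le_one_iff.2 (by linarith))) (mul_nonneg hδ hv)]
    refine (ENNReal.ofReal_le_ofReal ?_).trans ENNReal.ofReal_add_le
    nlinarith [Real.add_one_le_exp (δ * v - d / 2 * (δ - Real.log (1 + δ)))]

lemma lintegral_hockey_gap_of_mgf [IsProbabilityMeasure ν] (hd : 1 ≤ d) (hVm : Measurable V)
    (hV : ∀ t, -1 < t → mgf V ν t = chiSqMgf d t) {δ : ℝ} (hδ : 0 ≤ δ)
    (hgap : 0 ≤ δ * √d / 400 - d * δ ^ 2 / 4) :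
    ∫⁻ ω, ENNReal.ofReal (1 - Real.exp (-V ω)) ∂ν +
        ENNReal.ofReal (δ * √d / 400 - d * δ ^ 2 / 4) ≤
      ∫⁻ ω, ENNReal.ofReal (Real.exp (δ * V ω - d / 2 * (δ - Real.log (1 + δ))) -
        Real.exp (-V ω)) ∂ν := by
  have d_nonneg : 0 ≤ d := by linarith
  refine (ENNReal.add_le_add_iff_right (ENNReal.ofReal_ne_top (r := d * δ ^ 2 / 4))).1 ?_
  rw [add_assoc, ← ENNReal.ofReal_add hgap (by positivity), sub_add_cancel]
  calc ∫⁻ ω, ENNReal.ofReal (1 - Real.exp (-V ω)) ∂ν + ENNReal.ofReal (δ * √d / 400)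
      ≤ ∫⁻ ω, ENNReal.ofReal (1 - Real.exp (-V ω)) ∂ν +
          ENNReal.ofReal δ * ∫⁻ ω, ENNReal.ofReal (V ω) ∂ν := by
        rw [mul_div_assoc, ENNReal.ofReal_mul hδ]
        gcongr
        exact sqrt_le_lintegral_of_mgf hd hV
    _ = ∫⁻ ω, (ENNReal.ofReal (1 - Real.exp (-V ω)) +
          ENNReal.ofReal δ * ENNReal.ofReal (V ω)) ∂ν := by
        rw [lintegral_add_left (by fun_prop), lintegral_const_mul _ (by fun_prop)]
    _ ≤ ∫⁻ ω, (ENNReal.ofReal (Real.exp (δ * V ω - d / 2 * (δ - Real.log (1 + δ))) -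
          Real.exp (-V ω)) + ENNReal.ofReal (d * δ ^ 2 / 4)) ∂ν :=
        lintegral_mono fun ω => posPart_add_le_posPart_exp d_nonneg hδ (V ω)
    _ = _ := by rw [lintegral_add_right _ measurable_const]; simp

end ChiSquare

section GaussHockey

variable {d : ℕ} {Q : (Fin d → ℝ) → ℝ}

/-- The mass of the unnormalised Gaussian density `exp (-Q / 2)`. -/
noncomputable def gaussMass (Q : (Fin d → ℝ) → ℝ) : ℝ := ∫ h, Real.exp (-(Q h / 2))

/-- The hockey-stick divergence `∫ (exp (-Q / 2) - τ)₊ / gaussMass Q` of the Gaussian law with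
density proportional to `exp (-Q / 2)` from a multiple of Lebesgue measure. -/
noncomputable def gaussHockey (Q : (Fin d → ℝ) → ℝ) (τ : ℝ) : ℝ≥0∞ :=
  ∫⁻ u, ENNReal.ofReal ((Real.exp (-(Q u / 2)) - τ) / gaussMass Q)

lemma gaussMass_nonneg (Q : (Fin d → ℝ) → ℝ) : 0 ≤ gaussMass Q :=
  integral_nonneg fun _ => Real.exp_nonneg _

lemma gaussMass_pos (hint : Integrable fun u => Real.exp (-(Q u / 2))) : 0 < gaussMass Q :=
  integral_exp_pos hint

lemma gaussHockey_antitone (Q : (Fin d → ℝ) → ℝ) : Antitone (gaussHockey Q) := fun _ _ hτ =>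
  lintegral_mono fun _ => ENNReal.ofReal_le_ofReal
    (div_le_div_of_nonneg_right (sub_le_sub_left hτ _) (gaussMass_nonneg Q))

lemma lintegral_ofReal_div_integral {E : Type*} [MeasurableSpace E] {μ : Measure E} {f : E → ℝ}
    (hf : Integrable f μ) (hf_nonneg : ∀ x, 0 ≤ f x) (hpos : 0 < ∫ x, f x ∂μ) :
    ∫⁻ x, ENNReal.ofReal (f x / ∫ y, f y ∂μ) ∂μ = 1 := by
  rw [← ofReal_integral_eq_lintegral_ofReal (hf.div_const _)
    (.of_forall fun x => div_nonneg (hf_nonneg x) hpos.le), integral_div, div_self hpos.ne',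
    ENNReal.ofReal_one]

lemma gaussHockey_le_one (hint : Integrable fun u => Real.exp (-(Q u / 2))) {τ : ℝ}
    (hτ : 0 ≤ τ) : gaussHockey Q τ ≤ 1 := by
  rw [← lintegral_ofReal_div_integral hint (fun _ => Real.exp_nonneg _) (gaussMass_pos hint)]
  exact lintegral_mono fun u => ENNReal.ofReal_le_ofReal
    (div_le_div_of_nonneg_right (sub_le_self _ hτ) (gaussMass_nonneg Q))

lemma lintegral_eq_mul_lintegral_comp_smul (f : (Fin d → ℝ) → ℝ≥0∞) {r : ℝ} (hr : 0 < r) :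
    ∫⁻ u, f u = ENNReal.ofReal (r ^ d) * ∫⁻ u, f (r • u) := by
  have change : ∫⁻ u, f (r • u) = ∫⁻ u, f u ∂(Measure.map (fun u => r • u) volume) :=
    ((Homeomorph.smulOfNeZero r hr.ne').measurableEmbedding.lintegral_map f).symm
  rw [change, Measure.map_addHaar_smul volume hr.ne', lintegral_smul_measure, smul_eq_mul,
    ← mul_assoc, ← ENNReal.ofReal_mul (by positivity), Module.finrank_fin_fun,
    abs_of_pos (by positivity), mul_inv_cancel₀ (by positivity), ENNReal.ofReal_one, one_mul]

lemma integrable_exp_neg_mul_half (hQ : ∀ (s : ℝ) u, Q (s • u) = s ^ 2 * Q u)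
    (hint : Integrable fun u => Real.exp (-(Q u / 2))) {s : ℝ} (hs : 0 < s) :
    Integrable fun u => Real.exp (-(s * Q u / 2)) := by
  simpa only [hQ, Real.sq_sqrt hs.le] using hint.comp_smul (Real.sqrt_pos.2 hs).ne'

lemma integral_exp_neg_mul_half (hQ : ∀ (s : ℝ) u, Q (s • u) = s ^ 2 * Q u) {s : ℝ}
    (hs : 0 < s) : ∫ u, Real.exp (-(s * Q u / 2)) = s ^ (-(d : ℝ) / 2) * gaussMass Q := by
  have scaled := Measure.integral_comp_smul volume (fun u => Real.exp (-(Q u / 2))) (√s)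
  simp only [hQ, Real.sq_sqrt hs.le] at scaled
  rw [scaled, Module.finrank_fin_fun, abs_of_pos (by positivity), neg_div, Real.rpow_neg hs.le,
    Real.rpow_div_two_eq_sqrt _ hs.le, Real.rpow_natCast, smul_eq_mul, gaussMass]

lemma gaussHockey_rpow_mul (hQ : ∀ (s : ℝ) u, Q (s • u) = s ^ 2 * Q u) {s : ℝ} (hs : 0 < s)
    (τ : ℝ) : gaussHockey Q (s ^ (-(d : ℝ) / 2) * τ) =
      ∫⁻ u, ENNReal.ofReal ((s ^ ((d : ℝ) / 2) * Real.exp (-(s * Q u / 2)) - τ) /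
        gaussMass Q) := by
  rw [gaussHockey, lintegral_eq_mul_lintegral_comp_smul _ (Real.sqrt_pos.2 hs),
    ← lintegral_const_mul' _ _ ENNReal.ofReal_ne_top]
  refine lintegral_congr fun u => ?_
  have rpow_mul_rpow_neg : s ^ ((d : ℝ) / 2) * s ^ (-(d : ℝ) / 2) = 1 := by
    rw [← Real.rpow_add hs]; simp [neg_div]
  rw [← ENNReal.ofReal_mul (by positivity), hQ, Real.sq_sqrt hs.le, ← Real.rpow_natCast,
    ← Real.rpow_div_two_eq_sqrt _ hs.le, mul_div_assoc', mul_sub, ← mul_assoc, rpow_mul_rpow_neg,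
    one_mul]

/-- The probability measure with density proportional to `exp (-Q / 2)`. -/
noncomputable def gaussLaw (Q : (Fin d → ℝ) → ℝ) : Measure (Fin d → ℝ) :=
  volume.tilted fun u => -(Q u / 2)

lemma isProbabilityMeasure_gaussLaw (hint : Integrable fun u => Real.exp (-(Q u / 2))) :
    IsProbabilityMeasure (gaussLaw Q) :=
  isProbabilityMeasure_tilted hint

lemma lintegral_gaussLaw (Q f : (Fin d → ℝ) → ℝ) :
    ∫⁻ u, ENNReal.ofReal (f u) ∂(gaussLaw Q) =
      ∫⁻ u, ENNReal.ofReal (Real.exp (-(Q u / 2)) * f u / gaussMass Q) := by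
  rw [gaussLaw, lintegral_tilted]
  refine lintegral_congr fun u => ?_
  rw [← gaussMass, ← ENNReal.ofReal_mul (div_nonneg (Real.exp_nonneg _) (gaussMass_nonneg Q)),
    div_mul_eq_mul_div]

lemma mgf_gaussLaw (hQ : ∀ (s : ℝ) u, Q (s • u) = s ^ 2 * Q u)
    (hint : Integrable fun u => Real.exp (-(Q u / 2))) {t : ℝ} (ht : -1 < t) :
    mgf (fun u => (d - Q u) / 2) (gaussLaw Q) t = chiSqMgf d t := by
  have exponent_split (u : Fin d → ℝ) : Real.exp (-(Q u / 2) + t * ((d - Q u) / 2)) =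
      Real.exp (t * d / 2) * Real.exp (-((1 + t) * Q u / 2)) := by
    rw [← Real.exp_add]; congr 1; ring
  rw [mgf, gaussLaw, integral_exp_tilted]
  simp only [Pi.add_apply, exponent_split]
  rw [integral_const_mul, integral_exp_neg_mul_half hQ (by linarith), ← gaussMass, mul_div_assoc,
    mul_div_cancel_right₀ _ (gaussMass_pos hint).ne', chiSqMgf]

lemma gaussHockey_gap_of_nonneg (hQm : Measurable Q) (hd : 0 < d)
    (hQ : ∀ (s : ℝ) u, Q (s • u) = s ^ 2 * Q u)
    (hint : Integrable fun u => Real.exp (-(Q u / 2))) {δ : ℝ} (hδ : 0 ≤ δ)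
    (hgap : 0 ≤ δ * √d / 400 - d * δ ^ 2 / 4) :
    gaussHockey Q (Real.exp (-(d : ℝ) / 2)) +
        ENNReal.ofReal (δ * √d / 400 - d * δ ^ 2 / 4) ≤
      gaussHockey Q ((1 + δ) ^ (-(d : ℝ) / 2) * Real.exp (-(d : ℝ) / 2)) := by
  have := isProbabilityMeasure_gaussLaw hint
  have gap := lintegral_hockey_gap_of_mgf (ν := gaussLaw Q) (by exact_mod_cast hd)
    ((hQm.const_sub (d : ℝ)).div_const 2) (fun t ht => mgf_gaussLaw hQ hint ht) hδ hgap
  rw [lintegral_gaussLaw, lintegral_gaussLaw] at gap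
  convert gap using 2
  · refine lintegral_congr fun u => ?_
    rw [mul_one_sub, ← Real.exp_add]
    congr 5; ring
  · rw [gaussHockey_rpow_mul hQ (by linarith)]
    refine lintegral_congr fun u => ?_
    rw [mul_sub, ← Real.exp_add, ← Real.exp_add, Real.rpow_def_of_pos (by linarith),
      ← Real.exp_add]
    congr 4 <;> ring

lemma gaussHockey_gap (hQm : Measurable Q) (hd : 0 < d)
    (hQ : ∀ (s : ℝ) u, Q (s • u) = s ^ 2 * Q u)
    (hint : Integrable fun u => Real.exp (-(Q u / 2))) {δ : ℝ} (hδ : 0 ≤ δ) :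
    gaussHockey Q (Real.exp (-(d : ℝ) / 2)) +
        ENNReal.ofReal ((1 / 400) ^ 2 * min (δ * √d) 1) ≤
      gaussHockey Q ((1 + δ) ^ (-(d : ℝ) / 2) * Real.exp (-(d : ℝ) / 2)) := by
  have d_nonneg : (0 : ℝ) ≤ d := Nat.cast_nonneg d
  have sqrt_pos : 0 < √d := Real.sqrt_pos.2 (by exact_mod_cast hd)
  -- `x ↦ x / 400 - x ^ 2 / 4` is maximal at `x = 1 / 200`, where it equals `(1 / 400) ^ 2`.
  set δ' := min δ (1 / 200 / √d)
  have δ'_nonneg : 0 ≤ δ' := le_min hδ (by positivity)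
  have δ'_le : δ' ≤ δ := min_le_left _ _
  set x := δ' * √d with x_def
  have x_eq : x = min (δ * √d) (1 / 200) := by
    rw [x_def, min_mul_of_nonneg _ _ sqrt_pos.le, div_mul_cancel₀ _ sqrt_pos.ne']
  have x_le : x ≤ 1 / 200 := x_eq ▸ min_le_right _ _
  have le_x : 1 / 200 * min (δ * √d) 1 ≤ x := by
    have : 0 ≤ δ * √d := by positivity
    rw [x_eq, mul_min_of_nonneg _ _ (by norm_num)]
    exact min_le_min (by linarith) (by norm_num)
  have gap_eq : δ' * √d / 400 - d * δ' ^ 2 / 4 = x / 400 - x ^ 2 / 4 := by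
    rw [x_def, mul_pow, Real.sq_sqrt d_nonneg]; ring
  have x_nonneg : 0 ≤ x := by positivity
  have gap := gaussHockey_gap_of_nonneg hQm hd hQ hint δ'_nonneg (by rw [gap_eq]; nlinarith)
  refine (add_le_add_right (ENNReal.ofReal_le_ofReal ?_) _).trans
    (gap.trans (gaussHockey_antitone Q ?_))
  · rw [gap_eq]; nlinarith
  · refine mul_le_mul_of_nonneg_right ?_ (Real.exp_nonneg _)
    exact Real.rpow_le_rpow_of_nonpos (by linarith) (by linarith)
      (div_nonpos_of_nonpos_of_nonneg (by linarith) two_pos.le)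

end GaussHockey

section Comparison

variable {E : Type*} [MeasurableSpace E] {μ : Measure E} {U : Set E}

lemma lintegral_posPart_le_of_le_mul {f₁ f₂ r₁ r₂ : E → ℝ} (hU : MeasurableSet U)
    (hf₂ : Measurable f₂) {α β : ℝ} (hβ_nonneg : 0 ≤ β) (hβ_le_one : β ≤ 1) (hαβ : β ≤ α)
    (hf : ∀ x ∈ U, f₁ x ≤ α * f₂ x) (hr : ∀ x ∈ U, β * r₂ x ≤ r₁ x) (hr₁ : ∀ x, 0 ≤ r₁ x)
    {η : ℝ≥0∞} (hη : ∫⁻ x in Uᶜ, ENNReal.ofReal (f₁ x) ∂μ ≤ η)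
    (hf₂_le_one : ∫⁻ x, ENNReal.ofReal (f₂ x) ∂μ ≤ 1) :
    ∫⁻ x, ENNReal.ofReal (f₁ x - r₁ x) ∂μ ≤
      ∫⁻ x, ENNReal.ofReal (f₂ x - r₂ x) ∂μ + ENNReal.ofReal (α - β) + η := by
  rw [← lintegral_add_compl _ hU]
  refine add_le_add ?_ ((lintegral_mono fun x => ENNReal.ofReal_le_ofReal
    (sub_le_self _ (hr₁ x))).trans hη)
  calc ∫⁻ x in U, ENNReal.ofReal (f₁ x - r₁ x) ∂μ
      ≤ ∫⁻ x in U, (ENNReal.ofReal (f₂ x - r₂ x) +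
          ENNReal.ofReal (α - β) * ENNReal.ofReal (f₂ x)) ∂μ := by
        refine setLIntegral_mono' hU fun x hx => ?_
        calc ENNReal.ofReal (f₁ x - r₁ x)
            ≤ ENNReal.ofReal (β * (f₂ x - r₂ x) + (α - β) * f₂ x) :=
              ENNReal.ofReal_le_ofReal (by linarith [hf x hx, hr x hx])
          _ ≤ ENNReal.ofReal (β * (f₂ x - r₂ x)) + ENNReal.ofReal ((α - β) * f₂ x) :=
              ENNReal.ofReal_add_le
          _ ≤ _ := by
              rw [ENNReal.ofReal_mul hβ_nonneg, ENNReal.ofReal_mul (sub_nonneg.2 hαβ)]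
              gcongr
              exact mul_le_of_le_one_left zero_le (ENNReal.ofReal_le_one.2 hβ_le_one)
    _ ≤ ∫⁻ x, (ENNReal.ofReal (f₂ x - r₂ x) +
          ENNReal.ofReal (α - β) * ENNReal.ofReal (f₂ x)) ∂μ := setLIntegral_le_lintegral _ _
    _ = ∫⁻ x, ENNReal.ofReal (f₂ x - r₂ x) ∂μ +
          ENNReal.ofReal (α - β) * ∫⁻ x, ENNReal.ofReal (f₂ x) ∂μ := by
        rw [lintegral_add_right _ (by fun_prop), lintegral_const_mul _ (by fun_prop)]
    _ ≤ _ := by gcongr; exact mul_le_of_le_one_right zero_le hf₂_le_one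

lemma integral_le_of_le_mul_on {f g : E → ℝ} (hU : MeasurableSet U) (hf : Integrable f μ)
    (hg : Integrable g μ) (hg_nonneg : ∀ x, 0 ≤ g x) {a e : ℝ} (ha : 0 ≤ a)
    (hfg : ∀ x ∈ U, f x ≤ a * g x) (he : ∫ x in Uᶜ, f x ∂μ ≤ e) :
    ∫ x, f x ∂μ ≤ a * ∫ x, g x ∂μ + e := by
  rw [← integral_add_compl hU hf]
  refine add_le_add ?_ he
  calc ∫ x in U, f x ∂μ ≤ ∫ x in U, a * g x ∂μ :=
        setIntegral_mono_on hf.integrableOn (hg.const_mul a).integrableOn hU hfg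
    _ = a * ∫ x in U, g x ∂μ := integral_const_mul _ _
    _ ≤ _ := mul_le_mul_of_nonneg_left (setIntegral_le_integral hg (.of_forall hg_nonneg)) ha

lemma lintegral_posPart_normalized_le {f g r₁ r₂ : E → ℝ} (hU : MeasurableSet U)
    (hg_meas : Measurable g) (hf : Integrable f μ) (hg : Integrable g μ)
    (hf_nonneg : ∀ x, 0 ≤ f x) (hg_nonneg : ∀ x, 0 ≤ g x) (hf_pos : 0 < ∫ x, f x ∂μ)
    (hg_pos : 0 < ∫ x, g x ∂μ) {α β γ η : ℝ} (hα : 0 ≤ α) (hβ_nonneg : 0 ≤ β)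
    (hβ_le_one : β ≤ 1) (hβ_le : β ≤ α * γ) (hfg : ∀ x ∈ U, f x ≤ α * g x)
    (hmass : ∫ x, g x ∂μ ≤ γ * ∫ x, f x ∂μ) (htail : ∫ x in Uᶜ, f x ∂μ ≤ η * ∫ x, f x ∂μ)
    (hr : ∀ x ∈ U, β * r₂ x ≤ r₁ x) (hr₁ : ∀ x, 0 ≤ r₁ x) :
    ∫⁻ x, ENNReal.ofReal (f x / (∫ y, f y ∂μ) - r₁ x) ∂μ ≤
      ∫⁻ x, ENNReal.ofReal (g x / (∫ y, g y ∂μ) - r₂ x) ∂μ + ENNReal.ofReal (α * γ - β) +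
        ENNReal.ofReal η := by
  refine lintegral_posPart_le_of_le_mul (f₂ := fun x => g x / ∫ y, g y ∂μ) hU
    (hg_meas.div_const _) hβ_nonneg hβ_le_one hβ_le (fun x hx => ?_) hr hr₁ ?_
    (lintegral_ofReal_div_integral hg hg_nonneg hg_pos).le
  · rw [div_le_iff₀ hf_pos]
    calc f x ≤ α * g x := hfg x hx
      _ = α * (g x / ∫ y, g y ∂μ) * ∫ y, g y ∂μ := by field_simp
      _ ≤ α * (g x / ∫ y, g y ∂μ) * (γ * ∫ y, f y ∂μ) :=
        mul_le_mul_of_nonneg_left hmass (mul_nonneg hα (div_nonneg (hg_nonneg x) hg_pos.le))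
      _ = _ := by ring
  · rw [← ofReal_integral_eq_lintegral_ofReal (hf.integrableOn.div_const _)
      (.of_forall fun x => div_nonneg (hf_nonneg x) hf_pos.le), integral_div]
    exact ENNReal.ofReal_le_ofReal ((div_le_iff₀ hf_pos).2 htail)

lemma lintegral_posPart_normalized_close {f g r : E → ℝ} {s : ℝ} (hU : MeasurableSet U)
    (hf_meas : Measurable f) (hg_meas : Measurable g) (hf : Integrable f μ)
    (hg : Integrable g μ) (hf_nonneg : ∀ x, 0 ≤ f x) (hg_nonneg : ∀ x, 0 ≤ g x)
    (hg_pos : 0 < ∫ x, g x ∂μ) {a b e : ℝ} (ha : 0 ≤ a) (ha_le : a ≤ 1 / 10) (hb : 0 ≤ b)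
    (hb_le : b ≤ 1 / 10) (he : 0 ≤ e) (he_le : e ≤ 1 / 10)
    (hfg : ∀ x ∈ U, f x ≤ (1 + a) * g x) (hgf : ∀ x ∈ U, g x ≤ (1 + a) * f x)
    (hf_tail : ∫ x in Uᶜ, f x ∂μ ≤ e * ∫ x, g x ∂μ)
    (hg_tail : ∫ x in Uᶜ, g x ∂μ ≤ e * ∫ x, g x ∂μ) (hr : ∀ x, 0 ≤ r x) (hs : 0 ≤ s)
    (hsr : ∀ x ∈ U, (1 - b) * s ≤ r x) (hrs : ∀ x ∈ U, (1 - b) * r x ≤ s) :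
    ∫⁻ x, ENNReal.ofReal (f x / (∫ y, f y ∂μ) - r x) ∂μ ≤
        ∫⁻ x, ENNReal.ofReal (g x / (∫ y, g y ∂μ) - s) ∂μ + ENNReal.ofReal (10 * (a + b + e)) ∧
      ∫⁻ x, ENNReal.ofReal (g x / (∫ y, g y ∂μ) - s) ∂μ ≤
        ∫⁻ x, ENNReal.ofReal (f x / (∫ y, f y ∂μ) - r x) ∂μ +
          ENNReal.ofReal (10 * (a + b + e)) := by
  have f_le := integral_le_of_le_mul_on hU hf hg hg_nonneg (by linarith) hfg hf_tail
  have g_le := integral_le_of_le_mul_on hU hg hf hf_nonneg (by linarith) hgf hg_tail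
  have hf_pos : 0 < ∫ x, f x ∂μ := by nlinarith
  have mass_f_le : ∫ x, f x ∂μ ≤ (1 + a + e) * ∫ x, g x ∂μ := by linarith
  have mass_g_le : ∫ x, g x ∂μ ≤ (1 + 2 * a + 2 * e) * ∫ x, f x ∂μ := by
    nlinarith [mul_nonneg ha hf_pos.le, mul_nonneg he hf_pos.le,
      mul_nonneg (mul_nonneg ha he) hf_pos.le, mul_nonneg (mul_nonneg he he) hf_pos.le]
  have mass_g_le_two : ∫ x, g x ∂μ ≤ 2 * ∫ x, f x ∂μ := by nlinarith
  have merge {c₁ c₂ : ℝ} (A : ℝ≥0∞) (h₁ : 0 ≤ c₁) (h₂ : 0 ≤ c₂)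
      (h : c₁ + c₂ ≤ 10 * (a + b + e)) : A + ENNReal.ofReal c₁ + ENNReal.ofReal c₂ ≤
        A + ENNReal.ofReal (10 * (a + b + e)) := by
    rw [add_assoc, ← ENNReal.ofReal_add h₁ h₂]; gcongr
  constructor
  · exact (lintegral_posPart_normalized_le hU hg_meas hf hg hf_nonneg hg_nonneg hf_pos hg_pos
      (by linarith) (by linarith) (by linarith) (by nlinarith) hfg mass_g_le
      (η := 2 * e) (by nlinarith) hsr hr).trans (merge _ (by nlinarith) (by linarith)
        (by nlinarith))
  · exact (lintegral_posPart_normalized_le hU hf_meas hg hf hg_nonneg hf_nonneg hg_pos hf_pos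
      (by linarith) (by linarith) (by linarith) (by nlinarith) hgf mass_f_le hg_tail hrs
      fun _ => hs).trans (merge _ (by nlinarith) he (by nlinarith))

end Comparison

section QuadraticForm

variable {d : ℕ} {M M' : Matrix (Fin d) (Fin d) ℝ} {κ : ℝ}

/-- The quadratic form `h ↦ hᵀ M h`. -/
def quad (M : Matrix (Fin d) (Fin d) ℝ) (h : Fin d → ℝ) : ℝ := h ⬝ᵥ M.mulVec h

lemma quad_smul (M : Matrix (Fin d) (Fin d) ℝ) (s : ℝ) (h : Fin d → ℝ) :
    quad M (s • h) = s ^ 2 * quad M h := by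
  simp only [quad, Matrix.mulVec_smul, dotProduct_smul, smul_dotProduct, smul_eq_mul]; ring

lemma continuous_quad (M : Matrix (Fin d) (Fin d) ℝ) : Continuous (quad M) := by
  unfold quad; fun_prop

lemma quad_sub_of_isSymm (hM : M.IsSymm) (h z : Fin d → ℝ) :
    quad M (h - z) = quad M h - 2 * (h ⬝ᵥ M.mulVec z) + quad M z := by
  have cross_symm : z ⬝ᵥ M.mulVec h = h ⬝ᵥ M.mulVec z := by
    rw [Matrix.dotProduct_mulVec, ← Matrix.mulVec_transpose, hM.eq, dotProduct_comm]
  simp only [quad, Matrix.mulVec_sub, dotProduct_sub, sub_dotProduct, cross_symm]; ring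

lemma abs_dotProduct_le (a b : Fin d → ℝ) : |a ⬝ᵥ b| ≤ d * ‖a‖ * ‖b‖ := by
  calc |∑ i, a i * b i| ≤ ∑ i, |a i * b i| := Finset.abs_sum_le_sum_abs _ _
    _ ≤ ∑ _i : Fin d, ‖a‖ * ‖b‖ := Finset.sum_le_sum fun i _ => by
        rw [abs_mul]
        exact mul_le_mul (norm_le_pi_norm a i) (norm_le_pi_norm b i) (abs_nonneg _) (norm_nonneg _)
    _ = _ := by simp [mul_assoc]

lemma sum_sq_le_mul_norm_sq (h : Fin d → ℝ) : ∑ i, h i ^ 2 ≤ d * ‖h‖ ^ 2 := by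
  calc ∑ i, h i ^ 2 ≤ ∑ _i : Fin d, ‖h‖ ^ 2 := Finset.sum_le_sum fun i _ => by
        rw [← sq_abs]; exact pow_le_pow_left₀ (abs_nonneg _) (norm_le_pi_norm h i) 2
    _ = d * ‖h‖ ^ 2 := by simp

lemma integrable_exp_neg_mul_norm_sq {c : ℝ} (hc : 0 < c) :
    Integrable fun h : Fin d → ℝ => Real.exp (-(c * ‖h‖ ^ 2)) := by
  have integrable_prod : Integrable fun h : Fin d → ℝ =>
      ∏ i, Real.exp (-(c / (d + 1)) * h i ^ 2) :=
    Integrable.fintype_prod (f := fun _ x => Real.exp (-(c / (d + 1)) * x ^ 2))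
      fun _ => integrable_exp_neg_mul_sq (by positivity)
  refine integrable_prod.mono' (by fun_prop) (.of_forall fun h => ?_)
  rw [Real.norm_of_nonneg (Real.exp_nonneg _), ← Real.exp_sum, ← Finset.mul_sum, neg_mul]
  refine Real.exp_le_exp.2 (neg_le_neg ?_)
  calc c / (d + 1) * ∑ i, h i ^ 2 ≤ c / (d + 1) * ((d + 1) * ‖h‖ ^ 2) := by
        gcongr
        linarith [sum_sq_le_mul_norm_sq h, sq_nonneg ‖h‖]
    _ = _ := by field_simp

lemma integrable_exp_neg_quad (hκ : 0 < κ) (hM : ∀ h, κ * ‖h‖ ^ 2 ≤ quad M h) :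
    Integrable fun h => Real.exp (-(quad M h / 2)) := by
  refine (integrable_exp_neg_mul_norm_sq (d := d) (half_pos hκ)).mono'
    ((continuous_quad M).measurable.div_const 2).neg.exp.aestronglyMeasurable
    (.of_forall fun h => ?_)
  rw [Real.norm_of_nonneg (Real.exp_nonneg _)]
  exact Real.exp_le_exp.2 (by linarith [hM h])

lemma gaussMass_quad_pos (hκ : 0 < κ) (hM : ∀ h, κ * ‖h‖ ^ 2 ≤ quad M h) :
    0 < gaussMass (quad M) :=
  gaussMass_pos (integrable_exp_neg_quad hκ hM)

lemma gaussMass_mul_norm_sq_pos {K : ℝ} (hK : 0 < K) :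
    0 < gaussMass fun h : Fin d → ℝ => K * ‖h‖ ^ 2 :=
  gaussMass_pos (by simpa only [mul_div_right_comm] using
    integrable_exp_neg_mul_norm_sq (half_pos hK))

lemma gaussMass_mul_norm_sq_le {K : ℝ} (hκ : 0 < κ)
    (hM : ∀ h, κ * ‖h‖ ^ 2 ≤ quad M h) (hM' : ∀ h, quad M h ≤ K * ‖h‖ ^ 2) :
    (gaussMass fun h : Fin d → ℝ => K * ‖h‖ ^ 2) ≤ gaussMass (quad M) :=
  integral_mono_of_nonneg (.of_forall fun _ => Real.exp_nonneg _) (integrable_exp_neg_quad hκ hM)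
    (.of_forall fun h => Real.exp_le_exp.2 (by linarith [hM' h]))

lemma one_sub_le_one_add_rpow_neg {c s : ℝ} (hc : 0 ≤ c) (hs : 0 ≤ s) :
    1 - c * s / 2 ≤ (1 + s) ^ (-c / 2) := by
  have hs_pos : 0 < 1 + s := by linarith
  have log_le := mul_le_mul_of_nonneg_left (Real.log_le_sub_one_of_pos hs_pos) hc
  rw [Real.rpow_def_of_pos hs_pos]
  linarith [Real.add_one_le_exp (Real.log (1 + s) * (-c / 2))]

lemma one_sub_mul_gaussMass_le {s : ℝ} (hκ : 0 < κ)
    (hM : ∀ h, κ * ‖h‖ ^ 2 ≤ quad M h) (hM' : ∀ h, κ * ‖h‖ ^ 2 ≤ quad M' h) (hs : 0 ≤ s)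
    (h : ∀ h, quad M' h ≤ quad M h + s * (κ * ‖h‖ ^ 2)) :
    (1 - d * s / 2) * gaussMass (quad M) ≤ gaussMass (quad M') := by
  have hs_pos : 0 < 1 + s := by linarith
  calc (1 - d * s / 2) * gaussMass (quad M)
      ≤ (1 + s) ^ (-(d : ℝ) / 2) * gaussMass (quad M) :=
        mul_le_mul_of_nonneg_right (one_sub_le_one_add_rpow_neg (Nat.cast_nonneg d) hs)
          (gaussMass_nonneg _)
    _ = ∫ u, Real.exp (-((1 + s) * quad M u / 2)) :=
        (integral_exp_neg_mul_half (quad_smul M) hs_pos).symm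
    _ ≤ gaussMass (quad M') := by
        refine integral_mono
          (integrable_exp_neg_mul_half (quad_smul M) (integrable_exp_neg_quad hκ hM) hs_pos)
          (integrable_exp_neg_quad hκ hM') fun u => Real.exp_le_exp.2 ?_
        linarith [h u, mul_le_mul_of_nonneg_left (hM u) hs]

lemma mulVec_injective_of_le_quad (hκ : 0 < κ) (hM : ∀ h, κ * ‖h‖ ^ 2 ≤ quad M h) :
    Function.Injective M.mulVec := by
  intro x y hxy
  have coercive := hM (x - y)
  rw [quad, Matrix.mulVec_sub, sub_eq_zero.2 hxy, dotProduct_zero] at coercive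
  have norm_sq_eq : ‖x - y‖ ^ 2 = 0 := by nlinarith [sq_nonneg ‖x - y‖]
  exact sub_eq_zero.1 (norm_eq_zero.1 (pow_eq_zero_iff two_ne_zero |>.1 norm_sq_eq))

lemma exists_mulVec_eq_of_le_quad (hκ : 0 < κ) (hM : ∀ h, κ * ‖h‖ ^ 2 ≤ quad M h)
    (b : Fin d → ℝ) : ∃ z, M.mulVec z = b ∧ κ * ‖z‖ ≤ d * ‖b‖ := by
  obtain ⟨z, hz⟩ := Matrix.mulVec_surjective_iff_isUnit.2
    (Matrix.mulVec_injective_iff_isUnit.1 (mulVec_injective_of_le_quad hκ hM)) b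
  refine ⟨z, hz, ?_⟩
  have coercive : κ * ‖z‖ ^ 2 ≤ d * ‖z‖ * ‖b‖ := by
    refine (hM z).trans ?_
    rw [quad, show M.mulVec z = b from hz]
    exact (le_abs_self _).trans (abs_dotProduct_le z b)
  rcases (norm_nonneg z).eq_or_lt with norm_eq | norm_pos
  · rw [← norm_eq, mul_zero]; positivity
  · nlinarith

section Translated

variable {N : ℝ}

lemma integrable_exp_neg_quad_sub (hκ : 0 < κ) (hM : ∀ h, κ * ‖h‖ ^ 2 ≤ quad M h)
    (hN : 0 < N) (z : Fin d → ℝ) :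
    Integrable fun h => Real.exp (-(N * quad M (h - z) / 2)) :=
  (integrable_exp_neg_mul_half (quad_smul M) (integrable_exp_neg_quad hκ hM) hN).comp_sub_right z

lemma integral_exp_neg_quad_sub (hN : 0 < N) (z : Fin d → ℝ) :
    ∫ h, Real.exp (-(N * quad M (h - z) / 2)) =
      N ^ (-(d : ℝ) / 2) * gaussMass (quad M) := by
  rw [integral_sub_right_eq_self (fun h => Real.exp (-(N * quad M h / 2))) z,
    integral_exp_neg_mul_half (quad_smul M) hN]

lemma setIntegral_compl_closedBall_exp_neg_quad_sub_le (hκ : 0 < κ)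
    (hM : ∀ h, κ * ‖h‖ ^ 2 ≤ quad M h) (hN : 0 < N) {z : Fin d → ℝ} {R : ℝ}
    (hz : ‖z‖ ≤ R / 2) :
    ∫ h in (Metric.closedBall (0 : Fin d → ℝ) R)ᶜ, Real.exp (-(N * quad M (h - z) / 2)) ≤
      (2 ^ ((d : ℝ) / 2) * Real.exp (-(N * κ * R ^ 2 / 16))) *
        (N ^ (-(d : ℝ) / 2) * gaussMass (quad M)) := by
  have hR : 0 ≤ R := by linarith [norm_nonneg z]
  -- Half of the exponent gives the decay in `R`, the other half keeps the integral finite.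
  set tail : (Fin d → ℝ) → ℝ := fun h =>
    Real.exp (-(N * κ * R ^ 2 / 16)) * Real.exp (-(N / 2 * quad M (h - z) / 2))
  have integrable_tail : Integrable tail :=
    (integrable_exp_neg_quad_sub hκ hM (half_pos hN) z).const_mul _
  calc ∫ h in (Metric.closedBall (0 : Fin d → ℝ) R)ᶜ, Real.exp (-(N * quad M (h - z) / 2))
      ≤ ∫ h in (Metric.closedBall (0 : Fin d → ℝ) R)ᶜ, tail h := by
        refine setIntegral_mono_on (integrable_exp_neg_quad_sub hκ hM hN z).integrableOn
          integrable_tail.integrableOn Metric.isClosed_closedBall.measurableSet.compl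
          fun h hh => ?_
        refine le_trans (Real.exp_le_exp.2 ?_) (Real.exp_add _ _).le
        have norm_gt : R < ‖h‖ := by simpa using hh
        have norm_sub_ge : R / 2 ≤ ‖h - z‖ := by linarith [norm_sub_norm_le h z]
        have quad_ge : κ * (R / 2) ^ 2 ≤ quad M (h - z) := le_trans (by gcongr) (hM (h - z))
        nlinarith
    _ ≤ ∫ h, tail h :=
        setIntegral_le_integral integrable_tail (.of_forall fun h => by positivity)
    _ = _ := by
        rw [integral_const_mul, integral_exp_neg_quad_sub (half_pos hN),
          Real.div_rpow hN.le two_pos.le, neg_div, Real.rpow_neg two_pos.le, div_inv_eq_mul]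
        ring

lemma lintegral_hockey_quad_sub (hN : 0 < N) (z : Fin d → ℝ) (τ : ℝ) :
    ∫⁻ h, ENNReal.ofReal (Real.exp (-(N * quad M (h - z) / 2)) /
        (N ^ (-(d : ℝ) / 2) * gaussMass (quad M)) - τ / gaussMass (quad M)) =
      gaussHockey (quad M) (N ^ (-(d : ℝ) / 2) * τ) := by
  rw [gaussHockey_rpow_mul (quad_smul M) hN, lintegral_sub_right_eq_self (fun h =>
    ENNReal.ofReal (Real.exp (-(N * quad M h / 2)) /
      (N ^ (-(d : ℝ) / 2) * gaussMass (quad M)) - τ / gaussMass (quad M))) z]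
  refine lintegral_congr fun u => ?_
  rw [neg_div, Real.rpow_neg hN.le, sub_div, ← div_div, div_inv_eq_mul, mul_comm]

lemma exp_mul_dotProduct_sub_quad (hsymm : M.IsSymm) (z h : Fin d → ℝ) :
    Real.exp (N * (M.mulVec z ⬝ᵥ h - quad M h / 2)) =
      Real.exp (N * quad M z / 2) * Real.exp (-(N * quad M (h - z) / 2)) := by
  rw [← Real.exp_add, quad_sub_of_isSymm hsymm, dotProduct_comm]
  congr 1; ring

variable {b : Fin d → ℝ}

lemma integrable_exp_mul_dotProduct_sub_quad (hsymm : M.IsSymm) (hκ : 0 < κ)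
    (hM : ∀ h, κ * ‖h‖ ^ 2 ≤ quad M h) (hN : 0 < N) (b : Fin d → ℝ) :
    Integrable fun h => Real.exp (N * (b ⬝ᵥ h - quad M h / 2)) := by
  obtain ⟨z, rfl, -⟩ := exists_mulVec_eq_of_le_quad hκ hM b
  simp only [exp_mul_dotProduct_sub_quad hsymm]
  exact (integrable_exp_neg_quad_sub hκ hM hN z).const_mul _

lemma rpow_mul_gaussMass_le_integral (hsymm : M.IsSymm) (hκ : 0 < κ)
    (hM : ∀ h, κ * ‖h‖ ^ 2 ≤ quad M h) (hN : 0 < N) (b : Fin d → ℝ) :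
    N ^ (-(d : ℝ) / 2) * gaussMass (quad M) ≤
      ∫ h, Real.exp (N * (b ⬝ᵥ h - quad M h / 2)) := by
  obtain ⟨z, rfl, -⟩ := exists_mulVec_eq_of_le_quad hκ hM b
  have quad_nonneg : 0 ≤ quad M z := le_trans (by positivity) (hM z)
  simp only [exp_mul_dotProduct_sub_quad hsymm]
  rw [integral_const_mul, integral_exp_neg_quad_sub hN]
  exact le_mul_of_one_le_left (mul_nonneg (by positivity) (gaussMass_nonneg _))
    (Real.one_le_exp (by positivity))

lemma setIntegral_compl_closedBall_exp_dotProduct_sub_quad_le (hsymm : M.IsSymm) (hκ : 0 < κ)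
    (hM : ∀ h, κ * ‖h‖ ^ 2 ≤ quad M h) (hN : 0 < N) {R : ℝ} (hb : d * ‖b‖ ≤ κ * R / 2) :
    ∫ h in (Metric.closedBall (0 : Fin d → ℝ) R)ᶜ, Real.exp (N * (b ⬝ᵥ h - quad M h / 2)) ≤
      2 ^ ((d : ℝ) / 2) * Real.exp (-(N * κ * R ^ 2 / 16)) *
        ∫ h, Real.exp (N * (b ⬝ᵥ h - quad M h / 2)) := by
  obtain ⟨z, rfl, hz⟩ := exists_mulVec_eq_of_le_quad hκ hM b
  have hzR : ‖z‖ ≤ R / 2 := le_of_mul_le_mul_left (by linarith) hκ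
  simp only [exp_mul_dotProduct_sub_quad hsymm]
  rw [integral_const_mul, integral_const_mul, integral_exp_neg_quad_sub hN, mul_left_comm]
  exact mul_le_mul_of_nonneg_left
    (setIntegral_compl_closedBall_exp_neg_quad_sub_le hκ hM hN hzR) (Real.exp_nonneg _)

lemma lintegral_hockey_exp_dotProduct_sub_quad (hsymm : M.IsSymm) (hκ : 0 < κ)
    (hM : ∀ h, κ * ‖h‖ ^ 2 ≤ quad M h) (hN : 0 < N) (b : Fin d → ℝ) (τ : ℝ) :
    ∫⁻ h, ENNReal.ofReal (Real.exp (N * (b ⬝ᵥ h - quad M h / 2)) /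
        (∫ h', Real.exp (N * (b ⬝ᵥ h' - quad M h' / 2))) - τ / gaussMass (quad M)) =
      gaussHockey (quad M) (N ^ (-(d : ℝ) / 2) * τ) := by
  obtain ⟨z, rfl, -⟩ := exists_mulVec_eq_of_le_quad hκ hM b
  simp only [exp_mul_dotProduct_sub_quad hsymm]
  rw [integral_const_mul, integral_exp_neg_quad_sub hN, ← lintegral_hockey_quad_sub hN z]
  simp only [mul_div_mul_left _ _ (Real.exp_ne_zero _)]

end Translated

end QuadraticForm

section LaplaceApproximation

variable {d : ℕ}

/-- Uniform second-order expansion of a log-partition function `Λ` on the ball of radius `ρ` about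
the origin, with gradient `ℓ` and uniformly nondegenerate, Lipschitz Hessian `M`. The matrices
enter only through their quadratic forms. -/
structure QuadApprox (ρ κ K C : ℝ) (Λ : (Fin d → ℝ) → ℝ) (ℓ : (Fin d → ℝ) → Fin d → ℝ)
    (M : (Fin d → ℝ) → Matrix (Fin d) (Fin d) ℝ) : Prop where
  ρ_pos : 0 < ρ
  κ_pos : 0 < κ
  K_pos : 0 < K
  C_nonneg : 0 ≤ C
  C_mul_ρ_le : 8 * C * ρ ≤ κ
  measurable : Measurable Λ
  isSymm : ∀ θ, (M θ).IsSymm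
  lower : ∀ θ, ‖θ‖ ≤ ρ → ∀ h, κ * ‖h‖ ^ 2 ≤ quad (M θ) h
  upper : ∀ θ, ‖θ‖ ≤ ρ → ∀ h, quad (M θ) h ≤ K * ‖h‖ ^ 2
  lipschitz : ∀ θ θ', ‖θ‖ ≤ ρ → ‖θ'‖ ≤ ρ → ∀ h,
    quad (M θ') h ≤ quad (M θ) h + C * ‖θ' - θ‖ * ‖h‖ ^ 2
  taylor : ∀ θ h, ‖θ‖ ≤ ρ → ‖θ + h‖ ≤ ρ →
    |Λ (θ + h) - Λ θ - ℓ θ ⬝ᵥ h - quad (M θ) h / 2| ≤ C * ‖h‖ ^ 3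

/-- The likelihood ratio at `θ + h` relative to `θ`, for sample size `N` and empirical mean `t`,
as a function of the increment `h` and restricted to `‖θ + h‖ ≤ ρ`. -/
noncomputable def localLik (ρ : ℝ) (Λ : (Fin d → ℝ) → ℝ) (N : ℝ) (t θ : Fin d → ℝ) :
    (Fin d → ℝ) → ℝ :=
  (Metric.closedBall (-θ) ρ).indicator fun h => Real.exp (N * (t ⬝ᵥ h - (Λ (θ + h) - Λ θ)))

variable {ρ : ℝ} {Λ : (Fin d → ℝ) → ℝ}

lemma localLik_nonneg (ρ : ℝ) (Λ : (Fin d → ℝ) → ℝ) (N : ℝ) (t θ h : Fin d → ℝ) :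
    0 ≤ localLik ρ Λ N t θ h :=
  Set.indicator_nonneg (fun _ _ => Real.exp_nonneg _) _

lemma mem_closedBall_neg_iff {θ h : Fin d → ℝ} :
    h ∈ Metric.closedBall (-θ) ρ ↔ ‖θ + h‖ ≤ ρ := by
  rw [mem_closedBall_iff_norm, sub_neg_eq_add, add_comm]

lemma localLik_of_norm_le {θ h : Fin d → ℝ} (hh : ‖θ + h‖ ≤ ρ) (N : ℝ) (t : Fin d → ℝ) :
    localLik ρ Λ N t θ h = Real.exp (N * (t ⬝ᵥ h - (Λ (θ + h) - Λ θ))) :=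
  Set.indicator_of_mem (mem_closedBall_neg_iff.2 hh) _

lemma localLik_of_not_norm_le {θ h : Fin d → ℝ} (hh : ¬‖θ + h‖ ≤ ρ) (N : ℝ)
    (t : Fin d → ℝ) : localLik ρ Λ N t θ h = 0 :=
  Set.indicator_of_notMem (mt mem_closedBall_neg_iff.1 hh) _

lemma measurable_localLik (hΛ : Measurable Λ) (N : ℝ) (t θ : Fin d → ℝ) :
    Measurable (localLik ρ Λ N t θ) := by
  have measurable_dot : Measurable fun h : Fin d → ℝ => t ⬝ᵥ h := by
    refine Continuous.measurable ?_
    fun_prop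
  exact Measurable.indicator (by fun_prop) Metric.isClosed_closedBall.measurableSet

namespace QuadApprox

variable {κ K C N R : ℝ} {ℓ : (Fin d → ℝ) → Fin d → ℝ}
  {M : (Fin d → ℝ) → Matrix (Fin d) (Fin d) ℝ} {t θ : Fin d → ℝ}

lemma le_sub_sub (H : QuadApprox ρ κ K C Λ ℓ M) (hθ : ‖θ‖ ≤ ρ) {h : Fin d → ℝ}
    (hh : ‖θ + h‖ ≤ ρ) : κ / 4 * ‖h‖ ^ 2 ≤ Λ (θ + h) - Λ θ - ℓ θ ⬝ᵥ h := by
  have norm_le : ‖h‖ ≤ 2 * ρ := by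
    calc ‖h‖ = ‖θ + h - θ‖ := by rw [add_sub_cancel_left]
      _ ≤ ‖θ + h‖ + ‖θ‖ := norm_sub_le _ _
      _ ≤ 2 * ρ := by linarith
  have cubic_le : C * ‖h‖ ^ 3 ≤ κ / 4 * ‖h‖ ^ 2 := by
    have C_norm_le : C * ‖h‖ ≤ κ / 4 := by
      linarith [H.C_mul_ρ_le, mul_le_mul_of_nonneg_left norm_le H.C_nonneg]
    calc C * ‖h‖ ^ 3 = C * ‖h‖ * ‖h‖ ^ 2 := by ring
      _ ≤ _ := by gcongr
  linarith [(abs_le.1 (H.taylor θ h hθ hh)).1, H.lower θ hθ h]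

lemma localLik_le (H : QuadApprox ρ κ K C Λ ℓ M) (hN : 0 < N) (hθ : ‖θ‖ ≤ ρ)
    (t h : Fin d → ℝ) :
    localLik ρ Λ N t θ h ≤ (Metric.closedBall (-θ) ρ).indicator
      (fun h => Real.exp (N * (d * ‖t - ℓ θ‖ * ‖h‖ - κ / 4 * ‖h‖ ^ 2))) h := by
  refine Set.indicator_le_indicator' fun hh => Real.exp_le_exp.2 ?_
  have growth := H.le_sub_sub hθ (mem_closedBall_neg_iff.1 hh)
  have linear_le := (le_abs_self _).trans (abs_dotProduct_le (t - ℓ θ) h)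
  rw [sub_dotProduct] at linear_le
  exact mul_le_mul_of_nonneg_left (by linarith) hN.le

lemma integrable_localLik (H : QuadApprox ρ κ K C Λ ℓ M) (hN : 0 < N) (hθ : ‖θ‖ ≤ ρ)
    (t : Fin d → ℝ) : Integrable (localLik ρ Λ N t θ) := by
  refine Integrable.mono' (g := (Metric.closedBall (-θ) ρ).indicator
      fun h => Real.exp (N * (d * ‖t - ℓ θ‖ * ‖h‖ - κ / 4 * ‖h‖ ^ 2)))
    (IntegrableOn.integrable_indicator ?_ Metric.isClosed_closedBall.measurableSet)
    (measurable_localLik H.measurable N t θ).aestronglyMeasurable (.of_forall fun h => ?_)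
  · exact ContinuousOn.integrableOn_compact (isCompact_closedBall _ _) (by fun_prop)
  · rw [Real.norm_of_nonneg (localLik_nonneg ..)]
    exact H.localLik_le hN hθ t h

lemma integral_localLik_pos (H : QuadApprox ρ κ K C Λ ℓ M) (hN : 0 < N) (hθ : ‖θ‖ ≤ ρ)
    (t : Fin d → ℝ) : 0 < ∫ h, localLik ρ Λ N t θ h := by
  rw [integral_pos_iff_support_of_nonneg (localLik_nonneg ρ Λ N t θ)
    (H.integrable_localLik hN hθ t)]
  refine (Metric.measure_closedBall_pos volume (-θ) H.ρ_pos).trans_le (measure_mono fun h hh => ?_)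
  rw [Function.mem_support, localLik_of_norm_le (mem_closedBall_neg_iff.1 hh)]
  exact Real.exp_ne_zero _

lemma setIntegral_compl_closedBall_localLik_le (H : QuadApprox ρ κ K C Λ ℓ M) (hN : 0 < N)
    (hR : 0 < R) (hθ : ‖θ‖ ≤ ρ) (ht : d * ‖t - ℓ θ‖ ≤ κ * R / 8) :
    ∫ h in (Metric.closedBall (0 : Fin d → ℝ) R)ᶜ, localLik ρ Λ N t θ h ≤
      (2 * ρ) ^ d * Real.exp (-(N * κ * R ^ 2 / 16)) := by
  have κ_pos := H.κ_pos
  have measurable_ball : MeasurableSet (Metric.closedBall (-θ) ρ) :=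
    Metric.isClosed_closedBall.measurableSet
  set bound := (Metric.closedBall (-θ) ρ).indicator fun _ => Real.exp (-(N * κ * R ^ 2 / 16))
  have integrable_bound : Integrable bound :=
    (integrableOn_const measure_closedBall_lt_top.ne).integrable_indicator measurable_ball
  have localLik_le_bound (h : Fin d → ℝ) (hh : R < ‖h‖) : localLik ρ Λ N t θ h ≤ bound h := by
    refine (H.localLik_le hN hθ t h).trans (Set.indicator_le_indicator (Real.exp_le_exp.2 ?_))
    have linear_le : d * ‖t - ℓ θ‖ * ‖h‖ ≤ κ / 8 * ‖h‖ ^ 2 := by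
      calc d * ‖t - ℓ θ‖ * ‖h‖ ≤ κ * R / 8 * ‖h‖ := by gcongr
        _ ≤ κ * ‖h‖ / 8 * ‖h‖ := by gcongr
        _ = _ := by ring
    have sq_le : κ * R ^ 2 ≤ κ * ‖h‖ ^ 2 := by gcongr
    have sq_nonneg : 0 ≤ κ * R ^ 2 := by positivity
    rw [show -(N * κ * R ^ 2 / 16) = N * (-(κ * R ^ 2 / 16)) by ring]
    exact mul_le_mul_of_nonneg_left (by linarith) hN.le
  calc ∫ h in (Metric.closedBall (0 : Fin d → ℝ) R)ᶜ, localLik ρ Λ N t θ h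
      ≤ ∫ h in (Metric.closedBall (0 : Fin d → ℝ) R)ᶜ, bound h :=
        setIntegral_mono_on (H.integrable_localLik hN hθ t).integrableOn
          integrable_bound.integrableOn Metric.isClosed_closedBall.measurableSet.compl
          fun h hh => localLik_le_bound h (by simpa using hh)
    _ ≤ ∫ h, bound h := setIntegral_le_integral integrable_bound
          (.of_forall (Set.indicator_nonneg fun _ _ => Real.exp_nonneg _))
    _ = _ := by
        rw [integral_indicator measurable_ball, setIntegral_const, smul_eq_mul, measureReal_def,
          Real.volume_pi_closedBall _ H.ρ_pos.le, Fintype.card_fin,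
          ENNReal.toReal_ofReal (pow_nonneg (mul_nonneg two_pos.le H.ρ_pos.le) d)]

lemma exists_localLik_eq_exp_mul (H : QuadApprox ρ κ K C Λ ℓ M) (hN : 0 < N)
    (hθ : ‖θ‖ + R ≤ ρ) (t : Fin d → ℝ) {h : Fin d → ℝ} (hh : ‖h‖ ≤ R) :
    ∃ x : ℝ, |x| ≤ N * C * R ^ 3 ∧ localLik ρ Λ N t θ h =
      Real.exp x * Real.exp (N * ((t - ℓ θ) ⬝ᵥ h - quad (M θ) h / 2)) := by
  have C_nonneg := H.C_nonneg
  have hθρ : ‖θ‖ ≤ ρ := by linarith [norm_nonneg h]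
  have hθh : ‖θ + h‖ ≤ ρ := (norm_add_le θ h).trans (by linarith)
  refine ⟨-(N * (Λ (θ + h) - Λ θ - ℓ θ ⬝ᵥ h - quad (M θ) h / 2)), ?_, ?_⟩
  · rw [abs_neg, abs_mul, abs_of_pos hN, mul_assoc]
    refine mul_le_mul_of_nonneg_left ((H.taylor θ h hθρ hθh).trans ?_) hN.le
    gcongr
  · rw [localLik_of_norm_le hθh, ← Real.exp_add, sub_dotProduct]
    congr 1; ring

lemma localLik_close (H : QuadApprox ρ κ K C Λ ℓ M) (hN : 0 < N) (hθ : ‖θ‖ + R ≤ ρ)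
    {a : ℝ} (ha : 2 * (N * C * R ^ 3) ≤ a) (ha_le : a ≤ 1) (t : Fin d → ℝ) {h : Fin d → ℝ}
    (hh : ‖h‖ ≤ R) :
    localLik ρ Λ N t θ h ≤ (1 + a) * Real.exp (N * ((t - ℓ θ) ⬝ᵥ h - quad (M θ) h / 2)) ∧
      Real.exp (N * ((t - ℓ θ) ⬝ᵥ h - quad (M θ) h / 2)) ≤ (1 + a) * localLik ρ Λ N t θ h := by
  obtain ⟨x, hx, localLik_eq⟩ := H.exists_localLik_eq_exp_mul hN hθ t hh
  have exp_abs_le : Real.exp |x| ≤ 1 + a := by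
    have remainder := (abs_le.1 (Real.abs_exp_sub_one_sub_id_le (x := |x|)
      (by rw [abs_abs]; linarith [abs_nonneg x]))).2
    nlinarith [abs_nonneg x]
  rw [localLik_eq, ← mul_assoc]
  constructor
  · gcongr
    exact (Real.exp_le_exp.2 (le_abs_self x)).trans exp_abs_le
  · refine le_mul_of_one_le_left (Real.exp_nonneg _) ?_
    calc (1 : ℝ) = Real.exp (-x) * Real.exp x := by
          rw [← Real.exp_add, neg_add_cancel, Real.exp_zero]
      _ ≤ (1 + a) * Real.exp x := by
        gcongr
        exact (Real.exp_le_exp.2 (neg_le_abs x)).trans exp_abs_le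

lemma one_sub_mul_gaussMass_le (H : QuadApprox ρ κ K C Λ ℓ M) {θ' : Fin d → ℝ} (hθ : ‖θ‖ ≤ ρ)
    (hθ' : ‖θ'‖ ≤ ρ) (hR : ‖θ' - θ‖ ≤ R) {b : ℝ} (hb : d * (C * R / κ) / 2 ≤ b) :
    (1 - b) * gaussMass (quad (M θ)) ≤ gaussMass (quad (M θ')) := by
  have κ_pos := H.κ_pos
  have C_nonneg := H.C_nonneg
  have R_nonneg : 0 ≤ R := (norm_nonneg _).trans hR
  calc (1 - b) * gaussMass (quad (M θ))
      ≤ (1 - d * (C * R / κ) / 2) * gaussMass (quad (M θ)) :=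
        mul_le_mul_of_nonneg_right (by linarith) (gaussMass_nonneg _)
    _ ≤ gaussMass (quad (M θ')) := by
        refine _root_.one_sub_mul_gaussMass_le κ_pos (H.lower θ hθ) (H.lower θ' hθ')
          (by positivity) fun u => (H.lipschitz θ θ' hθ hθ' u).trans ?_
        rw [← mul_assoc, div_mul_cancel₀ _ κ_pos.ne']
        gcongr

lemma setIntegral_compl_closedBall_localLik_le_mul (H : QuadApprox ρ κ K C Λ ℓ M) (hN : 0 < N)
    (hR : 0 < R) (hθ : ‖θ‖ ≤ ρ) (ht : d * ‖t - ℓ θ‖ ≤ κ * R / 8) :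
    ∫ h in (Metric.closedBall (0 : Fin d → ℝ) R)ᶜ, localLik ρ Λ N t θ h ≤
      (2 * ρ) ^ d / (gaussMass fun h : Fin d → ℝ => K * ‖h‖ ^ 2) * N ^ ((d : ℝ) / 2) *
          Real.exp (-(N * κ * R ^ 2 / 16)) *
        ∫ h, Real.exp (N * ((t - ℓ θ) ⬝ᵥ h - quad (M θ) h / 2)) := by
  have ρ_pos := H.ρ_pos
  set massMin := gaussMass fun h : Fin d → ℝ => K * ‖h‖ ^ 2
  have massMin_pos : 0 < massMin := gaussMass_mul_norm_sq_pos H.K_pos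
  have massMin_le : massMin ≤ gaussMass (quad (M θ)) :=
    gaussMass_mul_norm_sq_le H.κ_pos (H.lower θ hθ) (H.upper θ hθ)
  have rpow_mul_rpow_neg : N ^ ((d : ℝ) / 2) * N ^ (-(d : ℝ) / 2) = 1 := by
    rw [← Real.rpow_add hN, neg_div, add_neg_cancel, Real.rpow_zero]
  calc ∫ h in (Metric.closedBall (0 : Fin d → ℝ) R)ᶜ, localLik ρ Λ N t θ h
      ≤ (2 * ρ) ^ d * Real.exp (-(N * κ * R ^ 2 / 16)) :=
        H.setIntegral_compl_closedBall_localLik_le hN hR hθ ht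
    _ = (2 * ρ) ^ d / massMin * N ^ ((d : ℝ) / 2) * Real.exp (-(N * κ * R ^ 2 / 16)) *
          (N ^ (-(d : ℝ) / 2) * massMin) := by
        linear_combination (-((2 * ρ) ^ d / massMin * massMin *
          Real.exp (-(N * κ * R ^ 2 / 16)))) * rpow_mul_rpow_neg -
          Real.exp (-(N * κ * R ^ 2 / 16)) * div_mul_cancel₀ ((2 * ρ) ^ d) massMin_pos.ne'
    _ ≤ (2 * ρ) ^ d / massMin * N ^ ((d : ℝ) / 2) * Real.exp (-(N * κ * R ^ 2 / 16)) *
          (N ^ (-(d : ℝ) / 2) * gaussMass (quad (M θ))) := by gcongr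
    _ ≤ _ := by
        gcongr
        exact rpow_mul_gaussMass_le_integral (H.isSymm θ) H.κ_pos (H.lower θ hθ) hN _

lemma one_sub_mul_div_gaussMass_le (H : QuadApprox ρ κ K C Λ ℓ M) {θ' : Fin d → ℝ} {τ : ℝ}
    (hτ : 0 ≤ τ) (hθ : ‖θ‖ ≤ ρ) (hθ' : ‖θ'‖ ≤ ρ) (hR : ‖θ' - θ‖ ≤ R) {b : ℝ}
    (hb : d * (C * R / κ) / 2 ≤ b) :
    (1 - b) * (τ / gaussMass (quad (M θ'))) ≤ τ / gaussMass (quad (M θ)) := by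
  have mass_pos := gaussMass_quad_pos H.κ_pos (H.lower θ hθ)
  have mass'_pos := gaussMass_quad_pos H.κ_pos (H.lower θ' hθ')
  rw [mul_div_assoc', div_le_div_iff₀ mass'_pos mass_pos]
  nlinarith [mul_le_mul_of_nonneg_left (H.one_sub_mul_gaussMass_le hθ hθ' hR hb) hτ]

lemma setIntegral_compl_closedBall_le_mul_gauss (H : QuadApprox ρ κ K C Λ ℓ M) (hN : 0 < N)
    (hR : 0 < R) (hθ : ‖θ‖ ≤ ρ) (ht : d * ‖t - ℓ θ‖ ≤ κ * R / 8) {e : ℝ}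
    (he : ((2 * ρ) ^ d / (gaussMass fun h : Fin d → ℝ => K * ‖h‖ ^ 2) * N ^ ((d : ℝ) / 2) +
      2 ^ ((d : ℝ) / 2)) * Real.exp (-(N * κ * R ^ 2 / 16)) ≤ e) :
    ∫ h in (Metric.closedBall (0 : Fin d → ℝ) R)ᶜ, localLik ρ Λ N t θ h ≤
        e * ∫ h, Real.exp (N * ((t - ℓ θ) ⬝ᵥ h - quad (M θ) h / 2)) ∧
      ∫ h in (Metric.closedBall (0 : Fin d → ℝ) R)ᶜ,
          Real.exp (N * ((t - ℓ θ) ⬝ᵥ h - quad (M θ) h / 2)) ≤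
        e * ∫ h, Real.exp (N * ((t - ℓ θ) ⬝ᵥ h - quad (M θ) h / 2)) := by
  have ρ_pos := H.ρ_pos
  have κ_pos := H.κ_pos
  have gauss_nonneg : 0 ≤ ∫ h, Real.exp (N * ((t - ℓ θ) ⬝ᵥ h - quad (M θ) h / 2)) :=
    integral_nonneg fun _ => Real.exp_nonneg _
  set massMin := gaussMass fun h : Fin d → ℝ => K * ‖h‖ ^ 2
  have massMin_pos : 0 < massMin := gaussMass_mul_norm_sq_pos H.K_pos
  rw [add_mul] at he
  constructor
  · refine (H.setIntegral_compl_closedBall_localLik_le_mul hN hR hθ ht).trans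
      (mul_le_mul_of_nonneg_right (le_trans ?_ he) gauss_nonneg)
    exact le_add_of_nonneg_right (by positivity)
  · have κR_pos : 0 < κ * R := by positivity
    refine (setIntegral_compl_closedBall_exp_dotProduct_sub_quad_le (H.isSymm θ) κ_pos
      (H.lower θ hθ) hN (by linarith)).trans
      (mul_le_mul_of_nonneg_right (le_trans ?_ he) gauss_nonneg)
    exact le_add_of_nonneg_left (by positivity)

lemma lintegral_hockey_localLik_close (H : QuadApprox ρ κ K C Λ ℓ M) (hN : 0 < N) (hR : 0 < R)
    {τ : ℝ} (hτ : 0 ≤ τ) (hθ : ‖θ‖ + R ≤ ρ) (ht : d * ‖t - ℓ θ‖ ≤ κ * R / 8) {a b e : ℝ}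
    (ha : 2 * (N * C * R ^ 3) ≤ a) (ha_le : a ≤ 1 / 10)
    (hb : d * (C * R / κ) / 2 ≤ b) (hb_le : b ≤ 1 / 10)
    (he : ((2 * ρ) ^ d / (gaussMass fun h : Fin d → ℝ => K * ‖h‖ ^ 2) * N ^ ((d : ℝ) / 2) +
      2 ^ ((d : ℝ) / 2)) * Real.exp (-(N * κ * R ^ 2 / 16)) ≤ e) (he_le : e ≤ 1 / 10) :
    ∫⁻ h, ENNReal.ofReal (localLik ρ Λ N t θ h / (∫ h', localLik ρ Λ N t θ h') -
          τ / gaussMass (quad (M (θ + h)))) ≤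
        gaussHockey (quad (M θ)) (N ^ (-(d : ℝ) / 2) * τ) + ENNReal.ofReal (10 * (a + b + e)) ∧
      gaussHockey (quad (M θ)) (N ^ (-(d : ℝ) / 2) * τ) ≤
        (∫⁻ h, ENNReal.ofReal (localLik ρ Λ N t θ h / (∫ h', localLik ρ Λ N t θ h') -
          τ / gaussMass (quad (M (θ + h))))) + ENNReal.ofReal (10 * (a + b + e)) := by
  have κ_pos := H.κ_pos
  have C_nonneg := H.C_nonneg
  have hθρ : ‖θ‖ ≤ ρ := by linarith
  have hlow := H.lower θ hθρ
  have e_nonneg : 0 ≤ e := by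
    have ρ_pos := H.ρ_pos
    have massMin_pos := gaussMass_mul_norm_sq_pos (d := d) H.K_pos
    exact le_trans (by positivity) he
  have add_mem {h : Fin d → ℝ} (hh : h ∈ Metric.closedBall 0 R) : ‖h‖ ≤ R ∧ ‖θ + h‖ ≤ ρ := by
    rw [mem_closedBall_zero_iff] at hh
    exact ⟨hh, (norm_add_le θ h).trans (by linarith)⟩
  have close {h : Fin d → ℝ} (hh : h ∈ Metric.closedBall 0 R) :=
    H.localLik_close hN hθ ha (by linarith) t (add_mem hh).1
  have gauss_measurable :
      Measurable fun h => Real.exp (N * ((t - ℓ θ) ⬝ᵥ h - quad (M θ) h / 2)) := by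
    have := continuous_quad (M θ)
    refine Continuous.measurable ?_
    fun_prop
  have gauss_integrable := integrable_exp_mul_dotProduct_sub_quad (H.isSymm θ) κ_pos hlow hN
    (t - ℓ θ)
  obtain ⟨lik_tail, gauss_tail⟩ := H.setIntegral_compl_closedBall_le_mul_gauss hN hR hθρ ht he
  rw [← lintegral_hockey_exp_dotProduct_sub_quad (H.isSymm θ) κ_pos hlow hN (t - ℓ θ)]
  exact lintegral_posPart_normalized_close Metric.isClosed_closedBall.measurableSet
    (measurable_localLik H.measurable N t θ) gauss_measurable (H.integrable_localLik hN hθρ t)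
    gauss_integrable (localLik_nonneg ρ Λ N t θ) (fun _ => Real.exp_nonneg _)
    (integral_exp_pos gauss_integrable) (le_trans (by positivity) ha) ha_le
    (le_trans (by positivity) hb) hb_le e_nonneg he_le (fun h hh => (close hh).1)
    (fun h hh => (close hh).2) lik_tail gauss_tail
    (fun h => div_nonneg hτ (gaussMass_nonneg _)) (div_nonneg hτ (gaussMass_nonneg _))
    (fun h hh => H.one_sub_mul_div_gaussMass_le hτ (add_mem hh).2 hθρ
      (by simpa using (add_mem hh).1) hb)
    (fun h hh => H.one_sub_mul_div_gaussMass_le hτ hθρ (add_mem hh).2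
      (by simpa using (add_mem hh).1) hb)

end QuadApprox

end LaplaceApproximation

section Posterior

variable {d : ℕ} {ρ κ K C N : ℝ} {Λ : (Fin d → ℝ) → ℝ} {ℓ : (Fin d → ℝ) → Fin d → ℝ}
  {M : (Fin d → ℝ) → Matrix (Fin d) (Fin d) ℝ}

/-- Likelihood of the parameter `θ` for sample size `N` and empirical mean `t`, where `Λ` is the
log-partition function. -/
noncomputable def lik (Λ : (Fin d → ℝ) → ℝ) (N : ℝ) (t θ : Fin d → ℝ) : ℝ≥0∞ :=
  ENNReal.ofReal (Real.exp (N * (t ⬝ᵥ θ - Λ θ)))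

/-- Hockey-stick functional of the posterior of the uniform prior on the ball of radius `ρ`, with
threshold inversely proportional to the Gaussian mass of the local Hessian. -/
noncomputable def postHockey (ρ : ℝ) (Λ : (Fin d → ℝ) → ℝ)
    (M : (Fin d → ℝ) → Matrix (Fin d) (Fin d) ℝ) (N τ : ℝ) (t : Fin d → ℝ) : ℝ≥0∞ :=
  ∫⁻ θ in Metric.closedBall 0 ρ, (lik Λ N t θ / (∫⁻ φ in Metric.closedBall 0 ρ, lik Λ N t φ) -
    ENNReal.ofReal (τ / gaussMass (quad (M θ))))

lemma measurable_lik (hΛ : Measurable Λ) (N : ℝ) (t : Fin d → ℝ) : Measurable (lik Λ N t) := by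
  have measurable_dot : Measurable fun h : Fin d → ℝ => t ⬝ᵥ h := by
    refine Continuous.measurable ?_
    fun_prop
  unfold lik
  fun_prop

lemma lik_pos (Λ : (Fin d → ℝ) → ℝ) (N : ℝ) (t θ : Fin d → ℝ) : 0 < lik Λ N t θ :=
  ENNReal.ofReal_pos.2 (Real.exp_pos _)

lemma indicator_lik_add (ρ : ℝ) (Λ : (Fin d → ℝ) → ℝ) (N : ℝ) (t θ h : Fin d → ℝ) :
    (Metric.closedBall 0 ρ).indicator (lik Λ N t) (θ + h) =
      lik Λ N t θ * ENNReal.ofReal (localLik ρ Λ N t θ h) := by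
  by_cases hh : ‖θ + h‖ ≤ ρ
  · rw [Set.indicator_of_mem (by simpa using hh), localLik_of_norm_le hh, lik, lik,
      ← ENNReal.ofReal_mul (Real.exp_nonneg _), ← Real.exp_add, dotProduct_add]
    congr 2
    ring
  · rw [Set.indicator_of_notMem (by simpa using hh), localLik_of_not_norm_le hh,
      ENNReal.ofReal_zero, mul_zero]

lemma postHockey_le_one (hΛ : Measurable Λ) (N τ : ℝ) (t : Fin d → ℝ) :
    postHockey ρ Λ M N τ t ≤ 1 := by
  refine (lintegral_mono fun θ => tsub_le_self).trans ?_
  simp_rw [div_eq_mul_inv]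
  rw [lintegral_mul_const _ (measurable_lik hΛ N t)]
  exact ENNReal.mul_inv_le_one _

lemma QuadApprox.setLIntegral_lik (H : QuadApprox ρ κ K C Λ ℓ M) (hN : 0 < N) {θ : Fin d → ℝ}
    (hθ : ‖θ‖ ≤ ρ) (t : Fin d → ℝ) :
    ∫⁻ φ in Metric.closedBall 0 ρ, lik Λ N t φ =
      lik Λ N t θ * ENNReal.ofReal (∫ h, localLik ρ Λ N t θ h) := by
  rw [← lintegral_indicator Metric.isClosed_closedBall.measurableSet,
    ← lintegral_add_left_eq_self _ θ]
  simp_rw [indicator_lik_add]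
  rw [lintegral_const_mul _ (measurable_localLik H.measurable N t θ).ennreal_ofReal,
    ofReal_integral_eq_lintegral_ofReal (H.integrable_localLik hN hθ t)
      (.of_forall (localLik_nonneg ρ Λ N t θ))]

lemma QuadApprox.postHockey_eq (H : QuadApprox ρ κ K C Λ ℓ M) (hN : 0 < N) {θ : Fin d → ℝ}
    (hθ : ‖θ‖ ≤ ρ) {τ : ℝ} (hτ : 0 ≤ τ) (t : Fin d → ℝ) :
    postHockey ρ Λ M N τ t =
      ∫⁻ h, ENNReal.ofReal (localLik ρ Λ N t θ h / (∫ h', localLik ρ Λ N t θ h') -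
        τ / gaussMass (quad (M (θ + h)))) := by
  rw [postHockey, H.setLIntegral_lik hN hθ t,
    ← lintegral_indicator Metric.isClosed_closedBall.measurableSet,
    ← lintegral_add_left_eq_self _ θ]
  refine lintegral_congr fun h => ?_
  have threshold_nonneg : 0 ≤ τ / gaussMass (quad (M (θ + h))) :=
    div_nonneg hτ (gaussMass_nonneg _)
  have shift := indicator_lik_add ρ Λ N t θ h
  by_cases hh : θ + h ∈ Metric.closedBall 0 ρ
  · rw [Set.indicator_of_mem hh] at shift ⊢
    rw [shift, ENNReal.ofReal_sub _ threshold_nonneg,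
      ENNReal.ofReal_div_of_pos (H.integral_localLik_pos hN hθ t),
      ENNReal.mul_div_mul_left _ _ (lik_pos Λ N t θ).ne' ENNReal.ofReal_ne_top]
  · rw [Set.indicator_of_notMem hh, localLik_of_not_norm_le (by simpa using hh), zero_div,
      ENNReal.ofReal_of_nonpos (by linarith)]

lemma exists_pow_mul_exp_neg_mul_le {c : ℝ} (hc : 0 < c) (k : ℕ) :
    ∃ A : ℝ, 0 ≤ A ∧ ∀ y : ℝ, 0 ≤ y → y ^ k * Real.exp (-(c * y)) ≤ A := by
  refine ⟨k.factorial / c ^ k, by positivity, fun y hy => ?_⟩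
  have pow_le := Real.pow_div_factorial_le_exp (c * y) (by positivity) k
  rw [Real.exp_neg, ← div_eq_mul_inv, div_le_div_iff₀ (Real.exp_pos _) (by positivity), ← mul_pow,
    mul_comm y]
  rwa [div_le_iff₀' (by positivity)] at pow_le

/-- The radius within which the posterior is compared to a Gaussian. The exponent balances the cubic
Taylor remainder `N * R ^ 3 = N ^ (-1 / 3)` against the Gaussian tail, since
`N * R ^ 2 = N ^ (1 / 9)` still tends to infinity. -/
noncomputable def locRadius (N : ℝ) : ℝ := N ^ (-(4 : ℝ) / 9)

lemma locRadius_pos (hN : 0 < N) : 0 < locRadius N := Real.rpow_pos_of_pos hN _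

lemma mul_locRadius_pow (hN : 0 < N) (k : ℕ) :
    N * locRadius N ^ k = N ^ (1 - 4 * (k : ℝ) / 9) := by
  rw [locRadius, ← Real.rpow_natCast, ← Real.rpow_mul hN.le, sub_eq_add_neg, Real.rpow_add hN,
    Real.rpow_one]
  ring_nf

lemma locRadius_le (hN : 1 ≤ N) : locRadius N ≤ N ^ (-(1 : ℝ) / 3) :=
  Real.rpow_le_rpow_of_exponent_le hN (by norm_num)

lemma exists_rpow_mul_exp_locRadius_le {c : ℝ} (hc : 0 < c) (d : ℕ) :
    ∃ A : ℝ, 0 ≤ A ∧ ∀ N : ℝ, 1 ≤ N →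
      N ^ ((d : ℝ) / 2) * Real.exp (-(c * (N * locRadius N ^ 2))) ≤ A * N ^ (-(1 : ℝ) / 3) := by
  obtain ⟨A, hA, le_A⟩ := exists_pow_mul_exp_neg_mul_le hc (9 * d + 3)
  refine ⟨A, hA, fun N hN => ?_⟩
  have N_pos : 0 < N := by linarith
  have rpow_le : N ^ ((d : ℝ) / 2) ≤ (N ^ ((1 : ℝ) / 9)) ^ (9 * d + 3) * N ^ (-(1 : ℝ) / 3) := by
    rw [← Real.rpow_natCast, ← Real.rpow_mul N_pos.le, ← Real.rpow_add N_pos]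
    refine Real.rpow_le_rpow_of_exponent_le hN ?_
    push_cast
    linarith [(Nat.cast_nonneg d : (0 : ℝ) ≤ d)]
  rw [mul_locRadius_pow N_pos, show (1 : ℝ) - 4 * (2 : ℕ) / 9 = 1 / 9 by norm_num]
  calc _ ≤ ((N ^ ((1 : ℝ) / 9)) ^ (9 * d + 3) * N ^ (-(1 : ℝ) / 3)) *
        Real.exp (-(c * N ^ ((1 : ℝ) / 9))) := by gcongr
    _ = ((N ^ ((1 : ℝ) / 9)) ^ (9 * d + 3) * Real.exp (-(c * N ^ ((1 : ℝ) / 9)))) *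
        N ^ (-(1 : ℝ) / 3) := by ring
    _ ≤ _ := by
        gcongr
        exact le_A _ (by positivity)

lemma exists_add_mul_exp_locRadius_le {c D E : ℝ} (hc : 0 < c) (hD : 0 ≤ D) (hE : 0 ≤ E) (d : ℕ) :
    ∃ A : ℝ, 0 ≤ A ∧ ∀ N : ℝ, 1 ≤ N →
      (D * N ^ ((d : ℝ) / 2) + E) * Real.exp (-(c * (N * locRadius N ^ 2))) ≤
        A * N ^ (-(1 : ℝ) / 3) := by
  obtain ⟨A, hA, le_A⟩ := exists_rpow_mul_exp_locRadius_le hc d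
  refine ⟨(D + E) * A, by positivity, fun N hN => ?_⟩
  have one_le : 1 ≤ N ^ ((d : ℝ) / 2) := Real.one_le_rpow hN (by positivity)
  calc (D * N ^ ((d : ℝ) / 2) + E) * Real.exp (-(c * (N * locRadius N ^ 2)))
      ≤ (D * N ^ ((d : ℝ) / 2) + E * N ^ ((d : ℝ) / 2)) *
          Real.exp (-(c * (N * locRadius N ^ 2))) := by
        gcongr
        exact le_mul_of_one_le_right hE one_le
    _ = (D + E) * (N ^ ((d : ℝ) / 2) * Real.exp (-(c * (N * locRadius N ^ 2)))) := by ring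
    _ ≤ (D + E) * (A * N ^ (-(1 : ℝ) / 3)) :=
        mul_le_mul_of_nonneg_left (le_A N hN) (add_nonneg hD hE)
    _ = _ := by ring

lemma QuadApprox.exists_postHockey_close (H : QuadApprox ρ κ K C Λ ℓ M) :
    ∃ A : ℝ, 0 ≤ A ∧ ∀ N : ℝ, 1 ≤ N → ∀ τ : ℝ, 0 ≤ τ → ∀ t θ : Fin d → ℝ,
      ‖θ‖ + locRadius N ≤ ρ → d * ‖t - ℓ θ‖ ≤ κ * locRadius N / 8 →
      postHockey ρ Λ M N τ t ≤
        gaussHockey (quad (M θ)) (N ^ (-(d : ℝ) / 2) * τ) +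
          ENNReal.ofReal (A * N ^ (-(1 : ℝ) / 3)) ∧
      gaussHockey (quad (M θ)) (N ^ (-(d : ℝ) / 2) * τ) ≤
        postHockey ρ Λ M N τ t + ENNReal.ofReal (A * N ^ (-(1 : ℝ) / 3)) := by
  have ρ_pos := H.ρ_pos
  have κ_pos := H.κ_pos
  have C_nonneg := H.C_nonneg
  have massMin_pos := gaussMass_mul_norm_sq_pos (d := d) H.K_pos
  obtain ⟨A₀, A₀_nonneg, tail_le⟩ := exists_add_mul_exp_locRadius_le (c := κ / 16)
    (D := (2 * ρ) ^ d / gaussMass fun h : Fin d → ℝ => K * ‖h‖ ^ 2) (E := 2 ^ ((d : ℝ) / 2))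
    (by positivity) (by positivity) (by positivity) d
  refine ⟨10 * (2 * C + d * C / κ / 2 + A₀), by positivity, fun N hN τ hτ t θ hθ ht => ?_⟩
  have N_pos : 0 < N := by linarith
  have radius_pos := locRadius_pos N_pos
  have hθρ : ‖θ‖ ≤ ρ := by linarith
  set w := N ^ (-(1 : ℝ) / 3)
  rcases le_total 1 (10 * (2 * C + d * C / κ / 2 + A₀) * w) with one_le_error | error_le_one
  · have one_le := ENNReal.one_le_ofReal.2 one_le_error
    exact ⟨((postHockey_le_one H.measurable N τ t).trans one_le).trans le_add_self,
      ((gaussHockey_le_one (integrable_exp_neg_quad κ_pos (H.lower θ hθρ)) (by positivity)).trans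
        one_le).trans le_add_self⟩
  · have cubic_eq : 2 * (N * C * locRadius N ^ 3) = 2 * C * w := by
      rw [mul_right_comm N C, mul_locRadius_pow N_pos,
        show (1 : ℝ) - 4 * (3 : ℕ) / 9 = -1 / 3 by norm_num]
      ring
    have lipschitz_le : d * (C * locRadius N / κ) / 2 ≤ d * C / κ / 2 * w := by
      calc d * (C * locRadius N / κ) / 2 = d * C / κ / 2 * locRadius N := by ring
        _ ≤ _ := by gcongr; exact locRadius_le hN
    have exponent_eq : κ / 16 * (N * locRadius N ^ 2) = N * κ * locRadius N ^ 2 / 16 := by ring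
    have terms_nonneg : 0 ≤ 2 * C * w ∧ 0 ≤ d * C / κ / 2 * w ∧ 0 ≤ A₀ * w :=
      ⟨by positivity, by positivity, by positivity⟩
    rw [H.postHockey_eq N_pos hθρ hτ, show 10 * (2 * C + d * C / κ / 2 + A₀) * w =
      10 * (2 * C * w + d * C / κ / 2 * w + A₀ * w) by ring]
    exact H.lintegral_hockey_localLik_close N_pos radius_pos hτ hθ ht cubic_eq.le (by linarith)
      lipschitz_le (by linarith) (exponent_eq ▸ tail_le N hN) (by linarith)

end Posterior

section LogMgf

lemma abs_exp_sub_quadratic_le (x : ℝ) :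
    |Real.exp x - 1 - x - x ^ 2 / 2| ≤ |x| ^ 3 * Real.exp |x| := by
  have remainder := Complex.norm_exp_sub_sum_le_norm_mul_exp (x : ℂ) 3
  simp only [Finset.sum_range_succ, Finset.sum_range_zero, Nat.factorial] at remainder
  rw [← Complex.ofReal_exp] at remainder
  norm_cast at remainder
  rw [Real.norm_eq_abs, Real.norm_eq_abs] at remainder
  refine le_of_eq_of_le ?_ remainder
  congr 1
  push_cast
  ring

lemma abs_log_one_add_sub_le {x : ℝ} (hx : |x| ≤ 1 / 2) :
    |Real.log (1 + x) - x| ≤ 2 * x ^ 2 := by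
  have remainder := Real.abs_log_sub_add_sum_range_le (x := -x) (by rw [abs_neg]; linarith) 1
  simp only [Finset.sum_range_one, sub_neg_eq_add, abs_neg] at remainder
  norm_num at remainder
  rw [sub_eq_neg_add]
  refine remainder.trans ?_
  rw [div_le_iff₀ (by linarith)]
  nlinarith [sq_nonneg x]

lemma abs_log_one_add_sub_half_le {D s m q : ℝ} (hs : 0 ≤ s) (hs_le : s ≤ 1)
    (hD : 3 * D * s ^ 2 ≤ 1) (hm : 0 ≤ m) (hm_le : m ≤ s ^ 2 * D) (hq : |q| ≤ s ^ 3 * D) :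
    |Real.log (1 + (m / 2 + q)) - m / 2| ≤ (D + 5 * D ^ 2) * s ^ 3 := by
  have quadratic_nonneg : 0 ≤ s ^ 2 * D := hm.trans hm_le
  have cubic_le : s ^ 3 * D ≤ s ^ 2 * D := by
    calc s ^ 3 * D = s * (s ^ 2 * D) := by ring
      _ ≤ _ := mul_le_of_le_one_left quadratic_nonneg hs_le
  have abs_le : |m / 2 + q| ≤ 3 / 2 * (s ^ 2 * D) := by
    refine (abs_add_le _ _).trans ?_
    rw [abs_of_nonneg (by positivity)]
    linarith
  have sq_le : (m / 2 + q) ^ 2 ≤ 9 / 4 * (D ^ 2 * s ^ 3) := by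
    calc (m / 2 + q) ^ 2 ≤ (3 / 2 * (s ^ 2 * D)) ^ 2 := sq_le_sq' (neg_le_of_abs_le abs_le)
          (le_of_abs_le abs_le)
      _ = 9 / 4 * (D ^ 2 * s ^ 3 * s) := by ring
      _ ≤ _ := by nlinarith [mul_nonneg (sq_nonneg D) (pow_nonneg hs 3)]
  calc |Real.log (1 + (m / 2 + q)) - m / 2|
      = |(Real.log (1 + (m / 2 + q)) - (m / 2 + q)) + q| := by congr 1; ring
    _ ≤ 2 * (m / 2 + q) ^ 2 + s ^ 3 * D :=
        (abs_add_le _ _).trans (add_le_add (abs_log_one_add_sub_le (by linarith)) hq)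
    _ ≤ _ := by nlinarith [mul_nonneg (sq_nonneg D) (pow_nonneg hs 3)]

/-- A constant `c` such that `y ^ 2` and `y ^ 3 * exp (b * y)` are at most `c * exp (2 * b * y)` for
`0 ≤ y`; it turns bounds on exponential moments into bounds on Taylor remainders. -/
noncomputable def momentConst (b : ℝ) : ℝ := 6 / b ^ 3 + 2 / b ^ 2

variable {b : ℝ}

lemma momentConst_pos (hb : 0 < b) : 0 < momentConst b := by
  unfold momentConst
  positivity

lemma sq_le_momentConst_mul_exp {y : ℝ} (hb : 0 < b) (hy : 0 ≤ y) :
    y ^ 2 ≤ momentConst b * Real.exp (2 * b * y) := by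
  calc y ^ 2 = 2 / b ^ 2 * ((b * y) ^ 2 / (Nat.factorial 2 : ℕ)) := by
        simp only [Nat.factorial]
        push_cast
        field_simp
    _ ≤ 2 / b ^ 2 * Real.exp (b * y) := by
        gcongr
        exact Real.pow_div_factorial_le_exp (b * y) (by positivity) 2
    _ ≤ momentConst b * Real.exp (2 * b * y) := by
        unfold momentConst
        gcongr
        · exact le_add_of_nonneg_left (by positivity)
        · linarith

lemma pow_three_mul_exp_le_momentConst_mul_exp {y : ℝ} (hb : 0 < b) (hy : 0 ≤ y) :
    y ^ 3 * Real.exp (b * y) ≤ momentConst b * Real.exp (2 * b * y) := by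
  calc y ^ 3 * Real.exp (b * y)
      = 6 / b ^ 3 * ((b * y) ^ 3 / (Nat.factorial 3 : ℕ)) * Real.exp (b * y) := by
        simp only [Nat.factorial]
        push_cast
        field_simp
    _ ≤ momentConst b * Real.exp (b * y) * Real.exp (b * y) := by
        unfold momentConst
        gcongr
        · exact le_add_of_nonneg_right (by positivity)
        · exact Real.pow_div_factorial_le_exp (b * y) (by positivity) 3
    _ = momentConst b * Real.exp (2 * b * y) := by
        rw [mul_assoc, ← Real.exp_add]
        ring_nf

variable {X : Type*} [MeasurableSpace X] {P : Measure X} {W Y : X → ℝ} {B s : ℝ}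

lemma integrable_sq_of_exp_moment (hW : Measurable W) (hb : 0 < b) (hY : ∀ x, 0 ≤ Y x)
    (hWY : ∀ x, |W x| ≤ s * Y x) (hint : Integrable (fun x => Real.exp (2 * b * Y x)) P) :
    Integrable (fun x => W x ^ 2) P ∧
      ∫ x, W x ^ 2 ∂P ≤ s ^ 2 * (momentConst b * ∫ x, Real.exp (2 * b * Y x) ∂P) := by
  have sq_le (x : X) : W x ^ 2 ≤ s ^ 2 * (momentConst b * Real.exp (2 * b * Y x)) := by
    calc W x ^ 2 = |W x| ^ 2 := (sq_abs _).symm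
      _ ≤ (s * Y x) ^ 2 := pow_le_pow_left₀ (abs_nonneg _) (hWY x) 2
      _ = s ^ 2 * Y x ^ 2 := mul_pow ..
      _ ≤ _ := by
          gcongr
          exact sq_le_momentConst_mul_exp hb (hY x)
  have integrable_bound := (hint.const_mul (momentConst b)).const_mul (s ^ 2)
  have integrable_sq : Integrable (fun x => W x ^ 2) P :=
    integrable_bound.mono' (by fun_prop) (.of_forall fun x =>
      (Real.norm_of_nonneg (sq_nonneg _)).trans_le (sq_le x))
  refine ⟨integrable_sq, (integral_mono integrable_sq integrable_bound sq_le).trans_eq ?_⟩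
  rw [integral_const_mul, integral_const_mul]

lemma abs_integral_exp_sub_le [IsProbabilityMeasure P] (hW : Measurable W) (hb : 0 < b)
    (hs : 0 ≤ s) (hsb : s ≤ b) (hY : ∀ x, 0 ≤ Y x) (hWY : ∀ x, |W x| ≤ s * Y x)
    (hint : Integrable (fun x => Real.exp (2 * b * Y x)) P) (hWi : Integrable W P)
    (hW₀ : ∫ x, W x ∂P = 0) :
    |∫ x, Real.exp (W x) ∂P - (1 + (∫ x, W x ^ 2 ∂P) / 2)| ≤
      s ^ 3 * (momentConst b * ∫ x, Real.exp (2 * b * Y x) ∂P) := by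
  have integrable_sq := (integrable_sq_of_exp_moment hW hb hY hWY hint).1
  have remainder_le (x : X) : |Real.exp (W x) - 1 - W x - W x ^ 2 / 2| ≤
      s ^ 3 * (momentConst b * Real.exp (2 * b * Y x)) := by
    have abs_le : |W x| ≤ b * Y x := (hWY x).trans (mul_le_mul_of_nonneg_right hsb (hY x))
    have Y_nonneg := hY x
    calc |Real.exp (W x) - 1 - W x - W x ^ 2 / 2| ≤ |W x| ^ 3 * Real.exp |W x| :=
          abs_exp_sub_quadratic_le _
      _ ≤ (s * Y x) ^ 3 * Real.exp (b * Y x) := by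
          gcongr
          exact hWY x
      _ = s ^ 3 * (Y x ^ 3 * Real.exp (b * Y x)) := by ring
      _ ≤ _ := mul_le_mul_of_nonneg_left
          (pow_three_mul_exp_le_momentConst_mul_exp hb (hY x)) (by positivity)
  have integrable_bound := (hint.const_mul (momentConst b)).const_mul (s ^ 3)
  have integrable_remainder : Integrable (fun x => Real.exp (W x) - 1 - W x - W x ^ 2 / 2) P :=
    integrable_bound.mono' (by fun_prop) (.of_forall fun x =>
      (Real.norm_eq_abs _).trans_le (remainder_le x))
  have integral_eq : ∫ x, Real.exp (W x) ∂P - (1 + (∫ x, W x ^ 2 ∂P) / 2) =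
      ∫ x, (Real.exp (W x) - 1 - W x - W x ^ 2 / 2) ∂P := by
    have expansion : ∫ x, Real.exp (W x) ∂P =
        ∫ x, (1 + W x + W x ^ 2 / 2 + (Real.exp (W x) - 1 - W x - W x ^ 2 / 2)) ∂P := by
      congr 1; ext x; ring
    rw [expansion, integral_add (by fun_prop) integrable_remainder,
      integral_add (by fun_prop) (by fun_prop), integral_add (by fun_prop) hWi, integral_div, hW₀]
    simp
  rw [integral_eq]
  refine (norm_integral_le_of_norm_le integrable_bound (.of_forall fun x =>
    (Real.norm_eq_abs _).trans_le (remainder_le x))).trans_eq ?_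
  rw [integral_const_mul, integral_const_mul]

lemma abs_log_mgf_sub_le [IsProbabilityMeasure P] (hW : Measurable W) (hb : 0 < b) (hs : 0 ≤ s)
    (hsb : s ≤ b) (hs_le : s ≤ 1) (hY : ∀ x, 0 ≤ Y x) (hWY : ∀ x, |W x| ≤ s * Y x)
    (hint : Integrable (fun x => Real.exp (2 * b * Y x)) P)
    (hB : ∫ x, Real.exp (2 * b * Y x) ∂P ≤ B) (hsB : 3 * (momentConst b * B) * s ^ 2 ≤ 1)
    (hWi : Integrable W P) (hW₀ : ∫ x, W x ∂P = 0) :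
    |Real.log (∫ x, Real.exp (W x) ∂P) - (∫ x, W x ^ 2 ∂P) / 2| ≤
      (momentConst b * B + 5 * (momentConst b * B) ^ 2) * s ^ 3 := by
  have const_nonneg := (momentConst_pos hb).le
  have moment_le : momentConst b * ∫ x, Real.exp (2 * b * Y x) ∂P ≤ momentConst b * B := by
    gcongr
  rw [← add_sub_cancel (1 + (∫ x, W x ^ 2 ∂P) / 2) (∫ x, Real.exp (W x) ∂P), add_assoc]
  exact abs_log_one_add_sub_half_le hs hs_le hsB (integral_nonneg fun x => sq_nonneg _)
    ((integrable_sq_of_exp_moment hW hb hY hWY hint).2.trans (by gcongr))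
    ((abs_integral_exp_sub_le hW hb hs hsb hY hWY hint hWi hW₀).trans (by gcongr))

end LogMgf

section SecondDifference

variable {d : ℕ} {r C : ℝ} {Λ : (Fin d → ℝ) → ℝ} {ℓ : (Fin d → ℝ) → Fin d → ℝ}
  {M : (Fin d → ℝ) → Matrix (Fin d) (Fin d) ℝ} {θ θ' : Fin d → ℝ}

lemma quad_neg (A : Matrix (Fin d) (Fin d) ℝ) (x : Fin d → ℝ) : quad A (-x) = quad A x := by
  simpa using quad_smul A (-1) x

lemma quad_add_add_quad_sub (A : Matrix (Fin d) (Fin d) ℝ) (x y : Fin d → ℝ) :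
    quad A (x + y) + quad A (x - y) = 2 * quad A x + 2 * quad A y := by
  simp only [quad, Matrix.mulVec_sub, Matrix.mulVec_add, dotProduct_sub, sub_dotProduct,
    dotProduct_add, add_dotProduct]
  ring

-- `quad (M θ') u` is a second difference of `Λ` at `θ'`. Expanding its three terms at `θ` instead
-- and using the parallelogram law yields `quad (M θ) u`.
lemma quad_le_of_taylor_of_norm_eq (hC : 0 ≤ C)
    (taylor : ∀ θ h, ‖θ‖ ≤ r → ‖θ + h‖ ≤ r →
      |Λ (θ + h) - Λ θ - ℓ θ ⬝ᵥ h - quad (M θ) h / 2| ≤ C * ‖h‖ ^ 3)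
    (hθ : ‖θ‖ ≤ r / 3) (hθ' : ‖θ'‖ ≤ r / 3) {u : Fin d → ℝ} (hu : ‖u‖ = ‖θ' - θ‖) :
    quad (M θ') u ≤ quad (M θ) u + 20 * C * ‖θ' - θ‖ ^ 3 := by
  have r_nonneg : 0 ≤ r := by linarith [norm_nonneg θ]
  set v := θ' - θ with v_def
  have norm_v_le : ‖v‖ ≤ 2 * r / 3 := (norm_sub_le _ _).trans (by linarith)
  have norm_add_le_r : ‖θ' + u‖ ≤ r := (norm_add_le _ _).trans (by linarith)
  have norm_sub_le_r : ‖θ' + -u‖ ≤ r := (norm_add_le _ _).trans (by rw [norm_neg]; linarith)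
  have base_add : θ + (v + u) = θ' + u := by rw [v_def]; abel
  have base_sub : θ + (v - u) = θ' + -u := by rw [v_def]; abel
  have base : θ + v = θ' := by rw [v_def]; abel
  have taylor_add := taylor θ' u (by linarith) norm_add_le_r
  have taylor_sub := taylor θ' (-u) (by linarith) norm_sub_le_r
  have taylor_base_add := taylor θ (v + u) (by linarith) (by rwa [base_add])
  have taylor_base_sub := taylor θ (v - u) (by linarith) (by rwa [base_sub])
  have taylor_base := taylor θ v (by linarith) (by rw [base]; linarith)
  rw [base_add, dotProduct_add] at taylor_base_add
  rw [base_sub, dotProduct_sub] at taylor_base_sub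
  rw [base] at taylor_base
  rw [quad_neg, norm_neg, dotProduct_neg] at taylor_sub
  have cubic_le {z : Fin d → ℝ} (hz : ‖z‖ ≤ 2 * ‖v‖) : C * ‖z‖ ^ 3 ≤ C * (8 * ‖v‖ ^ 3) := by
    calc C * ‖z‖ ^ 3 ≤ C * (2 * ‖v‖) ^ 3 := by gcongr
      _ = _ := by ring
  have cubic_add_le := cubic_le ((norm_add_le v u).trans (by linarith))
  have cubic_sub_le := cubic_le ((norm_sub_le v u).trans (by linarith))
  rw [hu] at taylor_add taylor_sub
  rw [abs_le] at taylor_add taylor_sub taylor_base_add taylor_base_sub taylor_base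
  linarith [taylor_add.2, taylor_sub.2, taylor_base_add.1, taylor_base_sub.1, taylor_base.1,
    taylor_add.1, taylor_sub.1, taylor_base_add.2, taylor_base_sub.2, taylor_base.2,
    quad_add_add_quad_sub (M θ) v u]

lemma quad_lipschitz_of_taylor (hC : 0 ≤ C)
    (taylor : ∀ θ h, ‖θ‖ ≤ r → ‖θ + h‖ ≤ r →
      |Λ (θ + h) - Λ θ - ℓ θ ⬝ᵥ h - quad (M θ) h / 2| ≤ C * ‖h‖ ^ 3)
    (hθ : ‖θ‖ ≤ r / 3) (hθ' : ‖θ'‖ ≤ r / 3) (h : Fin d → ℝ) :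
    quad (M θ') h ≤ quad (M θ) h + 20 * C * ‖θ' - θ‖ * ‖h‖ ^ 2 := by
  rcases eq_or_ne h 0 with rfl | h_ne
  · simp [quad]
  rcases eq_or_ne θ' θ with rfl | θ_ne
  · simp
  have norm_h_pos : 0 < ‖h‖ := norm_pos_iff.2 h_ne
  have norm_sub_pos : 0 < ‖θ' - θ‖ := norm_pos_iff.2 (sub_ne_zero.2 θ_ne)
  set s := ‖θ' - θ‖ / ‖h‖ with s_def
  have s_pos : 0 < s := by positivity
  have scaled := quad_le_of_taylor_of_norm_eq hC taylor hθ hθ' (u := s • h)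
    (by rw [norm_smul, Real.norm_of_nonneg s_pos.le, div_mul_cancel₀ _ norm_h_pos.ne'])
  rw [quad_smul, quad_smul] at scaled
  refine le_of_mul_le_mul_left (scaled.trans_eq ?_) (pow_pos s_pos 2)
  rw [s_def]
  field_simp

lemma exists_quad_lower_bound (A : Matrix (Fin d) (Fin d) ℝ) (hA : ∀ h, h ≠ 0 → 0 < quad A h) :
    ∃ κ : ℝ, 0 < κ ∧ ∀ h, κ * ‖h‖ ^ 2 ≤ quad A h := by
  rcases subsingleton_or_nontrivial (Fin d → ℝ) with _ | _
  · exact ⟨1, one_pos, fun h => by simp [Subsingleton.elim h 0, quad]⟩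
  obtain ⟨u, hu, u_min⟩ := (isCompact_sphere (0 : Fin d → ℝ) 1).exists_isMinOn
    (NormedSpace.sphere_nonempty.2 zero_le_one) (continuous_quad A).continuousOn
  refine ⟨quad A u, hA u (ne_zero_of_mem_unit_sphere ⟨u, hu⟩), fun h => ?_⟩
  rcases eq_or_ne h 0 with rfl | h_ne
  · simp [quad]
  have normalized_mem : ‖h‖⁻¹ • h ∈ Metric.sphere 0 1 := by
    rw [mem_sphere_zero_iff_norm, norm_smul, norm_inv, norm_norm,
      inv_mul_cancel₀ (norm_ne_zero_iff.2 h_ne)]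
  have min_le : quad A u ≤ quad A (‖h‖⁻¹ • h) := u_min normalized_mem
  rwa [quad_smul, inv_pow, inv_mul_eq_div, le_div_iff₀ (by positivity)] at min_le

end SecondDifference

section Tilting

variable {X : Type*} [MeasurableSpace X] {d : ℕ} {Q : Measure X} {b B : ℝ}

section NormMoment

variable {E : Type*} [NormedAddCommGroup E] {f : X → E}

lemma integrable_of_exp_norm (hf : AEStronglyMeasurable f Q) (hb : 0 < b)
    (hint : Integrable (fun x => Real.exp (b * ‖f x‖)) Q) : Integrable f Q :=
  (hint.div_const b).mono' hf (.of_forall fun x => by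
    rw [le_div_iff₀ hb]; linarith [Real.add_one_le_exp (b * ‖f x‖)])

lemma norm_integral_le_of_exp_norm [NormedSpace ℝ E] (hb : 0 < b)
    (hint : Integrable (fun x => Real.exp (b * ‖f x‖)) Q) :
    ‖∫ x, f x ∂Q‖ ≤ (∫ x, Real.exp (b * ‖f x‖) ∂Q) / b := by
  rw [← integral_div]
  refine norm_integral_le_of_norm_le (hint.div_const b) (.of_forall fun x => ?_)
  rw [le_div_iff₀ hb]
  linarith [Real.add_one_le_exp (b * ‖f x‖)]

lemma memLp_two_of_exp_norm (hf : AEStronglyMeasurable f Q) (hb : 0 < b)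
    (hint : Integrable (fun x => Real.exp (2 * b * ‖f x‖)) Q) : MemLp f 2 Q := by
  rw [memLp_two_iff_integrable_sq_norm hf]
  refine (hint.const_mul (momentConst b)).mono' (hf.norm.pow 2) (.of_forall fun x => ?_)
  rw [Real.norm_of_nonneg (sq_nonneg _)]
  exact sq_le_momentConst_mul_exp hb (norm_nonneg _)

end NormMoment

variable {T : X → Fin d → ℝ}

lemma integral_dotProduct (hT : Integrable T Q) (h : Fin d → ℝ) :
    ∫ x, h ⬝ᵥ T x ∂Q = h ⬝ᵥ ∫ x, T x ∂Q := by
  simp only [dotProduct]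
  rw [integral_finsetSum _ fun i _ => (hT.eval i).const_mul _]
  simp_rw [integral_const_mul, eval_integral hT.eval]

/-- The covariance matrix of the random vector `T` under `Q`. -/
noncomputable def covarianceMatrix (Q : Measure X) (T : X → Fin d → ℝ) :
    Matrix (Fin d) (Fin d) ℝ :=
  Matrix.of fun i j => cov[fun x => T x i, fun x => T x j; Q]

lemma covarianceMatrix_isSymm (Q : Measure X) (T : X → Fin d → ℝ) :
    (covarianceMatrix Q T).IsSymm := by
  ext i j
  exact covariance_comm _ _

lemma quad_covarianceMatrix [IsFiniteMeasure Q] (hT : MemLp T 2 Q) (h : Fin d → ℝ) :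
    quad (covarianceMatrix Q T) h = Var[fun x => h ⬝ᵥ T x; Q] := by
  have memLp_mul (i : Fin d) : MemLp (fun x => h i * T x i) 2 Q := (hT.eval i).const_mul (h i)
  simp only [dotProduct]
  rw [variance_fun_sum memLp_mul]
  simp only [quad, covarianceMatrix, dotProduct, Matrix.mulVec, Matrix.of_apply, Finset.mul_sum,
    covariance_const_mul_left, covariance_const_mul_right]
  exact Finset.sum_congr rfl fun i _ => Finset.sum_congr rfl fun j _ => by ring

lemma quad_covarianceMatrix_pos [IsFiniteMeasure Q] (hT : MemLp T 2 Q) {h : Fin d → ℝ}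
    (hh : ∀ c : ℝ, ¬ ∀ᵐ x ∂Q, h ⬝ᵥ T x = c) : 0 < quad (covarianceMatrix Q T) h := by
  rw [quad_covarianceMatrix hT]
  refine (variance_nonneg _ _).lt_of_ne' fun variance_eq =>
    hh (∫ x, h ⬝ᵥ T x ∂Q) (ae_eq_integral_of_variance_eq_zero ?_ variance_eq)
  exact memLp_finsetSum _ fun i _ => (hT.eval i).const_mul (h i)

lemma quad_covarianceMatrix_eq_integral [IsProbabilityMeasure Q] (hT : MemLp T 2 Q)
    (h : Fin d → ℝ) :
    quad (covarianceMatrix Q T) h = ∫ x, (h ⬝ᵥ (T x - ∫ y, T y ∂Q)) ^ 2 ∂Q := by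
  have aemeasurable : AEMeasurable (fun x => h ⬝ᵥ T x) Q := by
    have := hT.aestronglyMeasurable.aemeasurable
    simp only [dotProduct]; fun_prop
  rw [quad_covarianceMatrix hT, variance_eq_integral aemeasurable,
    integral_dotProduct (hT.integrable one_le_two)]
  simp_rw [dotProduct_sub]

lemma abs_dotProduct_sub_integral_le (hb : 0 < b)
    (hint : Integrable (fun x => Real.exp (2 * b * ‖T x‖)) Q)
    (hB : ∫ x, Real.exp (2 * b * ‖T x‖) ∂Q ≤ B) (h : Fin d → ℝ) (x : X) :
    |h ⬝ᵥ (T x - ∫ y, T y ∂Q)| ≤ d * ‖h‖ * (‖T x‖ + B / (2 * b)) := by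
  refine (abs_dotProduct_le _ _).trans ?_
  gcongr
  refine (norm_sub_le _ _).trans (add_le_add le_rfl ?_)
  exact (norm_integral_le_of_exp_norm (by positivity) hint).trans (by gcongr)

lemma integral_exp_norm_add_le (hb : 0 < b)
    (hint : Integrable (fun x => Real.exp (2 * b * ‖T x‖)) Q)
    (hB : ∫ x, Real.exp (2 * b * ‖T x‖) ∂Q ≤ B) :
    Integrable (fun x => Real.exp (2 * b * (‖T x‖ + B / (2 * b)))) Q ∧
      ∫ x, Real.exp (2 * b * (‖T x‖ + B / (2 * b))) ∂Q ≤ Real.exp B * B := by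
  have exp_eq (x : X) : Real.exp (2 * b * (‖T x‖ + B / (2 * b))) =
      Real.exp B * Real.exp (2 * b * ‖T x‖) := by
    rw [← Real.exp_add]; congr 1; field_simp; ring
  simp_rw [exp_eq, integral_const_mul]
  exact ⟨hint.const_mul _, by gcongr⟩

lemma quad_covarianceMatrix_le [IsProbabilityMeasure Q] (hT : Measurable T) (hb : 0 < b)
    (hint : Integrable (fun x => Real.exp (2 * b * ‖T x‖)) Q)
    (hB : ∫ x, Real.exp (2 * b * ‖T x‖) ∂Q ≤ B) (h : Fin d → ℝ) :
    quad (covarianceMatrix Q T) h ≤ (d * ‖h‖) ^ 2 * (momentConst b * (Real.exp B * B)) := by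
  have B_nonneg : 0 ≤ B := (integral_nonneg fun x => (Real.exp_pos _).le).trans hB
  have const_nonneg := (momentConst_pos hb).le
  obtain ⟨hint', hB'⟩ := integral_exp_norm_add_le hb hint hB
  rw [quad_covarianceMatrix_eq_integral
    (memLp_two_of_exp_norm hT.aestronglyMeasurable hb hint)]
  refine (integrable_sq_of_exp_moment (by unfold dotProduct; fun_prop) hb
    (fun x => by positivity) (abs_dotProduct_sub_integral_le hb hint hB h) hint').2.trans ?_
  gcongr

lemma abs_log_centered_mgf_sub_le [IsProbabilityMeasure Q] (hT : Measurable T) (hb : 0 < b)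
    (hint : Integrable (fun x => Real.exp (2 * b * ‖T x‖)) Q)
    (hB : ∫ x, Real.exp (2 * b * ‖T x‖) ∂Q ≤ B) {D : ℝ} (hD : momentConst b * (Real.exp B * B) = D)
    {h : Fin d → ℝ} (hhb : d * ‖h‖ ≤ b) (hh_le : d * ‖h‖ ≤ 1) (hhD : 3 * D * (d * ‖h‖) ^ 2 ≤ 1) :
    |Real.log (∫ x, Real.exp (h ⬝ᵥ (T x - ∫ y, T y ∂Q)) ∂Q) - quad (covarianceMatrix Q T) h / 2| ≤
      (D + 5 * D ^ 2) * (d * ‖h‖) ^ 3 := by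
  subst hD
  have B_nonneg : 0 ≤ B := (integral_nonneg fun x => (Real.exp_pos _).le).trans hB
  have integrable_T := integrable_of_exp_norm hT.aestronglyMeasurable (by positivity) hint
  have integrable_sub := integrable_T.sub (integrable_const (∫ y, T y ∂Q))
  obtain ⟨hint', hB'⟩ := integral_exp_norm_add_le hb hint hB
  rw [quad_covarianceMatrix_eq_integral
    (memLp_two_of_exp_norm hT.aestronglyMeasurable hb hint)]
  refine abs_log_mgf_sub_le (by unfold dotProduct; fun_prop) hb (by positivity) hhb hh_le
    (fun x => by positivity) (abs_dotProduct_sub_integral_le hb hint hB h) hint' hB' hhD ?_ ?_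
  · exact integrable_finsetSum _ fun i _ => (integrable_sub.eval i).const_mul (h i)
  · refine (integral_dotProduct integrable_sub h).trans ?_
    simp [integral_sub integrable_T (integrable_const _)]

section Tilted

variable {P : Measure X} {a : ℝ} {η : Fin d → ℝ}

lemma integral_exp_tilted_le [IsProbabilityMeasure P] {f g : X → ℝ} (hf : Measurable f)
    (hg : Measurable g) (hfg : ∀ x, |f x| ≤ g x)
    (hint : Integrable (fun x => Real.exp (2 * g x)) P) :
    Integrable (fun x => Real.exp (g x)) (P.tilted f) ∧
      ∫ x, Real.exp (g x) ∂(P.tilted f) ≤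
        (∫ x, Real.exp (2 * g x) ∂P) / ∫ x, Real.exp (-g x) ∂P := by
  have g_nonneg (x : X) : 0 ≤ g x := (abs_nonneg _).trans (hfg x)
  have exp_add_le (x : X) : Real.exp ((f + g) x) ≤ Real.exp (2 * g x) :=
    Real.exp_le_exp.2 (by simpa [two_mul] using le_of_abs_le (hfg x))
  have integrable_exp_neg : Integrable (fun x => Real.exp (-g x)) P :=
    (integrable_const (1 : ℝ)).mono' (by fun_prop) (.of_forall fun x => by
      simpa [Real.norm_of_nonneg (Real.exp_nonneg _)] using g_nonneg x)
  have integrable_exp_f : Integrable (fun x => Real.exp (f x)) P :=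
    hint.mono' (by fun_prop) (.of_forall fun x => by
      rw [Real.norm_of_nonneg (Real.exp_nonneg _), Real.exp_le_exp]
      linarith [le_of_abs_le (hfg x), g_nonneg x])
  have integrable_exp_add : Integrable (fun x => Real.exp ((f + g) x)) P :=
    hint.mono' (by fun_prop) (.of_forall fun x =>
      (Real.norm_of_nonneg (Real.exp_nonneg _)).trans_le (exp_add_le x))
  constructor
  · rw [integrable_tilted_iff integrable_exp_f]
    simpa only [smul_eq_mul, ← Real.exp_add] using! integrable_exp_add
  · rw [integral_exp_tilted]
    exact div_le_div₀ (integral_nonneg fun x => (Real.exp_pos _).le)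
      (integral_mono integrable_exp_add hint exp_add_le) (integral_exp_pos integrable_exp_neg)
      (integral_mono integrable_exp_neg integrable_exp_f fun x =>
        Real.exp_le_exp.2 (neg_le_of_abs_le (hfg x)))

lemma measurable_dotProduct (hT : Measurable T) (η : Fin d → ℝ) :
    Measurable fun x => η ⬝ᵥ T x := by
  unfold dotProduct; fun_prop

lemma integrable_exp_dotProduct (hT : Measurable T)
    (hint : Integrable (fun x => Real.exp (a * ‖T x‖)) P) (hη : d * ‖η‖ ≤ a) :
    Integrable (fun x => Real.exp (η ⬝ᵥ T x)) P := by
  refine hint.mono' (measurable_dotProduct hT η).exp.aestronglyMeasurable (.of_forall fun x => ?_)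
  rw [Real.norm_of_nonneg (Real.exp_nonneg _), Real.exp_le_exp]
  exact (le_abs_self _).trans ((abs_dotProduct_le _ _).trans (by gcongr))

lemma exists_tilted_exp_moment_bound [IsProbabilityMeasure P] (hT : Measurable T)
    (hint : Integrable (fun x => Real.exp (2 * a * ‖T x‖)) P) :
    ∃ B : ℝ, ∀ η : Fin d → ℝ, d * ‖η‖ ≤ a →
      Integrable (fun x => Real.exp (a * ‖T x‖)) (P.tilted fun x => η ⬝ᵥ T x) ∧
        ∫ x, Real.exp (a * ‖T x‖) ∂(P.tilted fun x => η ⬝ᵥ T x) ≤ B := by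
  simp_rw [mul_assoc] at hint
  exact ⟨_, fun η hη => integral_exp_tilted_le (measurable_dotProduct hT η) (by fun_prop)
    (fun x => (abs_dotProduct_le _ _).trans (by gcongr)) hint⟩

/-- The cumulant generating function `η ↦ log E_P exp(η ⬝ᵥ T)` of the statistic `T`. -/
noncomputable def logMgf (P : Measure X) (T : X → Fin d → ℝ) (η : Fin d → ℝ) : ℝ :=
  Real.log (∫ x, Real.exp (η ⬝ᵥ T x) ∂P)

/-- The mean of `T` under the exponential tilting of `P` by `η`: the gradient of `logMgf P T`. -/
noncomputable def tiltMean (P : Measure X) (T : X → Fin d → ℝ) (η : Fin d → ℝ) : Fin d → ℝ :=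
  ∫ x, T x ∂(P.tilted fun x => η ⬝ᵥ T x)

/-- The covariance matrix of `T` under the exponential tilting of `P` by `η`: the Hessian of
`logMgf P T`. -/
noncomputable def tiltCov (P : Measure X) (T : X → Fin d → ℝ) (η : Fin d → ℝ) :
    Matrix (Fin d) (Fin d) ℝ :=
  covarianceMatrix (P.tilted fun x => η ⬝ᵥ T x) T

lemma measurable_logMgf [SFinite P] (hT : Measurable T) : Measurable (logMgf P T) := by
  have joint : Measurable fun p : (Fin d → ℝ) × X => Real.exp (p.1 ⬝ᵥ T p.2) := by
    unfold dotProduct; fun_prop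
  exact (joint.stronglyMeasurable.integral_prod_right (ν := P)).measurable.log

lemma log_integral_exp_dotProduct_sub_tilted [NeZero P] {h : Fin d → ℝ}
    (hη : Integrable (fun x => Real.exp (η ⬝ᵥ T x)) P)
    (hηh : Integrable (fun x => Real.exp ((η + h) ⬝ᵥ T x)) P) (m : Fin d → ℝ) :
    Real.log (∫ x, Real.exp (h ⬝ᵥ (T x - m)) ∂(P.tilted fun x => η ⬝ᵥ T x)) =
      logMgf P T (η + h) - logMgf P T η - m ⬝ᵥ h := by
  have num_ne := (integral_exp_pos hηh).ne'
  have denom_ne := (integral_exp_pos hη).ne'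
  simp_rw [dotProduct_sub, Real.exp_sub]
  rw [integral_div, integral_exp_tilted]
  simp only [Pi.add_apply, ← add_dotProduct]
  rw [Real.log_div (div_ne_zero num_ne denom_ne) (Real.exp_ne_zero _),
    Real.log_div num_ne denom_ne, Real.log_exp, dotProduct_comm h, logMgf, logMgf]

lemma exists_radius {D : ℝ} (d : ℕ) (hb : 0 < b) (hD : 0 ≤ D) :
    ∃ r : ℝ, 0 < r ∧ 2 * d * r ≤ b ∧ 2 * d * r ≤ 1 ∧ 3 * D * (2 * d * r) ^ 2 ≤ 1 := by
  set s := min b (1 / (1 + 3 * D))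
  have s_pos : 0 < s := lt_min hb (by positivity)
  have s_mul_le : s * (1 + 3 * D) ≤ 1 := (le_div_iff₀ (by positivity)).1 (min_le_right _ _)
  have s_le_one : s ≤ 1 := by nlinarith
  have radius_le : 2 * d * (s / (2 * (d + 1))) ≤ s := by
    rw [show 2 * d * (s / (2 * (d + 1))) = d / (d + 1) * s by field_simp]
    exact mul_le_of_le_one_left s_pos.le ((div_le_one (by positivity)).2 (by linarith))
  refine ⟨s / (2 * (d + 1)), by positivity, radius_le.trans (min_le_left _ _),
    radius_le.trans s_le_one, ?_⟩
  calc 3 * D * (2 * d * (s / (2 * (d + 1)))) ^ 2 ≤ 3 * D * s ^ 2 := by gcongr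
    _ ≤ 1 := by nlinarith

lemma exists_logMgf_taylor [IsProbabilityMeasure P] (hT : Measurable T) (ha : 0 < a)
    (hint : Integrable (fun x => Real.exp (a * ‖T x‖)) P) :
    ∃ r C D : ℝ, 0 < r ∧ 0 ≤ C ∧ d * r ≤ a ∧
      (∀ η, ‖η‖ ≤ r → ∀ h, quad (tiltCov P T η) h ≤ D * ‖h‖ ^ 2) ∧
      ∀ η h, ‖η‖ ≤ r → ‖η + h‖ ≤ r →
        |logMgf P T (η + h) - logMgf P T η - tiltMean P T η ⬝ᵥ h - quad (tiltCov P T η) h / 2| ≤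
          C * ‖h‖ ^ 3 := by
  obtain ⟨b, hb, rfl⟩ : ∃ b, 0 < b ∧ 2 * (2 * b) = a := ⟨a / 4, by positivity, by ring⟩
  obtain ⟨B, hB⟩ := exists_tilted_exp_moment_bound hT hint
  have B_nonneg : 0 ≤ B := (integral_nonneg fun x => (Real.exp_pos _).le).trans
    (hB 0 (by simpa using hb.le)).2
  have const_nonneg := (momentConst_pos hb).le
  set D := momentConst b * (Real.exp B * B) with D_def
  have D_nonneg : 0 ≤ D := by positivity
  obtain ⟨r, r_pos, hrb, hr_le, hrD⟩ := exists_radius d hb D_nonneg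
  have mul_norm_le {z : Fin d → ℝ} (hz : ‖z‖ ≤ r) : d * ‖z‖ ≤ 2 * (2 * b) := by
    nlinarith [mul_le_mul_of_nonneg_left hz d.cast_nonneg]
  have exp_moment {η : Fin d → ℝ} (hη : ‖η‖ ≤ r) := hB η
    (by nlinarith [mul_le_mul_of_nonneg_left hη d.cast_nonneg])
  have isProbability {η : Fin d → ℝ} (hη : ‖η‖ ≤ r) :
      IsProbabilityMeasure (P.tilted fun x => η ⬝ᵥ T x) :=
    isProbabilityMeasure_tilted (integrable_exp_dotProduct hT hint (mul_norm_le hη))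
  refine ⟨r, (D + 5 * D ^ 2) * d ^ 3, d ^ 2 * D, r_pos, by positivity, by nlinarith,
    fun η hη h => ?_, fun η h hη hηh => ?_⟩
  · have := isProbability hη
    exact (quad_covarianceMatrix_le hT hb (exp_moment hη).1 (exp_moment hη).2 h).trans_eq
      (by rw [← D_def]; ring)
  · have := isProbability hη
    have norm_h_le : ‖h‖ ≤ 2 * r := by
      simpa [two_mul] using (norm_sub_le (η + h) η).trans (add_le_add hηh hη)
    have mul_norm_h_le : d * ‖h‖ ≤ 2 * d * r := by
      linarith [mul_le_mul_of_nonneg_left norm_h_le (Nat.cast_nonneg (α := ℝ) d)]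
    rw [← log_integral_exp_dotProduct_sub_tilted
      (integrable_exp_dotProduct hT hint (mul_norm_le hη))
      (integrable_exp_dotProduct hT hint (mul_norm_le hηh))]
    refine (abs_log_centered_mgf_sub_le hT hb (exp_moment hη).1 (exp_moment hη).2 D_def.symm
      (mul_norm_h_le.trans hrb) (mul_norm_h_le.trans hr_le) (le_trans ?_ hrD)).trans_eq (by ring)
    gcongr

lemma exists_quadApprox [IsProbabilityMeasure P] (hT : Measurable T) (ha : 0 < a)
    (hint : Integrable (fun x => Real.exp (a * ‖T x‖)) P)
    (hnd : ∀ h : Fin d → ℝ, h ≠ 0 → ∀ c : ℝ, ¬ ∀ᵐ x ∂P, h ⬝ᵥ T x = c) {ρ₀ : ℝ} (hρ₀ : 0 < ρ₀) :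
    ∃ ρ κ K C : ℝ, ρ ≤ ρ₀ ∧ d * ρ ≤ a ∧
      QuadApprox ρ κ K C (logMgf P T) (tiltMean P T) (tiltCov P T) := by
  obtain ⟨r, C, D, hr, hC, hdr, upper, taylor⟩ := exists_logMgf_taylor hT ha hint
  have memLp_T : MemLp T 2 P := memLp_two_of_exp_norm hT.aestronglyMeasurable (half_pos ha)
    (by simpa only [mul_div_cancel₀ a two_ne_zero] using hint)
  obtain ⟨κ, hκ, lower⟩ := exists_quad_lower_bound (tiltCov P T 0) fun h hh => by
    simpa [tiltCov] using quad_covarianceMatrix_pos memLp_T (hnd h hh)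
  set ρ := min (min ρ₀ (r / 3)) (κ / (320 * (C + 1)))
  have ρ_pos : 0 < ρ := lt_min (lt_min hρ₀ (by positivity)) (by positivity)
  have ρ_le_r : ρ ≤ r / 3 := (min_le_left _ _).trans (min_le_right _ _)
  have C_mul_ρ_le : 320 * (C + 1) * ρ ≤ κ := (le_div_iff₀' (by positivity)).1 (min_le_right _ _)
  have lipschitz (θ θ' : Fin d → ℝ) (hθ : ‖θ‖ ≤ ρ) (hθ' : ‖θ'‖ ≤ ρ) (h : Fin d → ℝ) :
      quad (tiltCov P T θ') h ≤ quad (tiltCov P T θ) h + 20 * C * ‖θ' - θ‖ * ‖h‖ ^ 2 :=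
    quad_lipschitz_of_taylor hC taylor (hθ.trans ρ_le_r) (hθ'.trans ρ_le_r) h
  refine ⟨ρ, κ / 2, max D 1, 20 * C, (min_le_left _ _).trans (min_le_left _ _), ?_,
    { ρ_pos, lipschitz
      κ_pos := by positivity
      K_pos := by positivity
      C_nonneg := by positivity
      C_mul_ρ_le := by nlinarith
      measurable := measurable_logMgf hT
      isSymm := fun θ => covarianceMatrix_isSymm _ T
      lower := fun θ hθ h => ?_
      upper := fun θ hθ h => (upper θ (by linarith) h).trans (by gcongr; exact le_max_left _ _)
      taylor := fun θ h hθ hθh => (taylor θ h (by linarith) (by linarith)).trans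
        (by gcongr; linarith) }⟩
  · exact le_trans (by gcongr; linarith) hdr
  · have perturbation_le : 20 * C * ‖θ‖ * ‖h‖ ^ 2 ≤ κ / 2 * ‖h‖ ^ 2 := by
      gcongr
      nlinarith [mul_le_mul_of_nonneg_left hθ hC]
    have lipschitz_zero := lipschitz θ 0 hθ (by simpa using ρ_pos.le) h
    rw [zero_sub, norm_neg] at lipschitz_zero
    linarith [lower h]

end Tilted
end Tilting

section Concentration

variable {d : ℕ} {ρ κ K C : ℝ} {Λ : (Fin d → ℝ) → ℝ} {ℓ : (Fin d → ℝ) → Fin d → ℝ}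
  {M : (Fin d → ℝ) → Matrix (Fin d) (Fin d) ℝ} {Y : Type*} [MeasurableSpace Y] {B : Measure Y}
  {t : Y → Fin d → ℝ}

lemma measurable_uncurry_lik (hΛ : Measurable Λ) (N : ℝ) (ht : Measurable t) :
    Measurable (Function.uncurry fun θ y => lik Λ N (t y) θ) := by
  unfold Function.uncurry lik dotProduct
  fun_prop

lemma withDensity_apply_le_of_le_const_mul {f g : Y → ℝ≥0∞} {S : Set Y} {c : ℝ≥0∞}
    (hg : Measurable g) [IsProbabilityMeasure (B.withDensity g)] (hS : MeasurableSet S)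
    (hfg : ∀ y ∈ S, f y ≤ c * g y) : B.withDensity f S ≤ c := by
  rw [withDensity_apply _ hS]
  calc ∫⁻ y in S, f y ∂B ≤ ∫⁻ y in S, c * g y ∂B := setLIntegral_mono' hS hfg
    _ = c * B.withDensity g S := by rw [lintegral_const_mul _ hg, withDensity_apply _ hS]
    _ ≤ c := mul_le_of_le_one_right' prob_le_one

lemma measure_lt_norm_le (μ : Measure Y) (f : Y → Fin d → ℝ) {y₀ : ℝ} (hy₀ : 0 ≤ y₀) {p : ℝ≥0∞}
    (hp : ∀ e : Fin d → ℝ, ‖e‖ ≤ 1 → μ {y | y₀ ≤ e ⬝ᵥ f y} ≤ p) :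
    μ {y | y₀ < ‖f y‖} ≤ d * (p + p) := by
  have cover : {y | y₀ < ‖f y‖} ⊆ ⋃ i : Fin d,
      ({y | y₀ ≤ Pi.single i 1 ⬝ᵥ f y} ∪ {y | y₀ ≤ (-Pi.single i 1) ⬝ᵥ f y}) := by
    intro y hy
    obtain ⟨i, hi⟩ : ∃ i, y₀ ≤ |f y i| := by
      by_contra! coord_lt
      exact hy.not_ge ((pi_norm_le_iff_of_nonneg hy₀).2 fun i => (coord_lt i).le)
    refine Set.mem_iUnion.2 ⟨i, ?_⟩
    simpa [neg_dotProduct, single_one_dotProduct] using le_abs.1 hi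
  refine (measure_mono cover).trans ((measure_iUnion_fintype_le _ _).trans ?_)
  refine (Finset.sum_le_card_nsmul _ _ (p + p) fun i _ => ?_).trans_eq
    (by rw [Finset.card_univ, Fintype.card_fin, nsmul_eq_mul])
  have norm_single : ‖(Pi.single i 1 : Fin d → ℝ)‖ ≤ 1 := by rw [Pi.norm_single, norm_one]
  exact (measure_union_le _ _).trans
    (add_le_add (hp _ norm_single) (hp _ (by rwa [norm_neg])))

namespace QuadApprox

lemma bregman_le (H : QuadApprox ρ κ K C Λ ℓ M) {θ h : Fin d → ℝ} {s : ℝ} (hh : ‖h‖ ≤ s)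
    (hθ : ‖θ‖ + s ≤ ρ) : Λ (θ + h) - Λ θ - ℓ θ ⬝ᵥ h ≤ (K + κ) / 2 * s ^ 2 := by
  have K_pos := H.K_pos
  have C_nonneg := H.C_nonneg
  have s_nonneg := (norm_nonneg h).trans hh
  have s_le : s ≤ ρ := by linarith [norm_nonneg θ]
  have quadratic : quad (M θ) h ≤ K * s ^ 2 := (H.upper θ (by linarith) h).trans (by gcongr)
  have cubic : C * ‖h‖ ^ 3 ≤ κ / 2 * s ^ 2 := by
    calc C * ‖h‖ ^ 3 ≤ C * s ^ 3 := by gcongr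
      _ = C * s * s ^ 2 := by ring
      _ ≤ κ / 2 * s ^ 2 := by
        gcongr
        nlinarith [H.C_mul_ρ_le, H.κ_pos, mul_le_mul_of_nonneg_left s_le C_nonneg]
  linarith [le_of_abs_le (H.taylor θ h (by linarith) ((norm_add_le _ _).trans (by linarith)))]

lemma chernoff (H : QuadApprox ρ κ K C Λ ℓ M) {N s y₀ : ℝ} (hN : 0 ≤ N) (ht : Measurable t)
    {θ e : Fin d → ℝ} (he : ‖e‖ ≤ 1) (hs : 0 ≤ s) (hθ : ‖θ‖ + s ≤ ρ)
    [IsProbabilityMeasure (B.withDensity fun y => lik Λ N (t y) (θ + s • e))] :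
    (B.withDensity fun y => lik Λ N (t y) θ) {y | y₀ ≤ e ⬝ᵥ (t y - ℓ θ)} ≤
      ENNReal.ofReal (Real.exp (N * ((K + κ) / 2 * s ^ 2 - s * y₀))) := by
  have norm_smul_le : ‖s • e‖ ≤ s := by
    rw [norm_smul, Real.norm_of_nonneg hs]
    exact mul_le_of_le_one_right hs he
  refine withDensity_apply_le_of_le_const_mul (g := fun y => lik Λ N (t y) (θ + s • e))
    (measurable_uncurry_lik H.measurable N ht).of_uncurry_left
    (measurableSet_le measurable_const (measurable_dotProduct (ht.sub_const _) e)) fun y hy => ?_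
  have bregman := H.bregman_le norm_smul_le hθ
  have tilt : s * y₀ ≤ s * (e ⬝ᵥ (t y - ℓ θ)) := mul_le_mul_of_nonneg_left hy hs
  unfold lik
  rw [← ENNReal.ofReal_mul (Real.exp_nonneg _), ← Real.exp_add, ← mul_add]
  gcongr
  rw [dotProduct_smul, smul_eq_mul] at bregman
  rw [dotProduct_sub, dotProduct_comm e, dotProduct_comm e] at tilt
  rw [dotProduct_add, dotProduct_smul, smul_eq_mul]
  linarith

lemma measure_lt_norm_sub_le (H : QuadApprox ρ κ K C Λ ℓ M) {N y₀ : ℝ} (hN : 0 ≤ N)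
    (hy₀ : 0 ≤ y₀) (ht : Measurable t)
    (hB : ∀ θ, ‖θ‖ ≤ ρ → IsProbabilityMeasure (B.withDensity fun y => lik Λ N (t y) θ))
    {θ : Fin d → ℝ} (hθ : ‖θ‖ + y₀ / (K + κ) ≤ ρ) :
    (B.withDensity fun y => lik Λ N (t y) θ) {y | y₀ < ‖t y - ℓ θ‖} ≤
      d * (2 * ENNReal.ofReal (Real.exp (-(N * y₀ ^ 2 / (2 * (K + κ)))))) := by
  have K_pos := H.K_pos
  have κ_pos := H.κ_pos
  have s_nonneg : 0 ≤ y₀ / (K + κ) := by positivity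
  rw [two_mul (ENNReal.ofReal _)]
  refine measure_lt_norm_le _ _ hy₀ fun e he => ?_
  have := hB (θ + (y₀ / (K + κ)) • e) <| (norm_add_le _ _).trans <| by
    rw [norm_smul, Real.norm_of_nonneg s_nonneg]
    linarith [mul_le_of_le_one_right s_nonneg he]
  refine (H.chernoff hN ht he s_nonneg hθ).trans_eq ?_
  congr 2
  field_simp
  ring

lemma exists_measure_lt_norm_sub_le (H : QuadApprox ρ κ K C Λ ℓ M) :
    ∃ A : ℝ, 0 ≤ A ∧ ∀ N : ℝ, 1 ≤ N → ∀ (Y : Type*) [MeasurableSpace Y]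
      (B : Measure Y) (t : Y → Fin d → ℝ), Measurable t →
      (∀ θ, ‖θ‖ ≤ ρ → IsProbabilityMeasure (B.withDensity fun y => lik Λ N (t y) θ)) →
      ∀ θ, ‖θ‖ + locRadius N ≤ ρ →
      (B.withDensity fun y => lik Λ N (t y) θ) {y | κ * locRadius N / 8 < d * ‖t y - ℓ θ‖} ≤
        ENNReal.ofReal (A * N ^ (-(1 : ℝ) / 3)) := by
  have K_pos := H.K_pos
  have κ_pos := H.κ_pos
  obtain ⟨A, hA, exp_le⟩ := exists_rpow_mul_exp_locRadius_le
    (c := (κ / (8 * (d + 1))) ^ 2 / (2 * (K + κ))) (by positivity) 0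
  refine ⟨d * (2 * A), by positivity, fun N hN Y _ B t ht hB θ hθ => ?_⟩
  have R_pos := locRadius_pos (zero_lt_one.trans_le hN)
  have exp_le_N := exp_le N hN
  set R := locRadius N
  set y₀ := κ / (8 * (d + 1)) * R with y₀_def
  have y₀_nonneg : 0 ≤ y₀ := by positivity
  have shift_le : y₀ / (K + κ) ≤ R := by
    rw [div_le_iff₀ (by positivity), y₀_def, mul_comm]
    gcongr
    exact (div_le_self κ_pos.le (by linarith [Nat.cast_nonneg (α := ℝ) d])).trans (by linarith)
  have subset : {y | κ * R / 8 < d * ‖t y - ℓ θ‖} ⊆ {y | y₀ < ‖t y - ℓ θ‖} := by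
    intro y hy
    rw [Set.mem_ofPred_eq] at hy ⊢
    rw [y₀_def, div_mul_eq_mul_div, div_lt_iff₀ (by positivity)]
    linarith [norm_nonneg (t y - ℓ θ)]
  refine (measure_mono subset).trans ((H.measure_lt_norm_sub_le (zero_le_one.trans hN) y₀_nonneg ht
    hB (by linarith)).trans ?_)
  rw [mul_assoc, ENNReal.ofReal_mul (by positivity), ENNReal.ofReal_natCast, mul_assoc,
    ENNReal.ofReal_mul zero_le_two, ENNReal.ofReal_ofNat]
  gcongr
  refine le_of_eq_of_le ?_ exp_le_N
  rw [Nat.cast_zero, zero_div, Real.rpow_zero, one_mul, y₀_def]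
  ring_nf

end QuadApprox

end Concentration

section ConditionalHockey

variable {d : ℕ} {ρ κ K C N τ : ℝ} {Λ : (Fin d → ℝ) → ℝ} {ℓ : (Fin d → ℝ) → Fin d → ℝ}
  {M : (Fin d → ℝ) → Matrix (Fin d) (Fin d) ℝ} {Y : Type*} [MeasurableSpace Y]

/-- Mean of the posterior hockey-stick functional when the data `y`, with statistic `t y` and base
measure `B`, is drawn from the distribution with parameter `θ`. -/
noncomputable def condHockey (ρ : ℝ) (Λ : (Fin d → ℝ) → ℝ)
    (M : (Fin d → ℝ) → Matrix (Fin d) (Fin d) ℝ) (N τ : ℝ) (B : Measure Y) (t : Y → Fin d → ℝ)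
    (θ : Fin d → ℝ) : ℝ≥0∞ :=
  ∫⁻ y, postHockey ρ Λ M N τ (t y) ∂(B.withDensity fun y => lik Λ N (t y) θ)

lemma measurable_postHockey (ρ : ℝ) (hΛ : Measurable Λ)
    (hM : Measurable fun θ => gaussMass (quad (M θ))) (N τ : ℝ) :
    Measurable (postHockey ρ Λ M N τ) := by
  have measurable_uncurry := measurable_uncurry_lik hΛ N (t := fun t => t) measurable_id
  have measurable_marginal : Measurable fun t => ∫⁻ φ in Metric.closedBall 0 ρ, lik Λ N t φ :=
    measurable_uncurry.lintegral_prod_left'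
  refine Measurable.lintegral_prod_left' (f := fun p : (Fin d → ℝ) × (Fin d → ℝ) =>
    lik Λ N p.2 p.1 / (∫⁻ φ in Metric.closedBall 0 ρ, lik Λ N p.2 φ) -
      ENNReal.ofReal (τ / gaussMass (quad (M p.1)))) ?_
  exact (measurable_uncurry.div (measurable_marginal.comp measurable_snd)).sub
    ((hM.comp measurable_fst).const_div τ).ennreal_ofReal

lemma condHockey_le_one (hΛ : Measurable Λ) (N τ : ℝ) (B : Measure Y) (t : Y → Fin d → ℝ)
    (θ : Fin d → ℝ) [IsProbabilityMeasure (B.withDensity fun y => lik Λ N (t y) θ)] :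
    condHockey ρ Λ M N τ B t θ ≤ 1 :=
  (lintegral_mono fun y => postHockey_le_one hΛ N τ (t y)).trans_eq (by simp)

lemma lintegral_le_add_measure {μ : Measure Y} [IsProbabilityMeasure μ] {f : Y → ℝ≥0∞}
    (hf : ∀ y, f y ≤ 1) {S : Set Y} (hS : MeasurableSet S) {c : ℝ≥0∞} (hc : ∀ y ∉ S, f y ≤ c) :
    ∫⁻ y, f y ∂μ ≤ c + μ S := by
  have f_le (y : Y) : f y ≤ c + S.indicator 1 y := by
    by_cases hy : y ∈ S
    · rw [Set.indicator_of_mem hy]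
      exact (hf y).trans le_add_self
    · exact (hc y hy).trans le_self_add
  refine (lintegral_mono f_le).trans_eq ?_
  rw [lintegral_add_left measurable_const, lintegral_const, measure_univ, mul_one,
    lintegral_indicator_one hS]

lemma le_lintegral_add_measure {μ : Measure Y} [IsProbabilityMeasure μ] {f : Y → ℝ≥0∞}
    (hf : Measurable f) {k : ℝ≥0∞} (hk : k ≤ 1) {S : Set Y} (hS : MeasurableSet S) {η : ℝ≥0∞}
    (hη : ∀ y ∉ S, k ≤ f y + η) : k ≤ ∫⁻ y, f y ∂μ + (η + μ S) := by
  have le_f (y : Y) : k ≤ f y + (η + S.indicator 1 y) := by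
    by_cases hy : y ∈ S
    · rw [Set.indicator_of_mem hy]
      exact hk.trans (le_add_left le_add_self)
    · rw [Set.indicator_of_notMem hy, add_zero]
      exact hη y hy
  calc k = ∫⁻ _, k ∂μ := by rw [lintegral_const, measure_univ, mul_one]
    _ ≤ ∫⁻ y, (f y + (η + S.indicator 1 y)) ∂μ := lintegral_mono le_f
    _ = ∫⁻ y, f y ∂μ + (η + μ S) := by
      rw [lintegral_add_left hf, lintegral_add_left measurable_const, lintegral_const,
        measure_univ, mul_one, lintegral_indicator_one hS]

namespace QuadApprox

lemma setLIntegral_lik_ne_zero (H : QuadApprox ρ κ K C Λ ℓ M) (hN : 0 < N) (t : Fin d → ℝ) :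
    ∫⁻ φ in Metric.closedBall 0 ρ, lik Λ N t φ ≠ 0 := by
  have norm_zero_le : ‖(0 : Fin d → ℝ)‖ ≤ ρ := norm_zero.trans_le H.ρ_pos.le
  rw [H.setLIntegral_lik hN norm_zero_le t]
  exact mul_ne_zero (lik_pos Λ N t 0).ne'
    (ENNReal.ofReal_pos.2 (H.integral_localLik_pos hN norm_zero_le t)).ne'

lemma setLIntegral_lik_ne_top (H : QuadApprox ρ κ K C Λ ℓ M) (hN : 0 < N) (t : Fin d → ℝ) :
    ∫⁻ φ in Metric.closedBall 0 ρ, lik Λ N t φ ≠ ⊤ := by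
  rw [H.setLIntegral_lik hN (norm_zero.trans_le H.ρ_pos.le) t]
  exact ENNReal.mul_ne_top ENNReal.ofReal_ne_top ENNReal.ofReal_ne_top

lemma jointHockey_eq (H : QuadApprox ρ κ K C Λ ℓ M)
    (hM : Measurable fun θ => gaussMass (quad (M θ))) (hN : 0 < N) (τ : ℝ) (B : Measure Y)
    [SFinite B] {t : Y → Fin d → ℝ} (ht : Measurable t) :
    jointHockey (volume.restrict (Metric.closedBall 0 ρ)) B (fun θ y => lik Λ N (t y) θ)
        (fun θ => ENNReal.ofReal (τ / gaussMass (quad (M θ)))) =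
      ∫⁻ θ in Metric.closedBall 0 ρ, condHockey ρ Λ M N τ B t θ := by
  have measurable_likelihood := measurable_uncurry_lik H.measurable N ht
  have measurable_hockey := (measurable_postHockey ρ H.measurable hM N τ).comp ht
  have condHockey_eq (θ : Fin d → ℝ) : condHockey ρ Λ M N τ B t θ =
      ∫⁻ y, lik Λ N (t y) θ * postHockey ρ Λ M N τ (t y) ∂B :=
    lintegral_withDensity_eq_lintegral_mul _ measurable_likelihood.of_uncurry_left
      measurable_hockey
  simp_rw [condHockey_eq]
  rw [jointHockey, ← lintegral_lintegral_swap
    (f := fun y θ => lik Λ N (t y) θ * postHockey ρ Λ M N τ (t y))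
    ((measurable_likelihood.comp measurable_swap).mul
      (measurable_hockey.comp measurable_fst)).aemeasurable]
  refine lintegral_congr fun y => ?_
  have ne_zero := H.setLIntegral_lik_ne_zero hN (t y)
  have ne_top := H.setLIntegral_lik_ne_top hN (t y)
  rw [lintegral_mul_const _ (measurable_lik H.measurable N (t y)), postHockey,
    ← lintegral_const_mul' _ _ ne_top]
  refine lintegral_congr fun θ => ?_
  rw [ENNReal.mul_sub fun _ _ => ne_top, ENNReal.mul_div_cancel ne_zero ne_top,
    mul_comm (ENNReal.ofReal _)]

lemma exists_condHockey_close (H : QuadApprox ρ κ K C Λ ℓ M)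
    (hM : Measurable fun θ => gaussMass (quad (M θ))) :
    ∃ A : ℝ, 0 ≤ A ∧ ∀ N : ℝ, 1 ≤ N → ∀ τ : ℝ, 0 ≤ τ → ∀ (Y : Type*) [MeasurableSpace Y]
      (B : Measure Y) (t : Y → Fin d → ℝ), Measurable t →
      (∀ θ, ‖θ‖ ≤ ρ → IsProbabilityMeasure (B.withDensity fun y => lik Λ N (t y) θ)) →
      ∀ θ, ‖θ‖ + locRadius N ≤ ρ →
      condHockey ρ Λ M N τ B t θ ≤
        gaussHockey (quad (M θ)) (N ^ (-(d : ℝ) / 2) * τ) +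
          ENNReal.ofReal (A * N ^ (-(1 : ℝ) / 3)) ∧
      gaussHockey (quad (M θ)) (N ^ (-(d : ℝ) / 2) * τ) ≤
        condHockey ρ Λ M N τ B t θ + ENNReal.ofReal (A * N ^ (-(1 : ℝ) / 3)) := by
  obtain ⟨A₁, A₁_nonneg, post_close⟩ := H.exists_postHockey_close
  obtain ⟨A₂, A₂_nonneg, measure_le⟩ := H.exists_measure_lt_norm_sub_le
  refine ⟨A₁ + A₂, by positivity, fun N hN τ hτ Y _ B t ht hB θ hθ => ?_⟩
  have N_pos : 0 < N := by linarith
  have norm_θ_le : ‖θ‖ ≤ ρ := by linarith [locRadius_pos N_pos]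
  have := hB θ norm_θ_le
  have measurable_hockey := (measurable_postHockey ρ H.measurable hM N τ).comp ht
  have gauss_le_one : gaussHockey (quad (M θ)) (N ^ (-(d : ℝ) / 2) * τ) ≤ 1 :=
    gaussHockey_le_one (integrable_exp_neg_quad H.κ_pos (H.lower θ norm_θ_le)) (by positivity)
  have measurableSet_far : MeasurableSet {y | κ * locRadius N / 8 < d * ‖t y - ℓ θ‖} :=
    measurableSet_lt measurable_const (by fun_prop)
  rw [add_mul, ENNReal.ofReal_add (by positivity) (by positivity)]
  constructor
  · refine (lintegral_le_add_measure (fun y => postHockey_le_one H.measurable N τ (t y))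
      measurableSet_far fun y hy => (post_close N hN τ hτ (t y) θ hθ (not_lt.1 hy)).1).trans ?_
    rw [add_assoc]
    gcongr
    exact measure_le N hN Y B t ht hB θ hθ
  · refine (le_lintegral_add_measure (μ := B.withDensity fun y => lik Λ N (t y) θ)
      measurable_hockey gauss_le_one measurableSet_far fun y hy =>
        (post_close N hN τ hτ (t y) θ hθ (not_lt.1 hy)).2).trans ?_
    exact add_le_add_right (add_le_add_right (measure_le N hN Y B t ht hB θ hθ) _) _

end QuadApprox

end ConditionalHockey

section AmplificationBound

universe u

lemma le_of_add_le_add_of_lintegral_le {α : Type*} [MeasurableSpace α] {π : Measure α}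
    [IsFiniteMeasure π] [NeZero π] {f₁ f₂ : α → ℝ≥0∞} {S : Set α} {g b e s : ℝ≥0∞}
    (hf₁ : ∀ᵐ θ ∂π, f₁ θ ≤ 1) (hg : g ≤ 1) (hS : MeasurableSet S) (hπS : π S ≤ s * π Set.univ)
    (hgap : ∀ᵐ θ ∂π, θ ∉ S → f₁ θ + g ≤ f₂ θ + b)
    (hlintegral : ∫⁻ θ, f₂ θ ∂π ≤ ∫⁻ θ, f₁ θ ∂π + e * π Set.univ) :
    g ≤ e + b + 2 * s := by
  have lintegral_ne_top : ∫⁻ θ, f₁ θ ∂π ≠ ⊤ := by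
    refine ((lintegral_mono_ae hf₁).trans_lt ?_).ne
    simp
  have measurable_cost : Measurable fun θ => b + S.indicator (fun _ => 2) θ :=
    measurable_const.add (measurable_const.indicator hS)
  have gap : ∀ᵐ θ ∂π, f₁ θ + g ≤ f₂ θ + (b + S.indicator (fun _ => 2) θ) := by
    filter_upwards [hf₁, hgap] with θ f₁_le gap_off
    by_cases hθ : θ ∈ S
    · rw [Set.indicator_of_mem hθ, ← add_assoc]
      refine le_add_left ((add_le_add f₁_le hg).trans_eq ?_)
      exact one_add_one_eq_two
    · rw [Set.indicator_of_notMem hθ, add_zero]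
      exact gap_off hθ
  have integrated : ∫⁻ θ, f₁ θ ∂π + g * π Set.univ ≤
      ∫⁻ θ, f₁ θ ∂π + (e + b + 2 * s) * π Set.univ := by
    calc ∫⁻ θ, f₁ θ ∂π + g * π Set.univ = ∫⁻ θ, (f₁ θ + g) ∂π := by
          rw [lintegral_add_right _ measurable_const, lintegral_const]
      _ ≤ ∫⁻ θ, (f₂ θ + (b + S.indicator (fun _ => 2) θ)) ∂π := lintegral_mono_ae gap
      _ = ∫⁻ θ, f₂ θ ∂π + (b * π Set.univ + 2 * π S) := by
          rw [lintegral_add_right _ measurable_cost, lintegral_add_left measurable_const,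
            lintegral_const, lintegral_indicator_const hS]
      _ ≤ ∫⁻ θ, f₁ θ ∂π + e * π Set.univ + (b * π Set.univ + 2 * (s * π Set.univ)) := by gcongr
      _ = _ := by ring
  rw [ENNReal.add_le_add_iff_left lintegral_ne_top] at integrated
  exact (ENNReal.mul_le_mul_iff_left (NeZero.ne _) (measure_ne_top _ _)).1 integrated

lemma addHaar_closedBall_sdiff_le {E : Type*} [NormedAddCommGroup E] [NormedSpace ℝ E]
    [MeasurableSpace E] [BorelSpace E] [FiniteDimensional ℝ E] (μ : Measure E)
    [μ.IsAddHaarMeasure] {ρ R : ℝ} (hR : 0 ≤ R) (hRρ : R ≤ ρ) :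
    μ (Metric.closedBall 0 ρ \ Metric.closedBall 0 (ρ - R)) ≤
      ENNReal.ofReal (Module.finrank ℝ E * R / ρ) * μ (Metric.closedBall 0 ρ) := by
  have ρ_nonneg : 0 ≤ ρ := hR.trans hRρ
  have bernoulli : ρ ^ Module.finrank ℝ E - (ρ - R) ^ Module.finrank ℝ E ≤
      Module.finrank ℝ E * R / ρ * ρ ^ Module.finrank ℝ E := by
    rcases ρ_nonneg.eq_or_lt with rfl | ρ_pos
    · simp [le_antisymm hRρ hR]
    have one_sub_le := one_add_mul_le_pow (a := -(R / ρ))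
      (by linarith [(div_le_one ρ_pos).2 hRρ]) (Module.finrank ℝ E)
    have factor : ρ - R = ρ * (1 + -(R / ρ)) := by field_simp; ring
    rw [factor, mul_pow, mul_div_assoc]
    nlinarith [pow_pos ρ_pos (Module.finrank ℝ E)]
  rw [measure_sdiff (Metric.closedBall_subset_closedBall (by linarith))
    Metric.isClosed_closedBall.measurableSet.nullMeasurableSet measure_closedBall_lt_top.ne,
    Measure.addHaar_closedBall μ _ ρ_nonneg, Measure.addHaar_closedBall μ _ (sub_nonneg.2 hRρ),
    ← ENNReal.sub_mul fun _ _ => measure_ball_lt_top.ne,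
    ← ENNReal.ofReal_sub _ (pow_nonneg (sub_nonneg.2 hRρ) _), ← mul_assoc,
    ← ENNReal.ofReal_mul (by positivity)]
  gcongr

namespace QuadApprox

variable {d : ℕ} {ρ κ K C n N : ℝ} {Λ : (Fin d → ℝ) → ℝ} {ℓ : (Fin d → ℝ) → Fin d → ℝ}
  {M : (Fin d → ℝ) → Matrix (Fin d) (Fin d) ℝ}

lemma gaussHockey_add_le (H : QuadApprox ρ κ K C Λ ℓ M) (hd : 0 < d) (hn : 0 < n) (hN : n ≤ N)
    {θ : Fin d → ℝ} (hθ : ‖θ‖ ≤ ρ) :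
    gaussHockey (quad (M θ)) (n ^ (-(d : ℝ) / 2) * (n ^ ((d : ℝ) / 2) * Real.exp (-(d : ℝ) / 2))) +
        ENNReal.ofReal ((1 / 400) ^ 2 * min ((N - n) / n * √d) 1) ≤
      gaussHockey (quad (M θ))
        (N ^ (-(d : ℝ) / 2) * (n ^ ((d : ℝ) / 2) * Real.exp (-(d : ℝ) / 2))) := by
  have κ_pos := H.κ_pos
  have N_pos : 0 < N := hn.trans_le hN
  have threshold_n : n ^ (-(d : ℝ) / 2) * (n ^ ((d : ℝ) / 2) * Real.exp (-(d : ℝ) / 2)) =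
      Real.exp (-(d : ℝ) / 2) := by
    rw [← mul_assoc, ← Real.rpow_add hn, neg_div, neg_add_cancel, Real.rpow_zero, one_mul]
  have threshold_N : N ^ (-(d : ℝ) / 2) * (n ^ ((d : ℝ) / 2) * Real.exp (-(d : ℝ) / 2)) =
      (1 + (N - n) / n) ^ (-(d : ℝ) / 2) * Real.exp (-(d : ℝ) / 2) := by
    rw [show 1 + (N - n) / n = N / n by field_simp; ring, Real.div_rpow N_pos.le hn.le,
      ← mul_assoc, neg_div, Real.rpow_neg hn.le, div_inv_eq_mul]
  rw [threshold_n, threshold_N]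
  exact gaussHockey_gap (continuous_quad _).measurable hd (quad_smul _)
    (integrable_exp_neg_quad κ_pos (H.lower θ hθ)) (div_nonneg (by linarith) hn.le)

lemma exists_condHockey_add_le (H : QuadApprox ρ κ K C Λ ℓ M)
    (hM : Measurable fun θ => gaussMass (quad (M θ))) (hd : 0 < d) :
    ∃ A : ℝ, 0 ≤ A ∧ ∀ n N : ℝ, 1 ≤ n → n ≤ N → ∀ (Y₁ Y₂ : Type u) [MeasurableSpace Y₁]
      [MeasurableSpace Y₂] (B₁ : Measure Y₁) (B₂ : Measure Y₂)
      (t₁ : Y₁ → Fin d → ℝ) (t₂ : Y₂ → Fin d → ℝ), Measurable t₁ → Measurable t₂ →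
      (∀ θ, ‖θ‖ ≤ ρ → IsProbabilityMeasure (B₁.withDensity fun y => lik Λ n (t₁ y) θ)) →
      (∀ θ, ‖θ‖ ≤ ρ → IsProbabilityMeasure (B₂.withDensity fun y => lik Λ N (t₂ y) θ)) →
      ∀ θ, ‖θ‖ + locRadius n ≤ ρ →
      condHockey ρ Λ M n (n ^ ((d : ℝ) / 2) * Real.exp (-(d : ℝ) / 2)) B₁ t₁ θ +
          ENNReal.ofReal ((1 / 400) ^ 2 * min ((N - n) / n * √d) 1) ≤
        condHockey ρ Λ M N (n ^ ((d : ℝ) / 2) * Real.exp (-(d : ℝ) / 2)) B₂ t₂ θ +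
          ENNReal.ofReal (A * n ^ (-(1 : ℝ) / 3)) := by
  obtain ⟨A, A_nonneg, close⟩ := H.exists_condHockey_close hM
  refine ⟨A + A, by positivity, fun n N hn hN Y₁ Y₂ _ _ B₁ B₂ t₁ t₂ ht₁ ht₂ hB₁ hB₂ θ hθ => ?_⟩
  have n_pos : 0 < n := by linarith
  have locRadius_N_le : locRadius N ≤ locRadius n :=
    Real.rpow_le_rpow_of_nonpos n_pos hN (by norm_num)
  have rpow_N_le : N ^ (-(1 : ℝ) / 3) ≤ n ^ (-(1 : ℝ) / 3) :=
    Real.rpow_le_rpow_of_nonpos n_pos hN (by norm_num)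
  have τ_nonneg : 0 ≤ n ^ ((d : ℝ) / 2) * Real.exp (-(d : ℝ) / 2) := by positivity
  set τ := n ^ ((d : ℝ) / 2) * Real.exp (-(d : ℝ) / 2)
  set g := ENNReal.ofReal ((1 / 400) ^ 2 * min ((N - n) / n * √d) 1)
  have gap : gaussHockey (quad (M θ)) (n ^ (-(d : ℝ) / 2) * τ) + g ≤
      gaussHockey (quad (M θ)) (N ^ (-(d : ℝ) / 2) * τ) :=
    H.gaussHockey_add_le hd n_pos hN (by linarith [locRadius_pos n_pos])
  calc condHockey ρ Λ M n τ B₁ t₁ θ + g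
      ≤ gaussHockey (quad (M θ)) (n ^ (-(d : ℝ) / 2) * τ) +
          ENNReal.ofReal (A * n ^ (-(1 : ℝ) / 3)) + g := by
        gcongr
        exact (close n hn τ τ_nonneg Y₁ B₁ t₁ ht₁ hB₁ θ hθ).1
    _ ≤ gaussHockey (quad (M θ)) (N ^ (-(d : ℝ) / 2) * τ) +
          ENNReal.ofReal (A * n ^ (-(1 : ℝ) / 3)) := by
        rw [add_right_comm]
        gcongr
    _ ≤ condHockey ρ Λ M N τ B₂ t₂ θ + ENNReal.ofReal (A * N ^ (-(1 : ℝ) / 3)) +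
          ENNReal.ofReal (A * n ^ (-(1 : ℝ) / 3)) := by
        gcongr
        exact (close N (hn.trans hN) τ τ_nonneg Y₂ B₂ t₂ ht₂ hB₂ θ (by linarith)).2
    _ ≤ condHockey ρ Λ M N τ B₂ t₂ θ + ENNReal.ofReal ((A + A) * n ^ (-(1 : ℝ) / 3)) := by
        rw [add_assoc, add_mul, ENNReal.ofReal_add (by positivity) (by positivity)]
        gcongr

section Amplification

variable {τ : ℝ} {Y₁ Y₂ : Type*} [MeasurableSpace Y₁] [MeasurableSpace Y₂] {B₁ : Measure Y₁}
  {B₂ : Measure Y₂} [SFinite B₁] [SFinite B₂] {t₁ : Y₁ → Fin d → ℝ} {t₂ : Y₂ → Fin d → ℝ}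

lemma setLIntegral_condHockey_le (H : QuadApprox ρ κ K C Λ ℓ M)
    (hM : Measurable fun θ => gaussMass (quad (M θ))) (hn : 0 < n) (hN : 0 < N)
    (ht₁ : Measurable t₁) (ht₂ : Measurable t₂)
    (hB₂ : ∀ θ, ‖θ‖ ≤ ρ → IsProbabilityMeasure (B₂.withDensity fun y => lik Λ N (t₂ y) θ))
    (T : Kernel Y₁ Y₂) [IsMarkovKernel T] {ε : ℝ≥0∞}
    (hle : ∀ θ, ‖θ‖ ≤ ρ → ∀ S, MeasurableSet S →
      (B₂.withDensity fun y => lik Λ N (t₂ y) θ) S ≤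
        ((B₁.withDensity fun y => lik Λ n (t₁ y) θ).bind T) S + ε)
    (hge : ∀ θ, ‖θ‖ ≤ ρ → ∀ S, MeasurableSet S →
      ((B₁.withDensity fun y => lik Λ n (t₁ y) θ).bind T) S ≤
        (B₂.withDensity fun y => lik Λ N (t₂ y) θ) S + ε) :
    ∫⁻ θ in Metric.closedBall 0 ρ, condHockey ρ Λ M N τ B₂ t₂ θ ≤
      (∫⁻ θ in Metric.closedBall 0 ρ, condHockey ρ Λ M n τ B₁ t₁ θ) +
        2 * ε * volume (Metric.closedBall (0 : Fin d → ℝ) ρ) := by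
  have ae_norm_le : ∀ᵐ θ : Fin d → ℝ ∂volume.restrict (Metric.closedBall 0 ρ), ‖θ‖ ≤ ρ :=
    (ae_restrict_mem Metric.isClosed_closedBall.measurableSet).mono
      fun θ hθ => mem_closedBall_zero_iff.1 hθ
  have : IsFiniteMeasure (volume.restrict (Metric.closedBall (0 : Fin d → ℝ) ρ)) :=
    isFiniteMeasure_restrict.2 measure_closedBall_lt_top.ne
  have hockey_le := jointHockey_le_of_bind_close (volume.restrict (Metric.closedBall 0 ρ))
    (measurable_uncurry_lik H.measurable n ht₁) (measurable_uncurry_lik H.measurable N ht₂)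
    (hM.const_div τ).ennreal_ofReal (fun y => H.setLIntegral_lik_ne_zero hN (t₂ y))
    (fun y => H.setLIntegral_lik_ne_top hN (t₂ y)) (ae_norm_le.mono hB₂) T
    (ae_norm_le.mono hle) (ae_norm_le.mono hge)
  rwa [H.jointHockey_eq hM hN τ B₂ ht₂, H.jointHockey_eq hM hn τ B₁ ht₁,
    Measure.restrict_apply_univ, ← mul_assoc] at hockey_le

lemma gap_le_of_bind_close (H : QuadApprox ρ κ K C Λ ℓ M)
    (hM : Measurable fun θ => gaussMass (quad (M θ))) (hn : 0 < n) (hN : 0 < N)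
    (ht₁ : Measurable t₁) (ht₂ : Measurable t₂)
    (hB₁ : ∀ θ, ‖θ‖ ≤ ρ → IsProbabilityMeasure (B₁.withDensity fun y => lik Λ n (t₁ y) θ))
    (hB₂ : ∀ θ, ‖θ‖ ≤ ρ → IsProbabilityMeasure (B₂.withDensity fun y => lik Λ N (t₂ y) θ))
    {R : ℝ} (hR : 0 ≤ R) (hRρ : R ≤ ρ) {g b : ℝ≥0∞} (hg : g ≤ 1)
    (hgap : ∀ θ, ‖θ‖ + R ≤ ρ →
      condHockey ρ Λ M n τ B₁ t₁ θ + g ≤ condHockey ρ Λ M N τ B₂ t₂ θ + b)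
    (T : Kernel Y₁ Y₂) [IsMarkovKernel T] {ε : ℝ≥0∞}
    (hle : ∀ θ, ‖θ‖ ≤ ρ → ∀ S, MeasurableSet S →
      (B₂.withDensity fun y => lik Λ N (t₂ y) θ) S ≤
        ((B₁.withDensity fun y => lik Λ n (t₁ y) θ).bind T) S + ε)
    (hge : ∀ θ, ‖θ‖ ≤ ρ → ∀ S, MeasurableSet S →
      ((B₁.withDensity fun y => lik Λ n (t₁ y) θ).bind T) S ≤
        (B₂.withDensity fun y => lik Λ N (t₂ y) θ) S + ε) :
    g ≤ 2 * ε + b + 2 * ENNReal.ofReal (d * R / ρ) := by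
  set ball := Metric.closedBall (0 : Fin d → ℝ) ρ
  have measurableSet_inner : MeasurableSet (Metric.closedBall (0 : Fin d → ℝ) (ρ - R)) :=
    Metric.isClosed_closedBall.measurableSet
  have volume_ball_ne_zero : volume ball ≠ 0 :=
    (Metric.measure_closedBall_pos _ _ H.ρ_pos).ne'
  have : IsFiniteMeasure (volume.restrict ball) :=
    isFiniteMeasure_restrict.2 measure_closedBall_lt_top.ne
  have : NeZero (volume.restrict ball) := ⟨by rwa [Ne, Measure.restrict_eq_zero]⟩
  have ae_mem : ∀ᵐ θ ∂volume.restrict ball, θ ∈ ball :=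
    ae_restrict_mem Metric.isClosed_closedBall.measurableSet
  refine le_of_add_le_add_of_lintegral_le (π := volume.restrict ball)
    (f₁ := condHockey ρ Λ M n τ B₁ t₁) (f₂ := condHockey ρ Λ M N τ B₂ t₂)
    (S := (Metric.closedBall 0 (ρ - R))ᶜ) (ae_mem.mono fun θ hθ => ?_) hg
    measurableSet_inner.compl ?_ (.of_forall fun θ hθ => hgap θ ?_) ?_
  · have := hB₁ θ (mem_closedBall_zero_iff.1 hθ)
    exact condHockey_le_one H.measurable n τ B₁ t₁ θ
  · rw [Measure.restrict_apply_univ, Measure.restrict_apply measurableSet_inner.compl,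
      Set.inter_comm, ← Set.sdiff_eq]
    simpa only [Module.finrank_fin_fun] using
      addHaar_closedBall_sdiff_le (volume : Measure (Fin d → ℝ)) hR hRρ
  · linarith [mem_closedBall_zero_iff.1 (Set.notMem_compl_iff.1 hθ)]
  · rw [Measure.restrict_apply_univ]
    exact H.setLIntegral_condHockey_le hM hn hN ht₁ ht₂ hB₂ T hle hge

end Amplification

lemma exists_amplification_lower_bound (H : QuadApprox ρ κ K C Λ ℓ M)
    (hM : Measurable fun θ => gaussMass (quad (M θ))) (hd : 0 < d) :
    ∃ A : ℝ, 0 ≤ A ∧ ∀ n N : ℝ, 1 ≤ n → n ≤ N → ∀ (Y₁ Y₂ : Type u) [MeasurableSpace Y₁]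
      [MeasurableSpace Y₂] (B₁ : Measure Y₁) (B₂ : Measure Y₂) [SFinite B₁] [SFinite B₂]
      (t₁ : Y₁ → Fin d → ℝ) (t₂ : Y₂ → Fin d → ℝ), Measurable t₁ → Measurable t₂ →
      (∀ θ, ‖θ‖ ≤ ρ → IsProbabilityMeasure (B₁.withDensity fun y => lik Λ n (t₁ y) θ)) →
      (∀ θ, ‖θ‖ ≤ ρ → IsProbabilityMeasure (B₂.withDensity fun y => lik Λ N (t₂ y) θ)) →
      ∀ (T : Kernel Y₁ Y₂) [IsMarkovKernel T] (ε : ℝ), 0 ≤ ε →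
      (∀ θ, ‖θ‖ ≤ ρ → ∀ S, MeasurableSet S →
        (B₂.withDensity fun y => lik Λ N (t₂ y) θ) S ≤
          ((B₁.withDensity fun y => lik Λ n (t₁ y) θ).bind T) S + ENNReal.ofReal ε) →
      (∀ θ, ‖θ‖ ≤ ρ → ∀ S, MeasurableSet S →
        ((B₁.withDensity fun y => lik Λ n (t₁ y) θ).bind T) S ≤
          (B₂.withDensity fun y => lik Λ N (t₂ y) θ) S + ENNReal.ofReal ε) →
      (1 / 400) ^ 2 * min ((N - n) / n * √d) 1 ≤ 2 * ε + A * n ^ (-(1 : ℝ) / 3) := by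
  have ρ_pos := H.ρ_pos
  obtain ⟨A, A_nonneg, gap⟩ := H.exists_condHockey_add_le hM hd
  refine ⟨A + 2 * (d / ρ), by positivity, fun n N hn hN Y₁ Y₂ _ _ B₁ B₂ _ _ t₁ t₂ ht₁ ht₂
    hB₁ hB₂ T _ ε hε hle hge => ?_⟩
  have n_pos : 0 < n := by linarith
  have R_pos := locRadius_pos n_pos
  have gap_le_one : (1 / 400) ^ 2 * min ((N - n) / n * √d) 1 ≤ 1 := by
    linarith [min_le_right ((N - n) / n * √d) 1]
  suffices bound : (1 / 400) ^ 2 * min ((N - n) / n * √d) 1 ≤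
      2 * ε + A * n ^ (-(1 : ℝ) / 3) + 2 * (d * locRadius n / ρ) by
    refine bound.trans ?_
    rw [add_mul, ← add_assoc, mul_assoc 2, div_mul_eq_mul_div]
    gcongr
    exact locRadius_le hn
  rcases lt_or_ge ρ (locRadius n) with ρ_lt | R_le_ρ
  · have one_le : 1 ≤ d * locRadius n / ρ := by
      rw [one_le_div ρ_pos]
      exact ρ_lt.le.trans (le_mul_of_one_le_left R_pos.le (by exact_mod_cast hd))
    have : 0 ≤ A * n ^ (-(1 : ℝ) / 3) := by positivity
    linarith
  have gap_le := H.gap_le_of_bind_close hM n_pos (n_pos.trans_le hN) ht₁ ht₂ hB₁ hB₂ R_pos.le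
    R_le_ρ (ENNReal.ofReal_le_one.2 gap_le_one)
    (gap n N hn hN Y₁ Y₂ B₁ B₂ t₁ t₂ ht₁ ht₂ hB₁ hB₂) T hle hge
  rw [← ENNReal.ofReal_ofNat, ← ENNReal.ofReal_mul zero_le_two, ← ENNReal.ofReal_mul zero_le_two,
    ← ENNReal.ofReal_add (by positivity) (by positivity),
    ← ENNReal.ofReal_add (by positivity) (by positivity)] at gap_le
  exact (ENNReal.ofReal_le_ofReal_iff (by positivity)).1 gap_le

end QuadApprox

end AmplificationBound

section Measurability

variable {X : Type*} [MeasurableSpace X] {P : Measure X} [SFinite P]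

lemma measurable_integral_tilted {Θ : Type*} [MeasurableSpace Θ] {f g : Θ → X → ℝ}
    (hf : Measurable (Function.uncurry f)) (hg : Measurable (Function.uncurry g)) :
    Measurable fun θ => ∫ x, f θ x ∂(P.tilted (g θ)) := by
  simp_rw [integral_tilted]
  have measurable_mgf : Measurable fun θ => ∫ x, Real.exp (g θ x) ∂P :=
    (hg.exp.stronglyMeasurable.integral_prod_right (ν := P)).measurable
  have measurable_integrand : Measurable fun p : Θ × X =>
      (Real.exp (g p.1 p.2) / ∫ x, Real.exp (g p.1 x) ∂P) • f p.1 p.2 :=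
    (hg.exp.div (measurable_mgf.comp measurable_fst)).smul hf
  exact (measurable_integrand.stronglyMeasurable.integral_prod_right (ν := P)).measurable

variable {d : ℕ} {T : X → Fin d → ℝ}

lemma measurable_tiltCov_apply (hT : Measurable T) (i j : Fin d) :
    Measurable fun η => tiltCov P T η i j := by
  have tilting : Measurable fun p : (Fin d → ℝ) × X => p.1 ⬝ᵥ T p.2 := by
    unfold dotProduct; fun_prop
  have coordinate (i : Fin d) : Measurable fun p : (Fin d → ℝ) × X => T p.2 i := by fun_prop
  have centered (i : Fin d) : Measurable fun p : (Fin d → ℝ) × X =>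
      T p.2 i - ∫ x, T x i ∂(P.tilted fun x => p.1 ⬝ᵥ T x) :=
    (coordinate i).sub
      ((measurable_integral_tilted (f := fun _ x => T x i) (g := fun η x => η ⬝ᵥ T x)
        (coordinate i) tilting).comp measurable_fst)
  exact measurable_integral_tilted
    (f := fun η x => (T x i - ∫ x, T x i ∂(P.tilted fun x => η ⬝ᵥ T x)) *
      (T x j - ∫ x, T x j ∂(P.tilted fun x => η ⬝ᵥ T x)))
    (g := fun η x => η ⬝ᵥ T x) ((centered i).mul (centered j)) tilting

lemma measurable_gaussMass_quad_tiltCov (hT : Measurable T) :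
    Measurable fun η => gaussMass (quad (tiltCov P T η)) := by
  have joint : Measurable fun p : (Fin d → ℝ) × (Fin d → ℝ) =>
      Real.exp (-(quad (tiltCov P T p.1) p.2 / 2)) := by
    have entries (i j : Fin d) : Measurable fun p : (Fin d → ℝ) × (Fin d → ℝ) =>
        tiltCov P T p.1 i j := (measurable_tiltCov_apply hT i j).comp measurable_fst
    unfold quad dotProduct Matrix.mulVec dotProduct
    fun_prop
  exact (joint.stronglyMeasurable.integral_prod_right (ν := volume)).measurable

end Measurability

section ProductDensity

variable {X : Type*} {d n : ℕ}

/-- The empirical mean of the statistic `T` over a sample: the sufficient statistic of the sample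
in the exponential family generated by `T`. -/
noncomputable def sampleMean (T : X → Fin d → ℝ) (x : Fin n → X) : Fin d → ℝ :=
  (n : ℝ)⁻¹ • ∑ j, T (x j)

lemma prod_exp_eq_lik_sampleMean (hn : n ≠ 0) (T : X → Fin d → ℝ) (Λ : (Fin d → ℝ) → ℝ)
    (θ : Fin d → ℝ) (x : Fin n → X) :
    ∏ j, ENNReal.ofReal (Real.exp (θ ⬝ᵥ T (x j) - Λ θ)) = lik Λ n (sampleMean T x) θ := by
  rw [lik, ← ENNReal.ofReal_prod_of_nonneg fun _ _ => Real.exp_nonneg _, ← Real.exp_sum,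
    Finset.sum_sub_distrib, sampleMean, smul_dotProduct, sum_dotProduct]
  simp only [dotProduct_comm θ, Finset.sum_const, Finset.card_univ, Fintype.card_fin, smul_eq_mul,
    nsmul_eq_mul]
  congr 2
  field_simp

variable [MeasurableSpace X]

lemma measurable_sampleMean {T : X → Fin d → ℝ} (hT : Measurable T) :
    Measurable (sampleMean (n := n) T) := by
  unfold sampleMean
  fun_prop

lemma lintegral_pi_prod (P : Fin n → Measure X) [∀ i, SigmaFinite (P i)]
    {f : Fin n → X → ℝ≥0∞} (hf : ∀ i, Measurable (f i)) :
    ∫⁻ x, ∏ i, f i (x i) ∂(Measure.pi P) = ∏ i, ∫⁻ x, f i x ∂(P i) := by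
  induction n with
  | zero => simp
  | succ n ih =>
    have measurable_prod : Measurable fun x : Fin (n + 1) → X => ∏ i, f i (x i) := by fun_prop
    have measurable_tail : Measurable fun x : Fin n → X => ∏ i, f i.succ (x i) := by fun_prop
    calc ∫⁻ x, ∏ i, f i (x i) ∂(Measure.pi P)
        = ∫⁻ x : X × (Fin n → X), f 0 x.1 * ∏ i : Fin n, f i.succ (x.2 i)
            ∂((P 0).prod (Measure.pi fun i => P i.succ)) := by
          rw [← (measurePreserving_piFinSuccAbove P 0).symm.lintegral_comp measurable_prod]
          simp_rw [Fin.prod_univ_succ]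
          rfl
      _ = (∫⁻ x, f 0 x ∂(P 0)) * ∫⁻ x, ∏ i : Fin n, f i.succ (x i)
            ∂(Measure.pi fun i => P i.succ) :=
          lintegral_prod_mul (hf 0).aemeasurable measurable_tail.aemeasurable
      _ = ∏ i, ∫⁻ x, f i x ∂(P i) := by
          rw [ih _ fun i => hf i.succ, Fin.prod_univ_succ]

lemma pi_withDensity (P : Fin n → Measure X) [∀ i, SigmaFinite (P i)]
    {f : Fin n → X → ℝ≥0∞} (hf : ∀ i, Measurable (f i))
    [∀ i, SigmaFinite ((P i).withDensity (f i))] :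
    (Measure.pi fun i => (P i).withDensity (f i)) =
      (Measure.pi P).withDensity fun x => ∏ i, f i (x i) := by
  refine Measure.pi_eq fun s hs => ?_
  have indicator_prod (x : Fin n → X) :
      (Set.univ.pi s).indicator (fun x => ∏ i, f i (x i)) x =
        ∏ i, (s i).indicator (f i) (x i) := by
    by_cases hx : x ∈ Set.univ.pi s
    · rw [Set.indicator_of_mem hx]
      exact Finset.prod_congr rfl fun i _ => (Set.indicator_of_mem (hx i trivial) _).symm
    · obtain ⟨i, hi⟩ : ∃ i, x i ∉ s i := by simpa using hx
      rw [Set.indicator_of_notMem hx,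
        Finset.prod_eq_zero (Finset.mem_univ i) (Set.indicator_of_notMem hi _)]
  rw [withDensity_apply _ (.univ_pi hs), ← lintegral_indicator (.univ_pi hs)]
  simp_rw [indicator_prod]
  rw [lintegral_pi_prod P fun i => (hf i).indicator (hs i)]
  simp_rw [lintegral_indicator (hs _), withDensity_apply _ (hs _)]

lemma pi_withDensity_exp (P : Measure X) [SigmaFinite P] {T : X → Fin d → ℝ} (hT : Measurable T)
    (hn : n ≠ 0) (Λ : (Fin d → ℝ) → ℝ) (θ : Fin d → ℝ)
    [SigmaFinite (P.withDensity fun x => ENNReal.ofReal (Real.exp (θ ⬝ᵥ T x - Λ θ)))] :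
    (Measure.pi fun _ : Fin n =>
        P.withDensity fun x => ENNReal.ofReal (Real.exp (θ ⬝ᵥ T x - Λ θ))) =
      (Measure.pi fun _ : Fin n => P).withDensity fun x => lik Λ n (sampleMean T x) θ := by
  rw [pi_withDensity _ fun _ => ((measurable_dotProduct hT θ).sub_const _).exp.ennreal_ofReal]
  simp_rw [prod_exp_eq_lik_sampleMean hn]

end ProductDensity

section ExponentialFamily

variable {X : Type*} [MeasurableSpace X] {d : ℕ} {μ : Measure X} {T : X → Fin d → ℝ}
  {θ η : Fin d → ℝ}

lemma measurable_ofReal_exp_dotProduct_sub (hT : Measurable T) (θ : Fin d → ℝ) (A : ℝ) :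
    Measurable fun x => ENNReal.ofReal (Real.exp (θ ⬝ᵥ T x - A)) :=
  ((measurable_dotProduct hT θ).sub_const A).exp.ennreal_ofReal

lemma expFamZ_eq_lintegral_dotProduct (μ : Measure X) (T : X → Fin d → ℝ) (θ : Fin d → ℝ) :
    expFamZ μ T θ = ∫⁻ x, ENNReal.ofReal (Real.exp (θ ⬝ᵥ T x)) ∂μ := rfl

lemma expFam_eq_withDensity_dotProduct (μ : Measure X) (T : X → Fin d → ℝ) (θ : Fin d → ℝ) :
    expFam μ T θ =
      μ.withDensity fun x => ENNReal.ofReal (Real.exp (θ ⬝ᵥ T x - expFamA μ T θ)) := rfl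

lemma absolutelyContinuous_expFam (hT : Measurable T) (θ : Fin d → ℝ) : μ ≪ expFam μ T θ :=
  withDensity_absolutelyContinuous' (measurable_ofReal_exp_dotProduct_sub hT θ _).aemeasurable
    (.of_forall fun _ => (ENNReal.ofReal_pos.2 (Real.exp_pos _)).ne')

lemma expFamZ_ne_zero [NeZero μ] (hT : Measurable T) (θ : Fin d → ℝ) :
    expFamZ μ T θ ≠ 0 := by
  rw [expFamZ_eq_lintegral_dotProduct, Ne,
    lintegral_eq_zero_iff (measurable_dotProduct hT θ).exp.ennreal_ofReal]
  intro density_eq_zero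
  obtain ⟨x, hx⟩ := density_eq_zero.exists
  exact (ENNReal.ofReal_pos.2 (Real.exp_pos _)).ne' hx

lemma toReal_expFamZ_pos [NeZero μ] (hT : Measurable T) (hθ : θ ∈ expFamDom μ T) :
    0 < (expFamZ μ T θ).toReal :=
  ENNReal.toReal_pos (expFamZ_ne_zero hT θ) hθ

lemma lintegral_exp_expFam (hT : Measurable T) (θ η : Fin d → ℝ) :
    ∫⁻ x, ENNReal.ofReal (Real.exp (η ⬝ᵥ T x)) ∂(expFam μ T θ) =
      ENNReal.ofReal (Real.exp (-expFamA μ T θ)) * expFamZ μ T (θ + η) := by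
  rw [expFam_eq_withDensity_dotProduct, lintegral_withDensity_eq_lintegral_mul _
    (measurable_ofReal_exp_dotProduct_sub hT θ _) (measurable_dotProduct hT η).exp.ennreal_ofReal,
    expFamZ_eq_lintegral_dotProduct, ← lintegral_const_mul' _ _ ENNReal.ofReal_ne_top]
  refine lintegral_congr fun x => ?_
  rw [Pi.mul_apply, ← ENNReal.ofReal_mul (Real.exp_nonneg _), ← Real.exp_add,
    ← ENNReal.ofReal_mul (Real.exp_nonneg _), ← Real.exp_add, add_dotProduct]
  ring_nf

lemma isProbabilityMeasure_expFam [NeZero μ] (hT : Measurable T) (hθ : θ ∈ expFamDom μ T) :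
    IsProbabilityMeasure (expFam μ T θ) := by
  refine ⟨?_⟩
  have partition_pos := toReal_expFamZ_pos hT hθ
  have total_mass := lintegral_exp_expFam (μ := μ) hT θ 0
  simp only [zero_dotProduct, Real.exp_zero, ENNReal.ofReal_one, lintegral_one, add_zero]
    at total_mass
  rw [total_mass, expFamA, Real.exp_neg, Real.exp_log partition_pos,
    ENNReal.ofReal_inv_of_pos partition_pos, ENNReal.ofReal_toReal hθ,
    ENNReal.inv_mul_cancel (expFamZ_ne_zero hT θ) hθ]

lemma logMgf_expFam [NeZero μ] (hT : Measurable T) (hη : θ + η ∈ expFamDom μ T) :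
    logMgf (expFam μ T θ) T η = expFamA μ T (θ + η) - expFamA μ T θ := by
  rw [logMgf, integral_eq_lintegral_of_nonneg_ae (.of_forall fun _ => Real.exp_nonneg _)
    (measurable_dotProduct hT η).exp.aestronglyMeasurable, lintegral_exp_expFam hT,
    ENNReal.toReal_mul, ENNReal.toReal_ofReal (Real.exp_nonneg _),
    Real.log_mul (Real.exp_pos _).ne' (toReal_expFamZ_pos hT hη).ne', Real.log_exp,
    neg_add_eq_sub]
  rfl

lemma expFam_add [NeZero μ] (hT : Measurable T) (hη : θ + η ∈ expFamDom μ T) :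
    expFam μ T (θ + η) = (expFam μ T θ).withDensity fun x =>
      ENNReal.ofReal (Real.exp (η ⬝ᵥ T x - logMgf (expFam μ T θ) T η)) := by
  rw [logMgf_expFam hT hη, expFam_eq_withDensity_dotProduct, expFam_eq_withDensity_dotProduct,
    ← withDensity_mul _ (measurable_ofReal_exp_dotProduct_sub hT θ _)
      (measurable_ofReal_exp_dotProduct_sub hT η _)]
  congr 1
  funext x
  rw [Pi.mul_apply, ← ENNReal.ofReal_mul (Real.exp_nonneg _), ← Real.exp_add, add_dotProduct]
  ring_nf

lemma pi_expFam_add [NeZero μ] (hT : Measurable T) (hθ : θ ∈ expFamDom μ T)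
    (hη : θ + η ∈ expFamDom μ T) {n : ℕ} (hn : n ≠ 0) :
    (Measure.pi fun _ : Fin n => expFam μ T (θ + η)) =
      (Measure.pi fun _ : Fin n => expFam μ T θ).withDensity fun x =>
        lik (logMgf (expFam μ T θ) T) n (sampleMean T x) η := by
  have := isProbabilityMeasure_expFam hT hθ
  have := isProbabilityMeasure_expFam hT hη
  rw [expFam_add hT hη] at this ⊢
  exact pi_withDensity_exp _ hT hn _ η

lemma integrable_exp_dotProduct_expFam (hT : Measurable T) (hη : θ + η ∈ expFamDom μ T) :
    Integrable (fun x => Real.exp (η ⬝ᵥ T x)) (expFam μ T θ) := by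
  refine ⟨(measurable_dotProduct hT η).exp.aestronglyMeasurable, ?_⟩
  rw [hasFiniteIntegral_iff_ofReal (.of_forall fun _ => Real.exp_nonneg _),
    lintegral_exp_expFam hT]
  exact ENNReal.mul_lt_top ENNReal.ofReal_lt_top (lt_top_iff_ne_top.2 hη)

lemma integrable_exp_mul_norm_of_apply [NeZero d] (hT : Measurable T) {a : ℝ}
    (hint : ∀ i, Integrable (fun x => Real.exp (a * |T x i|)) μ) :
    Integrable (fun x => Real.exp (a * ‖T x‖)) μ := by
  refine (integrable_finsetSum Finset.univ fun i _ => hint i).mono' (by fun_prop)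
    (.of_forall fun x => ?_)
  obtain ⟨i, hi⟩ := Finite.exists_max fun i => ‖T x i‖
  have norm_eq : ‖T x‖ = |T x i| :=
    le_antisymm ((pi_norm_le_iff_of_nonneg (norm_nonneg _)).2 hi) (norm_le_pi_norm (T x) i)
  rw [Real.norm_of_nonneg (Real.exp_nonneg _), norm_eq]
  exact Finset.single_le_sum (f := fun i => Real.exp (a * |T x i|))
    (fun i _ => Real.exp_nonneg _) (Finset.mem_univ i)

lemma integrable_exp_mul_norm_expFam [NeZero d] (hT : Measurable T) {a : ℝ} (ha : 0 ≤ a)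
    (hball : ∀ η : Fin d → ℝ, ‖η‖ ≤ a → θ + η ∈ expFamDom μ T) :
    Integrable (fun x => Real.exp (a * ‖T x‖)) (expFam μ T θ) := by
  refine integrable_exp_mul_norm_of_apply hT fun i => ?_
  have integrable_coordinate {s : ℝ} (hs : |s| ≤ a) :
      Integrable (fun x => Real.exp (s * T x i)) (expFam μ T θ) := by
    have mem_dom := hball (Pi.single i s) (by rwa [Pi.norm_single, Real.norm_eq_abs])
    simpa only [single_dotProduct] using integrable_exp_dotProduct_expFam hT mem_dom
  exact integrable_exp_mul_abs (integrable_coordinate (abs_of_nonneg ha).le)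
    (integrable_coordinate (by rw [abs_neg, abs_of_nonneg ha]))

lemma exists_quadApprox_expFam [NeZero d] [NeZero μ] (hT : Measurable T)
    (hθ : θ ∈ interior (expFamDom μ T))
    (hind : ∀ (a : Fin d → ℝ) (b : ℝ), (∀ᵐ x ∂μ, a ⬝ᵥ T x = b) → a = 0) :
    ∃ ρ κ K C : ℝ, (∀ η : Fin d → ℝ, ‖η‖ ≤ ρ → θ + η ∈ expFamDom μ T) ∧
      QuadApprox ρ κ K C (logMgf (expFam μ T θ) T) (tiltMean (expFam μ T θ) T)
        (tiltCov (expFam μ T θ) T) := by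
  obtain ⟨r, r_pos, closedBall_subset⟩ :=
    Metric.nhds_basis_closedBall.mem_iff.1 (mem_interior_iff_mem_nhds.1 hθ)
  have mem_dom (η : Fin d → ℝ) (hη : ‖η‖ ≤ r) : θ + η ∈ expFamDom μ T :=
    closedBall_subset (by simpa using hη)
  have := isProbabilityMeasure_expFam hT (interior_subset hθ)
  obtain ⟨ρ, κ, K, C, ρ_le, -, H⟩ := exists_quadApprox (P := expFam μ T θ) hT r_pos
    (integrable_exp_mul_norm_expFam hT r_pos.le mem_dom)
    (fun a ha b hab => ha (hind a b ((absolutelyContinuous_expFam hT θ).ae_le hab))) r_pos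
  exact ⟨ρ, κ, K, C, fun η hη => mem_dom η (hη.trans ρ_le), H⟩

lemma volume_setOf_dotProduct_eq {a : Fin d → ℝ} (ha : a ≠ 0) (b : ℝ) :
    volume {t : Fin d → ℝ | a ⬝ᵥ t = b} = 0 := by
  let hyperplane : AffineSubspace ℝ (Fin d → ℝ) :=
    (affineSpan ℝ {b}).comap (dotProductBilin ℝ ℝ a).toAffineMap
  have mem_hyperplane (t : Fin d → ℝ) : t ∈ hyperplane ↔ a ⬝ᵥ t = b := by
    simp [hyperplane, AffineSubspace.mem_comap]
  have hyperplane_ne_top : hyperplane ≠ ⊤ := fun eq_top => ha <| by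
    have dotProduct_eq (t : Fin d → ℝ) : a ⬝ᵥ t = b :=
      (mem_hyperplane t).1 (eq_top ▸ AffineSubspace.mem_top ℝ _ t)
    rw [← dotProduct_self_eq_zero, dotProduct_eq a, ← dotProduct_eq 0, dotProduct_zero]
  rw [← Measure.addHaar_affineSubspace volume hyperplane hyperplane_ne_top]
  congr 1
  ext t
  exact (mem_hyperplane t).symm

lemma ae_dotProduct_ne_of_map_absolutelyContinuous (hT : Measurable T) (hac : μ.map T ≪ volume)
    {a : Fin d → ℝ} (ha : a ≠ 0) (b : ℝ) : ∀ᵐ x ∂μ, a ⬝ᵥ T x ≠ b := by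
  have ae_ne : ∀ᵐ t : Fin d → ℝ, a ⬝ᵥ t ≠ b := by
    simpa [ae_iff] using volume_setOf_dotProduct_eq ha b
  exact ae_of_ae_map hT.aemeasurable (hac.ae_le ae_ne)

lemma not_ae_dotProduct_eq_of_map_absolutelyContinuous [NeZero μ] (hT : Measurable T)
    (hac : (expFam μ T θ).map T ≪ volume) {a : Fin d → ℝ} (ha : a ≠ 0) (b : ℝ) :
    ¬ ∀ᵐ x ∂μ, a ⬝ᵥ T x = b := fun ae_eq => by
  have ae_ne : ∀ᵐ x ∂μ, a ⬝ᵥ T x ≠ b := (absolutelyContinuous_expFam hT θ).ae_le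
    (ae_dotProduct_ne_of_map_absolutelyContinuous hT hac ha b)
  obtain ⟨x, hne, heq⟩ := (ae_ne.and ae_eq).exists
  exact hne heq

end ExponentialFamily

section AmplificationError

lemma ampErr_nonneg {X Θ : Type*} [MeasurableSpace X] (P : Θ → Measure X) (n m : ℕ) :
    0 ≤ ampErr P n m :=
  Real.iInf_nonneg fun _ => Real.iSup_nonneg fun _ => tvDist_nonneg _ _

lemma le_ampErr {X Θ : Type*} [MeasurableSpace X] [Nonempty X] {P : Θ → Measure X}
    [∀ θ, IsProbabilityMeasure (P θ)] {n m : ℕ} {a : ℝ}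
    (h : ∀ (S : Kernel (Fin n → X) (Fin (n + m) → X)) [IsMarkovKernel S] (ε : ℝ),
      (∀ θ, tvDist (Measure.pi fun _ => P θ) ((Measure.pi fun _ => P θ).bind S) ≤ ε) → a ≤ ε) :
    a ≤ ampErr P n m := by
  have : Nonempty {S : Kernel (Fin n → X) (Fin (n + m) → X) // IsMarkovKernel S} :=
    ⟨⟨Kernel.const _ (Measure.dirac (Classical.arbitrary _)), inferInstance⟩⟩
  refine le_ciInf fun S => ?_
  have := S.2
  exact h S.1 _ (le_ciSup ⟨1, Set.forall_mem_range.2 fun θ => tvDist_le_one _ _⟩)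

universe u

variable {X : Type u} [MeasurableSpace X] {d : ℕ} [NeZero d] {μ : Measure X} [NeZero μ]
  {T : X → Fin d → ℝ}

lemma exists_expFam_tvDist_lower_bound (hT : Measurable T)
    (hdom : (interior (expFamDom μ T)).Nonempty)
    (hind : ∀ (a : Fin d → ℝ) (b : ℝ), (∀ᵐ x ∂μ, a ⬝ᵥ T x = b) → a = 0) :
    ∃ A : ℝ, 0 ≤ A ∧ ∀ n m : ℕ, 1 ≤ n →
      ∀ (S : Kernel (Fin n → X) (Fin (n + m) → X)) [IsMarkovKernel S] (ε : ℝ),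
      (∀ θ ∈ expFamDom μ T, tvDist (Measure.pi fun _ => expFam μ T θ)
        ((Measure.pi fun _ => expFam μ T θ).bind S) ≤ ε) →
      (1 / 400) ^ 2 * min ((m : ℝ) * √d / n) 1 ≤ 2 * ε + A * (n : ℝ) ^ (-(1 : ℝ) / 3) := by
  obtain ⟨θ₀, hθ₀⟩ := hdom
  have θ₀_mem := interior_subset hθ₀
  obtain ⟨ρ, κ, K, C, mem_dom, H⟩ := exists_quadApprox_expFam hT hθ₀ hind
  have := isProbabilityMeasure_expFam hT θ₀_mem
  obtain ⟨A, A_nonneg, lower_bound⟩ :=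
    H.exists_amplification_lower_bound (measurable_gaussMass_quad_tiltCov hT) (NeZero.pos d)
  refine ⟨A, A_nonneg, fun n m hn S _ ε tvDist_le => ?_⟩
  have n_ne_zero : n ≠ 0 := by omega
  have n_add_m_ne_zero : n + m ≠ 0 := by omega
  have isProb (η : Fin d → ℝ) (hη : ‖η‖ ≤ ρ) : IsProbabilityMeasure (expFam μ T (θ₀ + η)) :=
    isProbabilityMeasure_expFam hT (mem_dom η hη)
  have pi_eq {k : ℕ} (hk : k ≠ 0) (η : Fin d → ℝ) (hη : ‖η‖ ≤ ρ) :=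
    pi_expFam_add hT θ₀_mem (mem_dom η hη) hk
  have rate_eq : ((n + m : ℕ) - n : ℝ) / n * √d = m * √d / n := by push_cast; ring
  rw [← rate_eq]
  refine lower_bound n (n + m : ℕ) (by exact_mod_cast hn) (by simp) _ _
    (Measure.pi fun _ => expFam μ T θ₀) (Measure.pi fun _ => expFam μ T θ₀) (sampleMean T)
    (sampleMean T) (measurable_sampleMean hT) (measurable_sampleMean hT) (fun η hη => ?_)
    (fun η hη => ?_) S ε ((tvDist_nonneg _ _).trans (tvDist_le θ₀ θ₀_mem))
    (fun η hη E hE => ?_) (fun η hη E hE => ?_) <;> have := isProb η hη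
  · rw [← pi_eq n_ne_zero η hη]
    infer_instance
  · rw [← pi_eq n_add_m_ne_zero η hη]
    infer_instance
  · rw [← pi_eq n_ne_zero η hη, ← pi_eq n_add_m_ne_zero η hη]
    exact measure_le_add_of_tvDist_le (tvDist_le _ (mem_dom η hη)) hE
  · rw [← pi_eq n_ne_zero η hη, ← pi_eq n_add_m_ne_zero η hη]
    exact measure_le_add_of_tvDist_le
      ((tvDist_comm _ _).trans_le (tvDist_le _ (mem_dom η hη))) hE

lemma exists_ampErr_expFam_lower_bound (hT : Measurable T)
    (hdom : (interior (expFamDom μ T)).Nonempty)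
    (hind : ∀ (a : Fin d → ℝ) (b : ℝ), (∀ᵐ x ∂μ, a ⬝ᵥ T x = b) → a = 0) :
    ∃ A : ℝ, 0 ≤ A ∧ ∀ n m : ℕ, 1 ≤ n →
      (1 / 400) ^ 2 * min ((m : ℝ) * √d / n) 1 ≤
        2 * ampErr (fun θ : {θ : Fin d → ℝ // θ ∈ expFamDom μ T} => expFam μ T θ.1) n m +
          A * (n : ℝ) ^ (-(1 : ℝ) / 3) := by
  obtain ⟨A, A_nonneg, lower_bound⟩ := exists_expFam_tvDist_lower_bound hT hdom hind
  refine ⟨A, A_nonneg, fun n m hn => ?_⟩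
  have : Nonempty X := μ.nonempty_of_neZero
  have (θ : {θ : Fin d → ℝ // θ ∈ expFamDom μ T}) : IsProbabilityMeasure (expFam μ T θ.1) :=
    isProbabilityMeasure_expFam hT θ.2
  rw [← sub_le_iff_le_add, ← div_le_iff₀' two_pos]
  refine le_ampErr fun S _ ε tvDist_le => ?_
  rw [div_le_iff₀' two_pos, sub_le_iff_le_add]
  exact lower_bound n m hn S ε fun θ hθ => tvDist_le ⟨θ, hθ⟩

lemma rpow_neg_third_le {n : ℝ} (hn : 2 ≤ n) :
    n ^ (-(1 : ℝ) / 3) ≤ 2 * (Real.log n / n) ^ ((1 : ℝ) / 3) := by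
  have n_pos : 0 < n := by linarith
  have half_le_log : 1 / 2 ≤ Real.log n := by
    linarith [Real.log_two_gt_d9, Real.log_le_log two_pos hn]
  have cube_root_eight : (8 : ℝ) ^ ((1 : ℝ) / 3) = 2 := by
    rw [show (8 : ℝ) = 2 ^ (3 : ℝ) by norm_num, ← Real.rpow_mul two_pos.le]
    norm_num
  rw [neg_div, Real.rpow_neg n_pos.le, ← Real.inv_rpow n_pos.le, ← cube_root_eight,
    ← Real.mul_rpow (by norm_num) (by positivity)]
  gcongr
  rw [inv_eq_one_div, ← mul_div_assoc]
  gcongr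
  linarith

end AmplificationError

theorem expFam_amplification_lower_bound_general :
    ∃ c : ℝ, 0 < c ∧
      ∀ (X : Type*) [MeasurableSpace X] (d : ℕ) (μ : Measure X) (T : X → Fin d → ℝ),
        Measurable T →
        (interior (expFamDom μ T)).Nonempty →
        (∀ (a : Fin d → ℝ) (b : ℝ), (∀ᵐ x ∂μ, ∑ i, a i * T x i = b) → a = 0) →
        ∃ C : ℝ, 0 < C ∧
          ∀ n m : ℕ, 1 ≤ n →
            c * min ((m : ℝ) * Real.sqrt d / n) 1 - C * (n : ℝ) ^ (-(1 : ℝ) / 3) ≤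
              ampErr
                (fun θ : {θ : Fin d → ℝ // θ ∈ expFamDom μ T} => expFam μ T θ.1)
                n m := by
  refine ⟨(1 / 400) ^ 2 / 2, by norm_num, fun X _ d μ T hT hdom hind => ?_⟩
  rcases eq_zero_or_neZero d with rfl | _
  · refine ⟨1, one_pos, fun n m _ => le_trans ?_ (ampErr_nonneg _ n m)⟩
    have : 0 ≤ (n : ℝ) ^ (-(1 : ℝ) / 3) := by positivity
    simpa using this
  have : NeZero μ := ⟨fun μ_eq => one_ne_zero (hind 1 0 (by simp [μ_eq]))⟩
  obtain ⟨A, A_nonneg, lower_bound⟩ := exists_ampErr_expFam_lower_bound hT hdom hind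
  refine ⟨A + 1, by positivity, fun n m hn => ?_⟩
  have : 0 ≤ (n : ℝ) ^ (-(1 : ℝ) / 3) := by positivity
  have : 0 ≤ A * (n : ℝ) ^ (-(1 : ℝ) / 3) := by positivity
  linarith [lower_bound n m hn]

/-- Asymptotic lower bound for exponential families.
There is an absolute constant `c > 0` (independent of `n`, `m`, `d` and the family)
such that for every `d`-dimensional exponential family satisfying the continuity
assumption (nonempty interior of the domain, law of `T` absolutely continuous w.r.t.
Lebesgue measure) and linear independence of the components of `T`, there is a
constant `C > 0` depending only on the family with
`ε*(𝒫, n, m) ≥ c·min(m√d/n, 1) − C·(log n / n)^{1/3}` for all `n ≥ 2`, `m ≥ 0`. -/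
theorem expFam_amplification_lower_bound :
    ∃ c : ℝ, 0 < c ∧
      ∀ (X : Type*) [MeasurableSpace X] (d : ℕ) (μ : Measure X) (T : X → Fin d → ℝ),
        Measurable T →
        (interior (expFamDom μ T)).Nonempty →
        (∀ θ ∈ expFamDom μ T, Measure.map T (expFam μ T θ) ≪ MeasureTheory.volume) →
        (∀ a : Fin d → ℝ, (∀ᵐ x ∂μ, ∑ i, a i * T x i = 0) → a = 0) →
        ∃ C : ℝ, 0 < C ∧
          ∀ n m : ℕ, 2 ≤ n →
            c * min ((m : ℝ) * Real.sqrt d / n) 1 -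
                C * (Real.log n / n) ^ ((1 : ℝ) / 3) ≤
              ampErr
                (fun θ : {θ : Fin d → ℝ // θ ∈ expFamDom μ T} => expFam μ T θ.1)
                n m := by
  obtain ⟨c, c_pos, general⟩ := expFam_amplification_lower_bound_general
  refine ⟨c, c_pos, fun X _ d μ T hT hdom hac hind => ?_⟩
  have affine_independent (a : Fin d → ℝ) (b : ℝ) (hab : ∀ᵐ x ∂μ, a ⬝ᵥ T x = b) : a = 0 := by
    by_contra ha
    have : NeZero μ := ⟨fun μ_eq => ha (hind a (by simp [μ_eq]))⟩
    obtain ⟨θ, hθ⟩ := hdom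
    exact not_ae_dotProduct_eq_of_map_absolutelyContinuous hT
      (hac θ (interior_subset hθ)) ha b hab
  obtain ⟨C, C_pos, lower_bound⟩ := general X d μ T hT hdom affine_independent
  refine ⟨C * 2, by positivity, fun n m hn => le_trans ?_ (lower_bound n m (by omega))⟩
  rw [mul_assoc C]
  gcongr
  exact rpow_neg_third_le (by exact_mod_cast hn)
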